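/- arXiv:2111.05165 — 6 statements merged into one kernel-verified Lean document; each statement's English description precedes it below -/
import Mathlib

section
/- Let G and Ω be domains in ℂ such that G is not simply connected (G has at least one hole) and Ω is not infinitely connected (Ω has only finitely many holes, possibly none), and let Φ = (φₙ) be an eventually injective sequence of holomorphic maps from G to Ω. Then there is no (Φ,G,Ω)-universal function. -/
open Set Metric Bornology Filter

/-- A *hole* of `E` is a nonempty bounded connected component of `ℂ \ E`. -/
def IsHole (E C : Set ℂ) : Prop :=
  (∃ z ∈ Eᶜ, C = connectedComponentIn Eᶜ z) ∧ Bornology.IsBounded C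

/-- A compact set `K` contained in an open set `Ω` is `Ω`-*convex* if every hole of `K`
contains a point of `ℂ \ Ω`. -/
def OmegaConvex (Ω K : Set ℂ) : Prop :=
  ∀ C : Set ℂ, IsHole K C → (C ∩ Ωᶜ).Nonempty

/-- The *polynomial hull* of `K`: the union of `K` and all of its holes. -/
def polyHull (K : Set ℂ) : Set ℂ :=
  K ∪ {z | z ∈ Kᶜ ∧ Bornology.IsBounded (connectedComponentIn Kᶜ z)}

/-- A sequence of maps is *eventually injective* on `G`: for every compact `K ⊆ G`, the maps
are eventually injective on a neighbourhood of `K` in `G`. -/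
def EventuallyInjective (G : Set ℂ) (φ : ℕ → ℂ → ℂ) : Prop :=
  ∀ K : Set ℂ, K ⊆ G → IsCompact K →
    ∃ N : ℕ, ∀ n ≥ N, ∃ U : Set ℂ, IsOpen U ∧ K ⊆ U ∧ U ⊆ G ∧ Set.InjOn (φ n) U

/-- `f` is `(Φ, G, Ω)`-*universal*: the family `{f ∘ φ n : n ∈ ℕ}` is dense in `H(G)` for the
topology of locally uniform convergence, i.e. every `g` holomorphic on `G` can be approximated
uniformly on every compact subset of `G` by functions `f ∘ φ n`. -/
def UniversalFor (G : Set ℂ) (φ : ℕ → ℂ → ℂ) (f : ℂ → ℂ) : Prop :=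
  ∀ g : ℂ → ℂ, DifferentiableOn ℂ g G →
    ∀ K : Set ℂ, K ⊆ G → IsCompact K → ∀ ε : ℝ, 0 < ε →
      ∃ n : ℕ, ∀ z ∈ K, ‖f (φ n z) - g z‖ < ε

/-- `E` has no hole (for a domain: simple connectivity). -/
def HasNoHole (E : Set ℂ) : Prop := ¬ ∃ C : Set ℂ, IsHole E C

/-- A *Jordan curve*: the image of the unit circle under an injective continuous map. -/
def IsJordanCurve (C : Set ℂ) : Prop :=
  ∃ γ : ℂ → ℂ, ContinuousOn γ (Metric.sphere 0 1) ∧ Set.InjOn γ (Metric.sphere 0 1) ∧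
    C = γ '' Metric.sphere 0 1

/-- A *Jordan arc*: the image of `[0,1]` under an injective continuous map. -/
def IsJordanArc (C : Set ℂ) : Prop :=
  ∃ γ : ℝ → ℂ, ContinuousOn γ (Set.Icc 0 1) ∧ Set.InjOn γ (Set.Icc 0 1) ∧
    C = γ '' Set.Icc 0 1

/-- A compact set is *regular* if its boundary is a union of Jordan curves. -/
def RegularCompact (K : Set ℂ) : Prop :=
  ∃ 𝒞 : Set (Set ℂ), (∀ C ∈ 𝒞, IsJordanCurve C) ∧ frontier K = ⋃₀ 𝒞

/-- `K` is `Ω`-*connected*: it has no hole if `Ω` is simply connected, and has at least one hole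
if `Ω` is not simply connected. -/
def OmegaConnectedSet (Ω K : Set ℂ) : Prop :=
  (HasNoHole Ω → HasNoHole K) ∧ (¬ HasNoHole Ω → ∃ C : Set ℂ, IsHole K C)

/-- Membership in the family `M(Ω)` of nonempty compact subsets of `Ω` that are regular,
connected, `Ω`-connected and `Ω`-convex. -/
def MemM (Ω K : Set ℂ) : Prop :=
  K.Nonempty ∧ IsCompact K ∧ K ⊆ Ω ∧ RegularCompact K ∧ IsConnected K ∧
    OmegaConnectedSet Ω K ∧ OmegaConvex Ω K

/-- `f` is `(Φ, M)`-*universal*: for every `K ∈ M`, the restrictions of the `f ∘ φ n` to `K`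
are dense in `C(K)`. -/
def MUniversal (M : Set (Set ℂ)) (φ : ℕ → ℂ → ℂ) (f : ℂ → ℂ) : Prop :=
  ∀ K ∈ M, ∀ h : ℂ → ℂ, ContinuousOn h K → ∀ ε : ℝ, 0 < ε →
    ∃ n : ℕ, ∀ z ∈ K, ‖f (φ n z) - h z‖ < ε

lemma aux_const_of_int {S : Set ℂ} (hS : IsPreconnected S) {u : ℂ → ℝ} (hu : ContinuousOn u S)
    (hint : ∀ w ∈ S, ∃ k : ℤ, u w = k) {a b : ℂ} (ha : a ∈ S) (hb : b ∈ S) : u a = u b := by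
  have key : ∀ a ∈ S, ∀ b ∈ S, ¬ u a < u b := by
    intro a ha b hb hab
    have hI := hS.intermediate_value ha hb hu
    obtain ⟨k, hk⟩ := hint a ha
    obtain ⟨l, hl⟩ := hint b hb
    have hkl : k + 1 ≤ l := by
      rw [hk, hl] at hab
      exact_mod_cast hab
    have hkl' : (k : ℝ) + 1 ≤ l := by exact_mod_cast hkl
    obtain ⟨c, hc, hc'⟩ := hI (show (k : ℝ) + 1 / 2 ∈ Icc (u a) (u b) by
      constructor <;> linarith)
    obtain ⟨m, hm⟩ := hint c hc
    rw [hm] at hc'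
    have h2 : (2 * m : ℝ) = 2 * k + 1 := by linarith
    have h3 : (2 * m : ℤ) = 2 * k + 1 := by exact_mod_cast h2
    omega
  exact le_antisymm (not_lt.1 (key b hb a ha)) (not_lt.1 (key a ha b hb))

lemma aux_compl_ball (R : ℝ) (hR : 0 ≤ R) : IsPreconnected {w : ℂ | R < ‖w‖} := by
  have h1 : IsPreconnected ((Ioi R) ×ˢ (univ : Set ℝ)) := isPreconnected_Ioi.prod isPreconnected_univ
  have h2 := h1.image (fun p : ℝ × ℝ => (p.1 : ℂ) * Complex.exp (p.2 * Complex.I))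
    (by fun_prop)
  convert h2 using 1
  ext w
  simp only [mem_ofPred_eq, mem_image, Prod.exists, mem_prod, mem_Ioi, mem_univ, and_true]
  constructor
  · intro h
    exact ⟨‖w‖, w.arg, h, Complex.norm_mul_exp_arg_mul_I w⟩
  · rintro ⟨r, t, hr, rfl⟩
    rw [norm_mul, Complex.norm_exp_ofReal_mul_I, mul_one, Complex.norm_real, Real.norm_eq_abs,
      abs_of_pos (hR.trans_lt hr)]
    exact hr

/-- the ring function. -/
def GoodRing (X : Set ℂ) (ψ : ℂ → ℝ) : Prop :=
  Continuous ψ ∧ (∀ w, 0 ≤ ψ w ∧ ψ w ≤ 1) ∧ (∃ R : ℝ, ∀ w, R < ‖w‖ → ψ w = 0) ∧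
    ∀ w, w ∉ X → ψ w = 0 ∨ ψ w = 1

lemma aux_lift (E : ℂ → AddCircle (1 : ℝ)) (hE : Continuous E) :
    ∃ ψ : ℂ → ℝ, Continuous ψ ∧ ∀ w, ((ψ w : ℝ) : AddCircle (1 : ℝ)) = E w := by
  obtain ⟨e, he⟩ := QuotientAddGroup.mk_surjective (E 0)
  obtain ⟨F, ⟨-, hF⟩, -⟩ := (AddCircle.isCoveringMap_coe (1 : ℝ)).existsUnique_continuousMap_lifts
    (⟨E, hE⟩ : C(ℂ, AddCircle (1 : ℝ))) 0 e he
  exact ⟨F, F.continuous, fun w => congrFun hF w⟩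

lemma aux_coe_eq {a b : ℝ} (h : (a : AddCircle (1 : ℝ)) = b) : ∃ k : ℤ, a - b = k := by
  rw [← sub_eq_zero, ← AddCircle.coe_sub, AddCircle.coe_eq_zero_iff] at h
  obtain ⟨n, hn⟩ := h
  exact ⟨n, by simpa using hn.symm⟩

lemma aux_topo {U K₀ K : Set ℂ} {φ : ℂ → ℂ} {χ : ℂ → ℝ}
    (hφ : ContinuousOn φ U) (hinj : InjOn φ U)
    (hopen : ∀ V ⊆ U, IsOpen V → IsOpen (φ '' V)) (hU : IsOpen U)
    (hKU : K ⊆ U) (hK : IsPreconnected K) (hK₀ : IsCompact K₀) (hK₀K : K₀ ⊆ K)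
    (hne : K₀.Nonempty)
    (hχ : Continuous χ) (hχ01 : ∀ z, 0 ≤ χ z ∧ χ z ≤ 1) (hχK : ∀ z, z ∉ K₀ → χ z = 0 ∨ χ z = 1) :
    ∃ ψ : ℂ → ℝ, GoodRing (φ '' K₀) ψ ∧
      ((∀ z ∈ K, ψ (φ z) = χ z) ∨ (∀ z ∈ K, ψ (φ z) = 1 - χ z)) := by
  classical
  set X := φ '' K₀ with hX
  have hXc : IsCompact X := hK₀.image_of_continuousOn (hφ.mono (hK₀K.trans hKU))
  let E : ℂ → AddCircle (1 : ℝ) := fun w =>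
    if h : ∃ z ∈ U, φ z = w then ((χ h.choose : ℝ) : AddCircle (1 : ℝ)) else 0
  have hEφ : ∀ z ∈ U, E (φ z) = ((χ z : ℝ) : AddCircle (1 : ℝ)) := by
    intro z hz
    have h : ∃ z' ∈ U, φ z' = φ z := ⟨z, hz, rfl⟩
    have : h.choose = z := hinj h.choose_spec.1 hz h.choose_spec.2
    simp only [E]
    rw [dif_pos h, this]
  have hEX : ∀ w, w ∉ X → E w = 0 := by
    intro w hw
    by_cases h : ∃ z ∈ U, φ z = w
    · obtain ⟨z, hz, rfl⟩ := h
      rw [hEφ z hz]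
      have : z ∉ K₀ := fun h => hw ⟨z, h, rfl⟩
      rcases hχK z this with h | h <;> rw [h]
      · simp
      · exact AddCircle.coe_period 1
    · simp only [E]; rw [dif_neg h]
  have hEc : Continuous E := by
    rw [continuous_iff_continuousAt]
    intro w
    by_cases hw : w ∈ X
    · obtain ⟨z, hz, rfl⟩ := hw
      have hzU : z ∈ U := hKU (hK₀K hz)
      intro O hO
      rw [hEφ z hzU] at hO
      have hc : Continuous fun z => ((χ z : ℝ) : AddCircle (1 : ℝ)) :=
        (AddCircle.continuous_mk' 1).comp hχ
      have h1 := hc.continuousAt (x := z) hO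
      obtain ⟨V, hVO, hV, hzV⟩ := _root_.mem_nhds_iff.1 (Filter.mem_map.1 h1)
      rw [Filter.mem_map]
      refine mem_of_superset ((hopen (V ∩ U) inter_subset_right (hV.inter hU)).mem_nhds
        ⟨z, ⟨hzV, hzU⟩, rfl⟩) ?_
      rintro _ ⟨y, ⟨hyV, hyU⟩, rfl⟩
      rw [mem_preimage, hEφ y hyU]
      exact hVO hyV
    · have : E =ᶠ[nhds w] fun _ => 0 := by
        filter_upwards [hXc.isClosed.isOpen_compl.mem_nhds hw] with y hy using hEX y hy
      exact continuousAt_const.congr this.symm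
  obtain ⟨ψ₀, hψ₀, hψE⟩ := aux_lift E hEc
  obtain ⟨R₀, hR₀⟩ := hXc.isBounded.subset_closedBall 0
  set R := max R₀ 0
  have hR : ∀ w : ℂ, R < ‖w‖ → w ∉ X := by
    intro w hw hwX
    have := hR₀ hwX
    rw [mem_closedBall_zero_iff] at this
    have : R₀ ≤ R := le_max_left _ _
    linarith
  have hint₀ : ∀ w, w ∉ X → ∃ k : ℤ, ψ₀ w = k := by
    intro w hw
    have := hψE w
    rw [hEX w hw] at this
    have h2 : ((ψ₀ w : ℝ) : AddCircle (1 : ℝ)) = ((0 : ℝ) : AddCircle (1 : ℝ)) := by simpa using this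
    obtain ⟨k, hk⟩ := aux_coe_eq h2
    exact ⟨k, by simpa using hk⟩
  have hR0 : 0 ≤ R := le_max_right _ _
  set p : ℂ := ((R + 1 : ℝ) : ℂ)
  have hp : R < ‖p‖ := by
    simp only [p]
    rw [Complex.norm_real, Real.norm_eq_abs, abs_of_pos (by linarith)]; linarith
  obtain ⟨m, hm⟩ := hint₀ p (hR p hp)
  let ψ : ℂ → ℝ := fun w => ψ₀ w - m
  have hψ : Continuous ψ := hψ₀.sub continuous_const
  have hinf : ∀ w, R < ‖w‖ → ψ w = 0 := by
    intro w hw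
    have := aux_const_of_int (aux_compl_ball R hR0) hψ₀.continuousOn
      (fun w hw => hint₀ w (hR w hw)) (a := w) (b := p) hw hp
    simp only [ψ]; rw [this, hm]; simp
  have hint : ∀ w, w ∉ X → ∃ k : ℤ, ψ w = k := by
    intro w hw
    obtain ⟨k, hk⟩ := hint₀ w hw
    exact ⟨k - m, by simp [ψ, hk]⟩
  obtain ⟨z₀, hz₀⟩ := hne
  have hφint : ∀ z ∈ K, ∃ k : ℤ, ψ (φ z) - χ z = k := by
    intro z hz
    have := hψE (φ z)
    rw [hEφ z (hKU hz)] at this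
    obtain ⟨k, hk⟩ := aux_coe_eq this
    refine ⟨k - m, ?_⟩
    simp only [ψ]; push_cast; linarith
  obtain ⟨c, hc⟩ := hφint z₀ (hK₀K hz₀)
  have hcK : ∀ z ∈ K, ψ (φ z) = χ z + c := by
    intro z hz
    have := aux_const_of_int hK (u := fun z => ψ (φ z) - χ z)
      ((hψ.comp_continuousOn (hφ.mono hKU)).sub hχ.continuousOn) hφint hz (hK₀K hz₀)
    linarith
  have hrange : ∀ w, ∃ x ∈ X, ψ x = ψ w := by
    intro w
    by_contra hcon
    push Not at hcon
    have hcl : IsClopen {v | ψ v = ψ w} := by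
      refine ⟨isClosed_eq hψ continuous_const, ?_⟩
      rw [isOpen_iff_mem_nhds]
      intro v hv
      have hvX : v ∉ X := fun h => hcon v h hv
      obtain ⟨ε, hε, hball⟩ := Metric.mem_nhds_iff.1 (hXc.isClosed.isOpen_compl.mem_nhds hvX)
      refine mem_of_superset (Metric.ball_mem_nhds v hε) ?_
      intro y hy
      have := aux_const_of_int (convex_ball v ε).isPreconnected hψ.continuousOn
        (fun w hw => hint w (hball hw)) hy (mem_ball_self hε)
      exact this.trans hv
    have := hcl.eq_univ ⟨w, rfl⟩
    have h3 : φ z₀ ∈ {v | ψ v = ψ w} := by rw [this]; trivial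
    exact hcon _ ⟨z₀, hz₀, rfl⟩ h3
  have hrange' : ∀ w, (c : ℝ) ≤ ψ w ∧ ψ w ≤ c + 1 := by
    intro w
    obtain ⟨x, ⟨z, hz, rfl⟩, hx⟩ := hrange w
    rw [← hx, hcK z (hK₀K hz)]
    have := hχ01 z
    constructor <;> linarith
  have hc01 : c = 0 ∨ c = -1 := by
    have := hrange' p
    rw [hinf p hp] at this
    have h1 : c ≤ 0 := by exact_mod_cast this.1
    have h2 : 0 ≤ c + 1 := by exact_mod_cast this.2
    omega
  rcases hc01 with rfl | rfl
  · refine ⟨ψ, ⟨hψ, ?_, ⟨R, hinf⟩, ?_⟩, Or.inl ?_⟩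
    · simpa using hrange'
    · intro w hw
      obtain ⟨k, hk⟩ := hint w hw
      have := hrange' w
      rw [hk] at this ⊢
      have h1 : 0 ≤ k := by exact_mod_cast this.1
      have h2 : k ≤ 0 + 1 := by exact_mod_cast this.2
      have : k = 0 ∨ k = 1 := by omega
      exact_mod_cast this
    · simpa using hcK
  · refine ⟨fun w => - ψ w, ⟨hψ.neg, ?_, ⟨R, fun w hw => by simp [hinf w hw]⟩, ?_⟩, Or.inr ?_⟩
    · intro w
      have := hrange' w
      push_cast at this
      constructor <;> linarith
    · intro w hw
      obtain ⟨k, hk⟩ := hint w hw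
      have := hrange' w
      simp only [hk] at this ⊢
      have h1 : -1 ≤ k := by exact_mod_cast this.1
      have h2 : k ≤ -1 + 1 := by exact_mod_cast this.2
      have : -k = 0 ∨ -k = 1 := by omega
      exact_mod_cast this
    · intro z hz
      simp only
      rw [hcK z hz]; push_cast; ring

lemma aux_openmap {U : Set ℂ} {φ : ℂ → ℂ} (hφ : DifferentiableOn ℂ φ U)
    (hinj : InjOn φ U) : ∀ V ⊆ U, IsOpen V → IsOpen (φ '' V) := by
  intro V hVU hV
  rw [isOpen_iff_mem_nhds]
  rintro _ ⟨z, hz, rfl⟩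
  obtain ⟨ε, hε, hb⟩ := Metric.isOpen_iff.1 hV z hz
  have han : AnalyticOnNhd ℂ φ (ball z ε) :=
    (hφ.mono (hb.trans hVU)).analyticOnNhd isOpen_ball
  rcases han.is_constant_or_isOpen (convex_ball z ε).isPreconnected with ⟨w, hw⟩ | h
  · exfalso
    have h1 : z + ((ε / 2 : ℝ) : ℂ) ∈ ball z ε := by
      rw [mem_ball, dist_eq_norm, add_sub_cancel_left, Complex.norm_real, Real.norm_eq_abs,
        abs_of_pos (by linarith)]
      linarith
    have h2 := hinj (hVU (hb h1)) (hVU hz) ((hw _ h1).trans (hw _ (mem_ball_self hε)).symm)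
    have h3 : ((ε / 2 : ℝ) : ℂ) = 0 := by simpa using h2
    have h4 : ε / 2 = 0 := by exact_mod_cast h3
    linarith
  · exact mem_of_superset ((h _ subset_rfl isOpen_ball).mem_nhds ⟨z, mem_ball_self hε, rfl⟩)
      (image_mono hb)

lemma aux_max {f : ℂ → ℂ} {Ω D : Set ℂ} (hf : DifferentiableOn ℂ f Ω)
    (hD : IsBounded D) (hDΩ : closure D ⊆ Ω) (c : ℂ) (B : ℝ)
    (hB : ∀ w ∈ frontier D, (c * f w).re ≤ B) : ∀ w ∈ D, (c * f w).re ≤ B := by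
  intro w hw
  have hd : DifferentiableOn ℂ (fun w => Complex.exp (c * f w)) (closure D) :=
    ((hf.mono hDΩ).const_mul c).cexp
  have := Complex.norm_le_of_forall_mem_frontier_norm_le hD hd.diffContOnCl (C := Real.exp B)
    (fun z hz => by rw [Complex.norm_exp]; exact Real.exp_le_exp.2 (hB z hz)) (subset_closure hw)
  rw [Complex.norm_exp] at this
  exact Real.exp_le_exp.1 this

lemma aux_conn {G : Set ℂ} (hG : IsOpen G) (hGc : IsConnected G) {K : Set ℂ} (hK : IsCompact K)
    (hKG : K ⊆ G) : ∃ K', IsCompact K' ∧ IsConnected K' ∧ K ⊆ K' ∧ K' ⊆ G := by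
  have hpc : IsPathConnected G := (hG.isConnected_iff_isPathConnected).1 hGc
  refine hK.induction_on (p := fun K => ∃ K', IsCompact K' ∧ IsConnected K' ∧ K ⊆ K' ∧ K' ⊆ G)
    ?_ ?_ ?_ ?_
  · obtain ⟨z, hz⟩ := hGc.nonempty
    exact ⟨{z}, isCompact_singleton, isConnected_singleton, empty_subset _, by simpa using hz⟩
  · rintro s t hst ⟨K', h1, h2, h3, h4⟩
    exact ⟨K', h1, h2, hst.trans h3, h4⟩
  · rintro s t ⟨K', h1, h2, h3, h4⟩ ⟨L', k1, k2, k3, k4⟩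
    obtain ⟨x, hx⟩ := h2.nonempty
    obtain ⟨y, hy⟩ := k2.nonempty
    obtain ⟨γ, hγ⟩ := hpc.joinedIn x (h4 hx) y (k4 hy)
    have hr : IsConnected (range γ) := isConnected_range γ.continuous
    have hrc : IsCompact (range γ) := isCompact_range γ.continuous
    refine ⟨(K' ∪ range γ) ∪ L', (h1.union hrc).union k1, ?_, ?_, ?_⟩
    · refine IsConnected.union ⟨y, Or.inr ⟨1, γ.target⟩, hy⟩ ?_ k2
      exact IsConnected.union ⟨x, hx, ⟨0, γ.source⟩⟩ h2 hr
    · exact union_subset (h3.trans (subset_union_left.trans subset_union_left))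
        (k3.trans subset_union_right)
    · refine union_subset (union_subset h4 ?_) k4
      rintro _ ⟨t, rfl⟩
      exact hγ t
  · intro x hx
    obtain ⟨ε, hε, hb⟩ := Metric.nhds_basis_closedBall.mem_iff.1 (hG.mem_nhds (hKG hx))
    exact ⟨closedBall x ε, mem_nhdsWithin_of_mem_nhds (closedBall_mem_nhds x hε), closedBall x ε,
      isCompact_closedBall x ε, ⟨⟨x, mem_closedBall_self hε.le⟩,
      (convex_closedBall x ε).isPreconnected⟩, subset_rfl, hb⟩

lemma aux_hole {F : Set ℂ} (hF : IsClosed F) {z : ℂ} (hz : z ∈ F)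
    (hb : IsBounded (connectedComponentIn F z)) :
    ∃ A : Set ℂ, IsCompact A ∧ A.Nonempty ∧ A ⊆ F ∧
      ∃ δ > 0, ∀ w ∈ F, infDist w A ≤ 2 * δ → w ∈ A := by
  obtain ⟨R, hR⟩ := hb.subset_ball 0
  set Y := F ∩ closedBall 0 R with hY
  have hYc : IsCompact Y := (isCompact_closedBall 0 R).inter_left hF
  have hzC : z ∈ connectedComponentIn F z := mem_connectedComponentIn hz
  have hzY : z ∈ Y := ⟨hz, ball_subset_closedBall (hR hzC)⟩
  have : CompactSpace Y := isCompact_iff_compactSpace.1 hYc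
  let z' : Y := ⟨z, hzY⟩
  have hcomp : ∀ y ∈ connectedComponent z', (y : ℂ) ∈ ball (0 : ℂ) R := by
    intro y hy
    apply hR
    apply connectedComponentIn_mono z (inter_subset_left : Y ⊆ F)
    rw [connectedComponentIn_eq_image hzY]
    exact ⟨y, hy, rfl⟩
  rw [connectedComponent_eq_iInter_isClopen] at hcomp
  have hopen : IsOpen {y : Y | (y : ℂ) ∈ ball (0 : ℂ) R} := isOpen_ball.preimage continuous_subtype_val
  have : Nonempty { s : Set Y // IsClopen s ∧ z' ∈ s } := ⟨⟨univ, isClopen_univ, trivial⟩⟩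
  obtain ⟨⟨Q, hQ, hzQ⟩, hQR⟩ := exists_subset_nhds_of_isCompact'
    (V := fun s : { s : Set Y // IsClopen s ∧ z' ∈ s } => (s : Set Y))
    (by
      intro s t
      exact ⟨⟨s.1 ∩ t.1, s.2.1.inter t.2.1, s.2.2, t.2.2⟩, inter_subset_left, inter_subset_right⟩)
    (fun s => s.2.1.isClosed.isCompact) (fun s => s.2.1.isClosed)
    (U := {y : Y | (y : ℂ) ∈ ball (0 : ℂ) R}) (fun y hy => hopen.mem_nhds (hcomp y hy))
  set A : Set ℂ := Subtype.val '' Q with hA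
  have hAc : IsCompact A := hQ.isClosed.isCompact.image continuous_subtype_val
  have hAne : A.Nonempty := ⟨z, z', hzQ, rfl⟩
  have hB : IsClosed ((Subtype.val '' Qᶜ : Set ℂ) ∪ (F ∩ (ball 0 R)ᶜ)) :=
    (hQ.compl.isClosed.isCompact.image continuous_subtype_val).isClosed.union
      (hF.inter isOpen_ball.isClosed_compl)
  have hdis : Disjoint A ((Subtype.val '' Qᶜ : Set ℂ) ∪ (F ∩ (ball 0 R)ᶜ)) := by
    rw [Set.disjoint_left]
    rintro _ ⟨y, hy, rfl⟩ (⟨x, hx, hxy⟩ | ⟨-, h⟩)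
    · exact hx (Subtype.ext hxy ▸ hy)
    · exact h (hQR hy)
  obtain ⟨δ, hδ, hd⟩ := hdis.exists_cthickenings hAc hB
  refine ⟨A, hAc, hAne, ?_, δ / 2, by linarith, ?_⟩
  · rintro _ ⟨y, -, rfl⟩
    exact y.2.1
  · intro w hw hwd
    by_contra hwA
    have h1 : w ∈ cthickening δ A := by
      obtain ⟨y, hy, hyd⟩ := hAc.exists_infDist_eq_dist hAne w
      exact mem_cthickening_of_dist_le w y δ A hy (by linarith)
    refine Set.disjoint_left.1 hd h1 (self_subset_cthickening _ ?_)
    by_cases hwR : w ∈ ball (0 : ℂ) R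
    · left
      refine ⟨⟨w, hw, ball_subset_closedBall hwR⟩, fun h => hwA ⟨_, h, rfl⟩, rfl⟩
    · exact Or.inr ⟨hw, hwR⟩

lemma aux_locconst {X : Set ℂ} {ψ : ℂ → ℝ} (h : GoodRing X ψ) (hX : IsClosed X) {w : ℂ}
    (hw : w ∉ X) : ∀ᶠ y in nhds w, ψ y = ψ w := by
  obtain ⟨hc, -, -, h01⟩ := h
  obtain ⟨ε, hε, hball⟩ := Metric.mem_nhds_iff.1 (hX.isOpen_compl.mem_nhds hw)
  filter_upwards [Metric.ball_mem_nhds w hε] with y hy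
  refine aux_const_of_int (convex_ball w ε).isPreconnected hc.continuousOn ?_ hy (mem_ball_self hε)
  intro v hv
  rcases h01 v (hball hv) with h | h
  · exact ⟨0, by simp [h]⟩
  · exact ⟨1, by simp [h]⟩

lemma aux_const {X S : Set ℂ} {ψ : ℂ → ℝ} (h : GoodRing X ψ) (hS : IsPreconnected S)
    (hSX : ∀ w ∈ S, w ∉ X) {a b : ℂ} (ha : a ∈ S) (hb : b ∈ S) : ψ a = ψ b := by
  obtain ⟨hc, -, -, h01⟩ := h
  refine aux_const_of_int hS hc.continuousOn ?_ ha hb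
  intro v hv
  rcases h01 v (hSX v hv) with h | h
  · exact ⟨0, by simp [h]⟩
  · exact ⟨1, by simp [h]⟩

lemma aux_between {f : ℂ → ℂ} {Ω X₁ X₂ : Set ℂ} {ψ₁ ψ₂ : ℂ → ℝ} (hf : DifferentiableOn ℂ f Ω)
    (h₁ : GoodRing X₁ ψ₁) (h₂ : GoodRing X₂ ψ₂)
    (hX₁ : IsClosed X₁) (hX₂ : IsClosed X₂) (hX₁Ω : X₁ ⊆ Ω) (hX₂Ω : X₂ ⊆ Ω)
    (hout : ∀ w, w ∉ Ω → ψ₁ w = 1 → ψ₂ w = 1) (c : ℂ) (B : ℝ)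
    (hB₁ : ∀ w ∈ X₁, ψ₁ w = 0 → (c * f w).re ≤ B) (hB₂ : ∀ w ∈ X₂, (c * f w).re ≤ B) :
    ∀ w, 0 < ψ₁ w → ψ₂ w < 1 → (c * f w).re ≤ B := by
  set D : Set ℂ := {w | 0 < ψ₁ w ∧ ψ₂ w < 1} with hD
  have hDo : IsOpen D := (isOpen_lt continuous_const h₁.1).inter (isOpen_lt h₂.1 continuous_const)
  have hDb : IsBounded D := by
    obtain ⟨R, hR⟩ := h₁.2.2.1
    refine (isBounded_closedBall (x := (0 : ℂ)) (r := R)).subset ?_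
    intro w hw
    rw [mem_closedBall_zero_iff]
    by_contra hcon
    have := hR w (not_le.1 hcon)
    have h2 := hw.1
    linarith
  have hfr : ∀ w ∈ frontier D, (w ∈ X₁ ∧ ψ₁ w = 0) ∨ w ∈ X₂ := by
    intro w hw
    have hwD : w ∉ D := by
      rw [hDo.frontier_eq] at hw
      exact hw.2
    by_contra hcon
    push Not at hcon
    have hcl := hw.1
    rw [mem_closure_iff_frequently] at hcl
    have l₂ := aux_locconst h₂ hX₂ hcon.2
    by_cases hw1 : ψ₁ w = 0
    · have hx : w ∉ X₁ := fun h => hcon.1 h hw1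
      obtain ⟨y, hy, hy1⟩ := (hcl.and_eventually (aux_locconst h₁ hX₁ hx)).exists
      have := hy.1
      linarith
    · have hpos : 0 < ψ₁ w := lt_of_le_of_ne (h₁.2.1 w).1 (Ne.symm hw1)
      obtain ⟨y, hy, hy1⟩ := (hcl.and_eventually l₂).exists
      exact hwD ⟨hpos, hy1 ▸ hy.2⟩
  have hcl : closure D ⊆ Ω := by
    intro w hw
    rw [closure_eq_self_union_frontier] at hw
    rcases hw with hw | hw
    · by_contra hwΩ
      have hx : w ∉ X₁ := fun h => hwΩ (hX₁Ω h)
      have h1 := hw.1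
      have h2 := hw.2
      rcases h₁.2.2.2 w hx with h | h
      · linarith
      · have := hout w hwΩ h
        linarith
    · rcases hfr w hw with h | h
      · exact hX₁Ω h.1
      · exact hX₂Ω h
  intro w hw1 hw2
  refine aux_max hf hDb hcl c B ?_ w ⟨hw1, hw2⟩
  intro v hv
  rcases hfr v hv with h | h
  · exact hB₁ v h.1 h.2
  · exact hB₂ v h

lemma aux_clopen {X₁ X₂ : Set ℂ} {u₁ u₂ : ℂ → ℝ} (c₁ : Continuous u₁) (c₂ : Continuous u₂)
    (n₁ : ∀ w, 0 ≤ u₁ w) (n₂ : ∀ w, 0 ≤ u₂ w)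
    (l₁ : ∀ w, w ∉ X₁ → ∀ᶠ y in nhds w, u₁ y = u₁ w)
    (l₂ : ∀ w, w ∉ X₂ → ∀ᶠ y in nhds w, u₂ y = u₂ w) (hdis : ∀ w ∈ X₁, w ∉ X₂)
    (z₁ : ∀ w ∈ X₂, u₁ w = 0) (z₂ : ∀ w ∈ X₁, u₂ w = 0) :
    IsClopen {w | 0 < u₁ w ∧ 0 < u₂ w} := by
  refine ⟨?_, (isOpen_lt continuous_const c₁).inter (isOpen_lt continuous_const c₂)⟩
  rw [← isOpen_compl_iff, isOpen_iff_mem_nhds]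
  intro w hw
  have hw' : u₁ w = 0 ∨ u₂ w = 0 := by
    by_contra hcon
    push Not at hcon
    exact hw ⟨lt_of_le_of_ne (n₁ w) (Ne.symm hcon.1), lt_of_le_of_ne (n₂ w) (Ne.symm hcon.2)⟩
  have key : (w ∉ X₁ ∧ u₁ w = 0) ∨ (w ∉ X₂ ∧ u₂ w = 0) := by
    by_cases h1 : w ∈ X₁
    · exact Or.inr ⟨hdis w h1, z₂ w h1⟩
    · by_cases h2 : w ∈ X₂
      · exact Or.inl ⟨h1, z₁ w h2⟩
      · rcases hw' with h | h
        · exact Or.inl ⟨h1, h⟩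
        · exact Or.inr ⟨h2, h⟩
  rcases key with ⟨h, h0⟩ | ⟨h, h0⟩
  · filter_upwards [l₁ w h] with y hy hyD
    have := hyD.1
    linarith
  · filter_upwards [l₂ w h] with y hy hyD
    have := hyD.2
    linarith

lemma aux_order {X₁ X₂ : Set ℂ} {ψ₁ ψ₂ : ℂ → ℝ}
    (h₁ : GoodRing X₁ ψ₁) (h₂ : GoodRing X₂ ψ₂)
    (hX₁ : IsClosed X₁) (hX₂ : IsClosed X₂) (hdis : ∀ w ∈ X₁, w ∉ X₂)
    (a₁ : (∀ w ∈ X₂, ψ₁ w = 0) ∨ (∀ w ∈ X₂, ψ₁ w = 1))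
    (a₂ : (∀ w ∈ X₁, ψ₂ w = 0) ∨ (∀ w ∈ X₁, ψ₂ w = 1)) {p : ℂ} (hp₁ : ψ₁ p = 1) (hp₂ : ψ₂ p = 1) :
    ((∀ w ∈ X₂, ψ₁ w = 1) ∧ (∀ w ∈ X₁, ψ₂ w = 0)) ∨
    ((∀ w ∈ X₁, ψ₂ w = 1) ∧ (∀ w ∈ X₂, ψ₁ w = 0)) := by
  obtain ⟨R, hR⟩ := h₁.2.2.1
  obtain ⟨R', hR'⟩ := h₂.2.2.1
  obtain ⟨q, hq⟩ : ∃ q : ℂ, max R R' < ‖q‖ := by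
    obtain ⟨q, hq⟩ := NormedSpace.exists_lt_norm ℂ ℂ (max R R')
    exact ⟨q, hq⟩
  have hq1 := hR q ((le_max_left _ _).trans_lt hq)
  have hq2 := hR' q ((le_max_right _ _).trans_lt hq)
  rcases a₁ with a₁ | a₁ <;> rcases a₂ with a₂ | a₂
  · exfalso
    have hc := aux_clopen h₁.1 h₂.1 (fun w => (h₁.2.1 w).1) (fun w => (h₂.2.1 w).1)
      (fun w hw => aux_locconst h₁ hX₁ hw) (fun w hw => aux_locconst h₂ hX₂ hw) hdis a₁ a₂
    have := hc.eq_univ ⟨p, by simp [hp₁, hp₂]⟩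
    have h3 : q ∈ {w | 0 < ψ₁ w ∧ 0 < ψ₂ w} := by rw [this]; trivial
    have := h3.1
    linarith
  · exact Or.inr ⟨a₂, a₁⟩
  · exact Or.inl ⟨a₁, a₂⟩
  · exfalso
    have hc := aux_clopen (u₁ := fun w => 1 - ψ₁ w) (u₂ := fun w => 1 - ψ₂ w)
      (X₁ := X₁) (X₂ := X₂)
      (continuous_const.sub h₁.1) (continuous_const.sub h₂.1)
      (fun w => by linarith [(h₁.2.1 w).2]) (fun w => by linarith [(h₂.2.1 w).2])
      (fun w hw => by filter_upwards [aux_locconst h₁ hX₁ hw] with y hy; rw [hy])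
      (fun w hw => by filter_upwards [aux_locconst h₂ hX₂ hw] with y hy; rw [hy]) hdis
      (fun w hw => by rw [a₁ w hw, sub_self]) (fun w hw => by rw [a₂ w hw, sub_self])
    have := hc.eq_univ ⟨q, by simp [hq1, hq2]⟩
    have h3 : p ∈ {w | 0 < 1 - ψ₁ w ∧ 0 < 1 - ψ₂ w} := by rw [this]; trivial
    have := h3.1
    linarith

lemma aux_J1 {s : ℂ} (hs : ‖s‖ ≤ 1) : (s + s ^ 2).im ≤ 1.9 ∧ -1.9 ≤ (s + s ^ 2).im := by
  have h : s.re ^ 2 + s.im ^ 2 ≤ 1 := by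
    have := Complex.sq_norm s
    rw [Complex.normSq_apply] at this
    nlinarith [norm_nonneg s]
  have e : (s + s ^ 2).im = s.im + 2 * s.re * s.im := by
    rw [pow_two, Complex.add_im, Complex.mul_im]; ring
  rw [e]
  constructor <;> nlinarith [sq_nonneg (s.re - 0.6), sq_nonneg (s.im - 0.8), sq_nonneg (s.im + 0.8),
    sq_nonneg (s.re - 0.7 * s.im), sq_nonneg (s.re + 0.7 * s.im), sq_nonneg (s.im - 0.85), sq_nonneg (s.im + 0.85)]

lemma aux_J2 {s : ℂ} (hs : ‖s‖ ≤ 0.01) : |(s + s ^ 2).re| ≤ 0.02 ∧ |(s + s ^ 2).im| ≤ 0.02 := by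
  have h : ‖s + s ^ 2‖ ≤ 0.02 := by
    calc ‖s + s ^ 2‖ ≤ ‖s‖ + ‖s‖ ^ 2 := (norm_add_le s (s ^ 2)).trans_eq (by rw [norm_pow])
      _ ≤ 0.02 := by nlinarith [norm_nonneg s]
  exact ⟨(Complex.abs_re_le_norm _).trans h, (Complex.abs_im_le_norm _).trans h⟩

lemma aux_g {G A : Set ℂ} (hA : IsCompact A) (hAne : A.Nonempty) (hAG : ∀ z ∈ A, z ∉ G)
    {δ : ℝ} (hδ : 0 < δ) :
    ∃ g : ℂ → ℂ, DifferentiableOn ℂ g G ∧ ∃ z₁ z₀ : ℂ, infDist z₁ A = δ ∧ infDist z₀ A = 2 * δ ∧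
      (∀ z, infDist z A = 2 * δ → (g z).re ≤ 1.92) ∧ 1.98 ≤ (g z₁).re ∧
      (∀ z, infDist z A = δ → (g z).im ≤ 1.92) ∧ 1.98 ≤ (g z₀).im := by
  obtain ⟨a, haA, ha⟩ := hA.exists_isMaxOn hAne Complex.continuous_re.continuousOn
  have hdist : ∀ r : ℝ, 0 < r → infDist (a + r) A = r := by
    intro r hr
    apply le_antisymm
    · refine (infDist_le_dist_of_mem haA).trans ?_
      rw [dist_eq_norm, add_sub_cancel_left, Complex.norm_real, Real.norm_eq_abs, abs_of_pos hr]
    · rw [le_infDist hAne]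
      intro x hx
      have h1 : x.re ≤ a.re := ha hx
      rw [dist_eq_norm]
      refine le_trans ?_ (Complex.re_le_norm _)
      simp
      linarith
  have hre : ∀ r z, infDist z A = r → (z - a).re ≤ r := by
    intro r z hz
    obtain ⟨x, hx, hxd⟩ := hA.exists_infDist_eq_dist hAne z
    have h1 : x.re ≤ a.re := ha hx
    have h2 := Complex.re_le_norm (z - x)
    rw [← dist_eq_norm, ← hxd, hz] at h2
    rw [Complex.sub_re] at *
    linarith
  have hab : ∀ r z, infDist z A = r → r ≤ ‖z - a‖ := by
    intro r z hz
    rw [← hz, ← dist_eq_norm]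
    exact infDist_le_dist_of_mem haA
  let s₁ : ℂ → ℂ := fun z => ((δ : ℂ) / (z - a)) ^ 7
  let s₂ : ℂ → ℂ := fun z => Complex.exp (((100 / δ : ℝ) : ℂ) * (z - a - ((2 * δ : ℝ) : ℂ)))
  have n₁ : ∀ z, ‖s₁ z‖ = (δ / ‖z - a‖) ^ 7 := by
    intro z
    simp only [s₁]
    rw [norm_pow, norm_div, Complex.norm_real, Real.norm_eq_abs, abs_of_pos hδ]
  have n₂ : ∀ z, ‖s₂ z‖ = Real.exp (100 / δ * ((z - a).re - 2 * δ)) := by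
    intro z
    simp only [s₂]
    rw [Complex.norm_exp, Complex.re_ofReal_mul, Complex.sub_re _ ((2 * δ : ℝ) : ℂ), Complex.ofReal_re]
  have s₁1 : ∀ z, infDist z A = δ → ‖s₁ z‖ ≤ 1 := by
    intro z hz
    rw [n₁]
    have := hab _ z hz
    exact pow_le_one₀ (by positivity) ((div_le_one (by linarith)).2 this)
  have s₁0 : ∀ z, infDist z A = 2 * δ → ‖s₁ z‖ ≤ 0.01 := by
    intro z hz
    rw [n₁]
    have := hab _ z hz
    have h2 : δ / ‖z - a‖ ≤ 1 / 2 := by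
      rw [div_le_div_iff₀ (by linarith) (by norm_num)]; linarith
    calc (δ / ‖z - a‖) ^ 7 ≤ (1 / 2) ^ 7 := by gcongr
      _ ≤ 0.01 := by norm_num
  have s₂0 : ∀ z, infDist z A = 2 * δ → ‖s₂ z‖ ≤ 1 := by
    intro z hz
    rw [n₂, Real.exp_le_one_iff]
    have := hre _ z hz
    exact mul_nonpos_of_nonneg_of_nonpos (by positivity) (by linarith)
  have s₂1 : ∀ z, infDist z A = δ → ‖s₂ z‖ ≤ 0.01 := by
    intro z hz
    rw [n₂]
    have := hre _ z hz
    have h1 : 100 / δ * ((z - a).re - 2 * δ) ≤ -100 := by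
      calc 100 / δ * ((z - a).re - 2 * δ) ≤ 100 / δ * (-δ) := by gcongr; linarith
        _ = -100 := by field_simp
    refine (Real.exp_le_exp.2 h1).trans ?_
    rw [Real.exp_neg]
    have h2 := Real.add_one_le_exp (100 : ℝ)
    rw [inv_le_comm₀ (Real.exp_pos _) (by norm_num)]
    norm_num at *
    linarith
  let g : ℂ → ℂ := fun z => (s₁ z + s₁ z ^ 2) + Complex.I * (s₂ z + s₂ z ^ 2)
  have gre : ∀ z, (g z).re = (s₁ z + s₁ z ^ 2).re - (s₂ z + s₂ z ^ 2).im := by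
    intro z; simp only [g]; rw [Complex.add_re, Complex.I_mul_re]; ring
  have gim : ∀ z, (g z).im = (s₁ z + s₁ z ^ 2).im + (s₂ z + s₂ z ^ 2).re := by
    intro z; simp only [g]; rw [Complex.add_im, Complex.I_mul_im]
  have hδc : (δ : ℂ) ≠ 0 := by exact_mod_cast hδ.ne'
  refine ⟨g, ?_, a + (δ : ℝ), a + ((2 * δ : ℝ) : ℂ), hdist δ hδ, hdist (2 * δ) (by linarith), ?_, ?_, ?_, ?_⟩
  · have d₁ : DifferentiableOn ℂ s₁ G := by
      have hne : ∀ z ∈ G, z - a ≠ 0 := by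
        intro z hz h
        rw [sub_eq_zero] at h
        exact hAG a haA (h ▸ hz)
      exact ((differentiableOn_const _).div (differentiableOn_id.sub_const a) hne).pow 7
    have d₂ : Differentiable ℂ s₂ := by
      simp only [s₂]; fun_prop
    have d₂ := d₂.differentiableOn (s := G)
    exact (d₁.add (d₁.pow 2)).add ((d₂.add (d₂.pow 2)).const_mul _)
  · intro z hz
    rw [gre]
    have h1 := abs_le.1 (aux_J2 (s₁0 z hz)).1
    have h2 := aux_J1 (s₂0 z hz)
    linarith [h1.2, h2.2]
  · rw [gre]
    have e : s₁ (a + (δ : ℝ)) = 1 := by simp [s₁, hδc]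
    have h2 := abs_le.1 (aux_J2 (s₂1 _ (hdist δ hδ))).2
    rw [e]
    norm_num at *
    linarith [h2.2]
  · intro z hz
    rw [gim]
    have h1 := abs_le.1 (aux_J2 (s₂1 z hz)).1
    have h2 := aux_J1 (s₁1 z hz)
    linarith [h1.2, h2.1]
  · rw [gim]
    have e : s₂ (a + ((2 * δ : ℝ) : ℂ)) = 1 := by simp [s₂]
    have h2 := abs_le.1 (aux_J2 (s₁0 _ (hdist (2 * δ) (by linarith)))).2
    rw [e]
    norm_num at *
    linarith [h2.1]

/-- Theorem `thm-charac-injective` (3): if `G` is not simply connected and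
`Ω` has only finitely many holes, there is no `(Φ,G,Ω)`-universal function. -/
theorem no_universal_of_not_simplyConnected_of_finitely_connected
    (G Ω : Set ℂ) (hG : IsOpen G) (hGconn : IsConnected G)
    (hΩ : IsOpen Ω) (hΩconn : IsConnected Ω)
    (hGnsc : ¬ HasNoHole G) (hΩfin : {C : Set ℂ | IsHole Ω C}.Finite)
    (φ : ℕ → ℂ → ℂ) (hφd : ∀ n, DifferentiableOn ℂ (φ n) G)
    (hφm : ∀ n, Set.MapsTo (φ n) G Ω)
    (hinj : EventuallyInjective G φ) :
    ¬ ∃ f : ℂ → ℂ, DifferentiableOn ℂ f Ω ∧ UniversalFor G φ f := by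
  rintro ⟨f, hf, huniv⟩
  classical
  -- the hole of `G`
  unfold HasNoHole at hGnsc
  rw [not_not] at hGnsc
  obtain ⟨C, ⟨z, hz, rfl⟩, hCb⟩ := hGnsc
  obtain ⟨A, hAc, hAne, hAG, δ, hδ, hAδ⟩ := aux_hole hG.isClosed_compl hz hCb
  obtain ⟨g, hg, z₁, z₀, hz₁, hz₀, hgre, hgre₁, hgim, hgim₀⟩ :=
    aux_g (G := G) hAc hAne (fun z hz => hAG hz) hδ
  set d : ℂ → ℝ := fun z => infDist z A with hd
  have hdc : Continuous d := continuous_infDist_pt A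
  set K₀ : Set ℂ := {z | δ ≤ d z ∧ d z ≤ 2 * δ} with hK₀
  have hK₀c : IsCompact K₀ := by
    refine Metric.isCompact_of_isClosed_isBounded
      ((isClosed_le continuous_const hdc).inter (isClosed_le hdc continuous_const)) ?_
    refine (hAc.isBounded.cthickening (δ := 2 * δ)).subset ?_
    intro w hw
    obtain ⟨y, hy, hyd⟩ := hAc.exists_infDist_eq_dist hAne w
    exact mem_cthickening_of_dist_le w y _ A hy (by rw [← hyd]; exact hw.2)
  have hK₀G : K₀ ⊆ G := by
    intro w hw
    by_contra hwG
    have h1 := hAδ w hwG hw.2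
    have h2 : d w = 0 := infDist_zero_of_mem h1
    have h3 := hw.1
    linarith
  have hz₁K₀ : z₁ ∈ K₀ := ⟨hz₁.ge, by rw [hd]; simp only; linarith⟩
  have hz₀K₀ : z₀ ∈ K₀ := ⟨by rw [hd]; simp only; linarith, hz₀.le⟩
  obtain ⟨K, hKc, hKconn, hK₀K, hKG⟩ := aux_conn hG hGconn hK₀c hK₀G
  set χ : ℂ → ℝ := fun z => max 0 (min 1 (2 - d z / δ)) with hχ
  have hχc : Continuous χ :=
    continuous_const.max (continuous_const.min (continuous_const.sub (hdc.div_const δ)))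
  have hχ01 : ∀ z, 0 ≤ χ z ∧ χ z ≤ 1 := fun z =>
    ⟨le_max_left _ _, max_le zero_le_one (min_le_left _ _)⟩
  have hχ1 : ∀ z, d z ≤ δ → χ z = 1 := by
    intro z hz
    have h1 : d z / δ ≤ 1 := (div_le_one hδ).2 hz
    simp only [hχ]
    rw [min_eq_left (by linarith), max_eq_right zero_le_one]
  have hχ0 : ∀ z, 2 * δ ≤ d z → χ z = 0 := by
    intro z hz
    have h1 : 2 ≤ d z / δ := (le_div_iff₀ hδ).2 hz
    simp only [hχ]
    exact max_eq_left ((min_le_right _ _).trans (by linarith))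
  have hχ1' : ∀ z ∈ K₀, χ z = 1 → d z = δ := by
    intro z hz h
    refine le_antisymm ?_ hz.1
    by_contra hcon
    have h1 : 1 < d z / δ := (one_lt_div hδ).2 (not_le.1 hcon)
    have : χ z < 1 := max_lt zero_lt_one ((min_le_right _ _).trans_lt (by linarith))
    linarith
  have hχ0' : ∀ z ∈ K₀, χ z = 0 → d z = 2 * δ := by
    intro z hz h
    refine le_antisymm hz.2 ?_
    by_contra hcon
    have h1 : d z / δ < 2 := (div_lt_iff₀ hδ).2 (not_le.1 hcon)
    have : 0 < χ z := lt_max_of_lt_right (lt_min zero_lt_one (by linarith))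
    linarith
  have hχK : ∀ z, z ∉ K₀ → χ z = 0 ∨ χ z = 1 := by
    intro z hz
    by_cases h : d z ≤ δ
    · exact Or.inr (hχ1 z h)
    · refine Or.inl (hχ0 z ?_)
      by_contra h2
      exact hz ⟨(not_le.1 h).le, (not_le.1 h2).le⟩
  obtain ⟨N₀, hN₀⟩ := hinj K hKG hKc
  obtain ⟨S, hS⟩ := (hKc.image_of_continuousOn (hg.continuousOn.mono hKG)).isBounded.exists_norm_le
  have hS' : ∀ z ∈ K, ‖g z‖ ≤ S := fun z hz => hS _ ⟨z, hz, rfl⟩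
  have hS0 : 0 ≤ S := (norm_nonneg _).trans (hS' z₁ (hK₀K hz₁K₀))
  have : Finite {C : Set ℂ | IsHole Ω C} := hΩfin
  have : Fintype {C : Set ℂ | IsHole Ω C} := Fintype.ofFinite _
  let β := Fin N₀ ⊕ Set {C : Set ℂ | IsHole Ω C}
  set N : ℕ := Fintype.card β * 2 + 1 with hN
  set T : ℝ := (2 * N + 1) * (S + 1) with hT
  have hT1 : S + 1 ≤ T := by
    have : (0 : ℝ) ≤ N := Nat.cast_nonneg _
    nlinarith
  set M : ℝ := 2 * T + 1 with hM
  let cc : Fin N → ℂ := fun x => ((M * (x : ℕ) : ℝ) : ℂ) + ((M * (x : ℕ) ^ 2 : ℝ) : ℂ) * Complex.I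
  have hccre : ∀ x, (cc x).re = M * (x : ℕ) := by
    intro x
    simp only [cc]
    rw [Complex.add_re, Complex.ofReal_re, Complex.re_ofReal_mul, Complex.I_re]; ring
  have hccim : ∀ x, (cc x).im = M * (x : ℕ) ^ 2 := by
    intro x
    simp only [cc]
    rw [Complex.add_im, Complex.ofReal_im, Complex.im_ofReal_mul, Complex.I_im]; ring
  have hex : ∀ x : Fin N, ∃ n, ∀ z ∈ K, ‖f (φ n z) - (cc x + g z)‖ < 0.01 := fun x =>
    huniv (fun z => cc x + g z) (hg.const_add (cc x)) K hKG hKc 0.01 (by norm_num)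
  choose n hn using hex
  have hne : ∀ x y : Fin N, x ≠ y → ∀ z ∈ K, ∀ z' ∈ K, φ (n x) z ≠ φ (n y) z' := by
    intro x y hxy z hz z' hz' heq
    have h1 := hn x z hz
    have h2 := hn y z' hz'
    rw [← heq] at h2
    have h3 : ‖cc x - cc y‖ ≤ 0.02 + 2 * S := by
      have e : cc x - cc y = (f (φ (n x) z) - (cc y + g z')) - (f (φ (n x) z) - (cc x + g z))
          + (g z' - g z) := by ring
      rw [e]
      have i1 := norm_add_le ((f (φ (n x) z) - (cc y + g z')) - (f (φ (n x) z) - (cc x + g z)))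
        (g z' - g z)
      have i2 := norm_sub_le (f (φ (n x) z) - (cc y + g z')) (f (φ (n x) z) - (cc x + g z))
      have i3 := norm_sub_le (g z') (g z)
      have i4 := hS' z hz
      have i5 := hS' z' hz'
      linarith
    have h4 := (Complex.abs_re_le_norm _).trans h3
    have e : (cc x - cc y).re = M * ((x : ℕ) - (y : ℕ) : ℝ) := by
      rw [Complex.sub_re, hccre, hccre]; ring
    rw [e, abs_mul, abs_of_pos (by linarith : 0 < M)] at h4
    have h5 : (1 : ℝ) ≤ |((x : ℕ) : ℝ) - ((y : ℕ) : ℝ)| := by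
      have : ((x : ℕ) : ℤ) - (y : ℕ) ≠ 0 := by
        intro h
        apply hxy
        ext
        omega
      exact_mod_cast Int.one_le_abs this
    have h6 : M * 1 ≤ M * |((x : ℕ) : ℝ) - ((y : ℕ) : ℝ)| := by gcongr
    linarith
  -- the ring functions
  have hring : ∀ x : Fin N, N₀ ≤ n x → ∃ ψ : ℂ → ℝ, GoodRing (φ (n x) '' K₀) ψ ∧
      ((∀ z ∈ K, ψ (φ (n x) z) = χ z) ∨ (∀ z ∈ K, ψ (φ (n x) z) = 1 - χ z)) := by
    intro x hx
    obtain ⟨U, hU, hKU, hUG, hUinj⟩ := hN₀ (n x) hx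
    have hdU := (hφd (n x)).mono hUG
    exact aux_topo hdU.continuousOn hUinj (aux_openmap hdU hUinj) hU hKU hKconn.isPreconnected
      hK₀c hK₀K ⟨z₁, hz₁K₀⟩ hχc hχ01 hχK
  choose! ψ hψ hψχ using hring
  set X : Fin N → Set ℂ := fun x => φ (n x) '' K₀ with hX
  have hXcl : ∀ x, IsClosed (X x) := fun x =>
    (hK₀c.image_of_continuousOn ((hφd (n x)).continuousOn.mono hK₀G)).isClosed
  have hXΩ : ∀ x, X x ⊆ Ω := by
    rintro x _ ⟨z, hz, rfl⟩
    exact hφm (n x) (hK₀G hz)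
  have hXdis : ∀ x y, x ≠ y → ∀ w ∈ X x, w ∉ X y := by
    rintro x y hxy _ ⟨z, hz, rfl⟩ ⟨z', hz', h⟩
    exact hne x y hxy z (hK₀K hz) z' (hK₀K hz') h.symm
  -- each ring surrounds a point off `Ω`
  have hnontriv : ∀ x, N₀ ≤ n x → ∃ p, p ∉ Ω ∧ ψ x p = 1 := by
    intro x hx
    by_contra hcon
    push Not at hcon
    have h0 : GoodRing (∅ : Set ℂ) (fun _ => (0 : ℝ)) :=
      ⟨continuous_const, fun _ => ⟨le_rfl, zero_le_one⟩, ⟨0, fun _ _ => rfl⟩, fun _ _ => Or.inl rfl⟩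
    have key := fun c B h1 => aux_between hf (hψ x hx) h0 (hXcl x) isClosed_empty (hXΩ x)
      (empty_subset _) (fun w hw h => absurd h (hcon w hw)) c B h1 (fun w hw => hw.elim)
    have hfe : ∀ z ∈ K, |(f (φ (n x) z) - (cc x + g z)).re| ≤ 0.01 ∧
        |(f (φ (n x) z) - (cc x + g z)).im| ≤ 0.01 := fun z hz =>
      ⟨(Complex.abs_re_le_norm _).trans (hn x z hz).le, (Complex.abs_im_le_norm _).trans (hn x z hz).le⟩
    rcases hψχ x hx with h | h
    · have := key 1 ((cc x).re + 1.93) (by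
        rintro _ ⟨z, hz, rfl⟩ h0
        rw [h z (hK₀K hz)] at h0
        have h1 := hgre z (hχ0' z hz h0)
        have h2 := (abs_le.1 (hfe z (hK₀K hz)).1).2
        rw [one_mul]
        rw [Complex.sub_re, Complex.add_re] at h2
        norm_num at *
        linarith) (φ (n x) z₁) (by rw [h z₁ (hK₀K hz₁K₀), hχ1 z₁ hz₁.le]; exact one_pos) zero_lt_one
      have h2 := (abs_le.1 (hfe z₁ (hK₀K hz₁K₀)).1).1
      rw [one_mul] at this
      rw [Complex.sub_re, Complex.add_re] at h2
      norm_num at *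
      linarith
    · have := key (-Complex.I) ((cc x).im + 1.93) (by
        rintro _ ⟨z, hz, rfl⟩ h0
        rw [h z (hK₀K hz)] at h0
        have h1 := hgim z (hχ1' z hz (by linarith))
        have h2 := (abs_le.1 (hfe z (hK₀K hz)).2).2
        rw [neg_mul, Complex.neg_re, Complex.I_mul_re, neg_neg]
        rw [Complex.sub_im, Complex.add_im] at h2
        norm_num at *
        linarith) (φ (n x) z₀) (by rw [h z₀ (hK₀K hz₀K₀), hχ0 z₀ hz₀.ge]; norm_num) zero_lt_one
      have h2 := (abs_le.1 (hfe z₀ (hK₀K hz₀K₀)).2).1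
      rw [neg_mul, Complex.neg_re, Complex.I_mul_re, neg_neg] at this
      rw [Complex.sub_im, Complex.add_im] at h2
      norm_num at *
      linarith
  -- types
  let τ : Fin N → β := fun x => if h : n x < N₀ then Sum.inl ⟨n x, h⟩ else
    Sum.inr {C | ∃ w ∈ (C : Set ℂ), ψ x w = 1}
  have hpig : ∃ y : β, 2 < (Finset.univ.filter fun x => τ x = y).card :=
    Fintype.exists_lt_card_fiber_of_mul_lt_card τ (by rw [Fintype.card_fin]; omega)
  obtain ⟨y, hy⟩ := hpig
  obtain ⟨i, hi, j, hj, k, hk, hij, hik, hjk⟩ := Finset.two_lt_card.1 hy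
  simp only [Finset.mem_filter, Finset.mem_univ, true_and] at hi hj hk
  have hbig : ∀ x x', x ≠ x' → τ x = y → τ x' = y → N₀ ≤ n x := by
    intro x x' hxx hx hx'
    by_contra hcon
    have hlt := not_le.1 hcon
    rw [← hx] at hx'
    simp only [τ] at hx'
    rw [dif_pos hlt] at hx'
    by_cases h' : n x' < N₀
    · rw [dif_pos h'] at hx'
      have h2 : n x' = n x := by
        have h3 := Sum.inl.inj hx'
        simpa using h3
      exact hne x x' hxx z₁ (hK₀K hz₁K₀) z₁ (hK₀K hz₁K₀) (by rw [h2])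
    · rw [dif_neg h'] at hx'
      exact absurd hx' (by simp)
  have hsame : ∀ x x', N₀ ≤ n x → N₀ ≤ n x' → τ x = y → τ x' = y →
      ∀ w, w ∉ Ω → ψ x w = 1 → ψ x' w = 1 := by
    intro x x' hx hx' ht ht' w hw hw1
    rw [← ht'] at ht
    simp only [τ] at ht
    rw [dif_neg (not_lt.2 hx), dif_neg (not_lt.2 hx')] at ht
    have ht := Sum.inr.inj ht
    set C := connectedComponentIn Ωᶜ w with hC
    have hwC : w ∈ C := mem_connectedComponentIn hw
    have hCpre : IsPreconnected C := isPreconnected_connectedComponentIn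
    have hCX : ∀ x, ∀ v ∈ C, v ∉ X x := fun x v hv h =>
      connectedComponentIn_subset _ _ hv (hXΩ x h)
    have hCb : IsBounded C := by
      obtain ⟨R, hR⟩ := (hψ x hx).2.2.1
      refine (isBounded_closedBall (x := (0 : ℂ)) (r := R)).subset ?_
      intro v hv
      rw [mem_closedBall_zero_iff]
      by_contra hcon
      have h1 := hR v (not_le.1 hcon)
      have h2 := aux_const (hψ x hx) hCpre (hCX x) hv hwC
      rw [h1, hw1] at h2
      exact zero_ne_one h2
    let C' : {C : Set ℂ | IsHole Ω C} := ⟨C, ⟨w, hw, rfl⟩, hCb⟩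
    have h1 : C' ∈ {C : {C : Set ℂ | IsHole Ω C} | ∃ w ∈ (C : Set ℂ), ψ x w = 1} := ⟨w, hwC, hw1⟩
    rw [ht] at h1
    obtain ⟨v, hv, hv1⟩ := h1
    rw [← hv1]
    exact aux_const (hψ x' hx') hCpre (hCX x') hwC hv
  let gt : Fin N → Fin N → Prop := fun x x' =>
    (∀ w ∈ X x', ψ x w = 1) ∧ (∀ w ∈ X x, ψ x' w = 0)
  have htot : ∀ x x', x ≠ x' → τ x = y → τ x' = y → gt x x' ∨ gt x' x := by
    intro x x' hxx ht ht'
    have hx := hbig x x' hxx ht ht'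
    have hx' := hbig x' x hxx.symm ht' ht
    obtain ⟨p, hpΩ, hp⟩ := hnontriv x hx
    have hp' := hsame x x' hx hx' ht ht' p hpΩ hp
    have hside : ∀ x x', x ≠ x' → N₀ ≤ n x →
        (∀ w ∈ X x', ψ x w = 0) ∨ (∀ w ∈ X x', ψ x w = 1) := by
      intro x x' hxx hx
      have hpre : IsPreconnected (φ (n x') '' K) :=
        hKconn.isPreconnected.image _ ((hφd (n x')).continuousOn.mono hKG)
      have hoff : ∀ w ∈ φ (n x') '' K, w ∉ X x := by
        rintro _ ⟨z, hz, rfl⟩ ⟨z', hz', h⟩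
        exact hne x x' hxx z' (hK₀K hz') z hz h
      have hq : φ (n x') z₁ ∈ φ (n x') '' K := ⟨z₁, hK₀K hz₁K₀, rfl⟩
      have hall : ∀ w ∈ X x', ψ x w = ψ x (φ (n x') z₁) := fun w hw =>
        aux_const (hψ x hx) hpre hoff (image_mono hK₀K hw) hq
      rcases (hψ x hx).2.2.2 _ (hoff _ hq) with h | h
      · exact Or.inl fun w hw => (hall w hw).trans h
      · exact Or.inr fun w hw => (hall w hw).trans h
    exact aux_order (hψ x hx) (hψ x' hx') (hXcl x) (hXcl x') (hXdis x x' hxx)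
      (hside x x' hxx hx) (hside x' x hxx.symm hx') hp hp'
  have hest : ∀ (j x : Fin N), ∀ z ∈ K,
      |((((2 * (j : ℕ) : ℝ) : ℂ) + Complex.I) * f (φ (n x) z)).re
        - M * (2 * (j : ℕ) * (x : ℕ) - (x : ℕ) ^ 2)| ≤ T := by
    intro j x z hz
    have e : ((((2 * (j : ℕ) : ℝ) : ℂ) + Complex.I) * f (φ (n x) z)).re
        - M * (2 * (j : ℕ) * (x : ℕ) - (x : ℕ) ^ 2) =
        ((((2 * (j : ℕ) : ℝ) : ℂ) + Complex.I) * (f (φ (n x) z) - cc x)).re := by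
      rw [Complex.mul_re, Complex.mul_re, Complex.sub_re, Complex.sub_im, hccre, hccim,
        Complex.add_re, Complex.add_im, Complex.ofReal_re, Complex.ofReal_im, Complex.I_re,
        Complex.I_im]
      ring
    rw [e]
    refine (Complex.abs_re_le_norm _).trans ?_
    rw [norm_mul]
    have h1 : ‖(((2 * (j : ℕ) : ℝ) : ℂ) + Complex.I)‖ ≤ 2 * N + 1 := by
      refine (norm_add_le _ _).trans ?_
      rw [Complex.norm_I, Complex.norm_real, Real.norm_eq_abs, abs_of_nonneg (by positivity)]
      have : ((j : ℕ) : ℝ) ≤ N := by exact_mod_cast j.2.le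
      linarith
    have h2 : ‖f (φ (n x) z) - cc x‖ ≤ S + 1 := by
      have e : f (φ (n x) z) - cc x = (f (φ (n x) z) - (cc x + g z)) + g z := by ring
      rw [e]
      refine (norm_add_le _ _).trans ?_
      have := hn x z hz
      have := hS' z hz
      norm_num at *
      linarith
    rw [hT]
    gcongr
  have hfin : ∀ i j k, i ≠ j → j ≠ k → τ i = y → τ j = y → τ k = y → gt i j → gt j k → False := by
    intro i j k hij hjk hi hj hk h1 h2
    have hni := hbig i j hij hi hj
    have hnk := hbig k j hjk.symm hk hj
    have hB : ∀ x, x ≠ j → ∀ w ∈ X x, ((((2 * (j : ℕ) : ℝ) : ℂ) + Complex.I) * f w).re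
        ≤ M * ((j : ℕ) ^ 2 - 1) + T := by
      rintro x hxj _ ⟨z, hz, rfl⟩
      have h3 := (abs_le.1 (hest j x z (hK₀K hz))).2
      have h4 : (1 : ℝ) ≤ (((x : ℕ) : ℝ) - ((j : ℕ) : ℝ)) ^ 2 := by
        have : ((x : ℕ) : ℤ) - (j : ℕ) ≠ 0 := by
          intro h
          apply hxj
          ext
          omega
        have h5 : (1 : ℤ) ≤ (((x : ℕ) : ℤ) - (j : ℕ)) ^ 2 := by
          have := sq_pos_of_ne_zero this
          omega
        exact_mod_cast h5
      have h5 : M * (2 * (j : ℕ) * (x : ℕ) - (x : ℕ) ^ 2) ≤ M * ((j : ℕ) ^ 2 - 1 : ℝ) := by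
        apply mul_le_mul_of_nonneg_left _ (by linarith)
        nlinarith
      linarith
    have key := aux_between hf (hψ i hni) (hψ k hnk) (hXcl i) (hXcl k) (hXΩ i) (hXΩ k)
      (hsame i k hni hnk hi hk) (((2 * (j : ℕ) : ℝ) : ℂ) + Complex.I)
      (M * ((j : ℕ) ^ 2 - 1) + T) (fun w hw _ => hB i hij w hw) (hB k hjk.symm)
      (φ (n j) z₁) (by rw [h1.1 _ ⟨z₁, hz₁K₀, rfl⟩]; exact one_pos)
      (by rw [h2.2 _ ⟨z₁, hz₁K₀, rfl⟩]; exact one_pos)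
    have h3 := (abs_le.1 (hest j j z₁ (hK₀K hz₁K₀))).1
    nlinarith
  rcases htot i j hij hi hj with h | h <;> rcases htot j k hjk hj hk with h' | h' <;>
    rcases htot i k hik hi hk with h'' | h''
  · exact hfin i j k hij hjk hi hj hk h h'
  · exact hfin i j k hij hjk hi hj hk h h'
  · exact hfin i k j hik hjk.symm hi hk hj h'' h'
  · exact hfin k i j hik.symm hij hk hi hj h'' h
  · exact hfin j i k hij.symm hik hj hi hk h h''
  · exact hfin j k i hjk hik.symm hj hk hi h' h''
  · exact hfin k j i hjk.symm hij.symm hk hj hi h' h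
  · exact hfin k j i hjk.symm hij.symm hk hj hi h' h
end

section
/- Let G and Ω be domains in ℂ and let Φ = (φₙ) be a sequence of holomorphic maps from G to Ω. There exists a (Φ,G,Ω)-universal function if and only if for every ε > 0, every compact set K ⊆ G, every compact set L ⊆ Ω, every g ∈ H(G) and every h ∈ H(Ω), there exist f ∈ H(Ω) and n ∈ ℕ such that sup_{z∈K} |f(φₙ(z)) − g(z)| ≤ ε and sup_{z∈L} |f(z) − h(z)| ≤ ε. -/
open Set Metric Bornology Filter

open Topology in
theorem exists_dense_orbit_aux {X Y : Type*} [TopologicalSpace X] [TopologicalSpace Y] [BaireSpace X]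
    [Nonempty X] [SecondCountableTopology Y] (T : ℕ → X → Y) (hT : ∀ n, Continuous (T n))
    (htr : ∀ U : Set X, IsOpen U → U.Nonempty → ∀ V : Set Y, IsOpen V → V.Nonempty →
      ∃ x ∈ U, ∃ n, T n x ∈ V) :
    ∃ x, ∀ V : Set Y, IsOpen V → V.Nonempty → ∃ n, T n x ∈ V := by
  have hb := TopologicalSpace.isBasis_countableBasis Y
  have hd : Dense (⋂ V ∈ TopologicalSpace.countableBasis Y, ⋃ n, (T n) ⁻¹' V) := by
    refine dense_biInter_of_isOpen ?_ (TopologicalSpace.countable_countableBasis Y) ?_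
    · intro V hV
      exact isOpen_iUnion fun n => (hb.isOpen hV).preimage (hT n)
    · intro V hV
      rw [dense_iff_inter_open]
      intro U hU hUn
      obtain ⟨x, hx, n, hn⟩ := htr U hU hUn V (hb.isOpen hV)
        (TopologicalSpace.nonempty_of_mem_countableBasis hV)
      exact ⟨x, hx, mem_iUnion.2 ⟨n, hn⟩⟩
  obtain ⟨x, hx⟩ := hd.nonempty
  refine ⟨x, fun V hV hVn => ?_⟩
  obtain ⟨y, hy⟩ := hVn
  obtain ⟨W, hW, hyW, hWV⟩ := hb.exists_subset_of_mem_open hy hV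
  obtain ⟨n, hn⟩ := mem_iUnion.1 (mem_iInter₂.1 hx W hW)
  exact ⟨n, hWV hn⟩

open Classical in
noncomputable def extz (S : Set ℂ) (f : C(S, ℂ)) (z : ℂ) : ℂ :=
  if h : z ∈ S then f ⟨z, h⟩ else 0

theorem extz_apply {S : Set ℂ} (f : C(S, ℂ)) {z : ℂ} (h : z ∈ S) : extz S f z = f ⟨z, h⟩ := by
  simp [extz, h]

def HolSet (S : Set ℂ) : Set C(S, ℂ) := {f | DifferentiableOn ℂ (extz S f) S}

theorem isClosed_holSet {S : Set ℂ} (hS : IsOpen S) : IsClosed (HolSet S) := by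
  haveI : LocallyCompactSpace S := hS.locallyCompactSpace
  refine isClosed_iff_ultrafilter.2 fun f u hu hm => ?_
  have h1 : Tendsto (fun g : C(S, ℂ) => g) (u : Filter C(S, ℂ)) (nhds f) := hu
  rw [ContinuousMap.tendsto_iff_tendstoLocallyUniformly] at h1
  have h2 : TendstoLocallyUniformlyOn (fun g : C(S, ℂ) => extz S g) (extz S f)
      (u : Filter C(S, ℂ)) S := by
    rw [tendstoLocallyUniformlyOn_iff_tendstoLocallyUniformly_comp_coe]
    convert h1 using 2 with g
    · ext x
      simp [extz]
    · ext x
      simp [extz]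
  exact h2.differentiableOn (by filter_upwards [hm] with g hg using hg) hS

theorem mem_nhds_hol {S : Set ℂ} (f : HolSet S) (U : Set (HolSet S)) :
    U ∈ nhds f ↔ ∃ K : Set S, IsCompact K ∧ ∃ ε : ℝ, 0 < ε ∧
      ∀ g : HolSet S, (∀ x ∈ K, dist (g.1 x) (f.1 x) < ε) → g ∈ U := by
  have hb := nhds_basis_uniformity (x := f.1)
    (Metric.uniformity_basis_dist.compactConvergenceUniformity (α := S) (β := ℂ))
  rw [nhds_subtype_eq_comap, (hb.comap Subtype.val).mem_iff]
  constructor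
  · rintro ⟨⟨K, ε⟩, ⟨hK, hε⟩, h⟩
    exact ⟨K, hK, ε, hε, fun g hg => h hg⟩
  · rintro ⟨K, hK, ε, hε, h⟩
    exact ⟨(K, ε), ⟨hK, hε⟩, fun g hg => h g hg⟩

def mkHol {S : Set ℂ} (F : ℂ → ℂ) (hF : DifferentiableOn ℂ F S) : HolSet S :=
  ⟨⟨fun x => F x, hF.continuousOn.domRestrict⟩, by
    refine hF.congr fun z hz => ?_
    rw [extz_apply _ hz]; rfl⟩

theorem birk_exists {G Ω : Set ℂ} (hG : IsOpen G) (hΩ : IsOpen Ω)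
    (φ : ℕ → ℂ → ℂ) (hφd : ∀ n, DifferentiableOn ℂ (φ n) G)
    (hφm : ∀ n, Set.MapsTo (φ n) G Ω)
    (H : ∀ ε : ℝ, 0 < ε → ∀ K : Set ℂ, K ⊆ G → IsCompact K →
        ∀ L : Set ℂ, L ⊆ Ω → IsCompact L →
          ∀ g : ℂ → ℂ, DifferentiableOn ℂ g G →
            ∀ h : ℂ → ℂ, DifferentiableOn ℂ h Ω →
              ∃ f : ℂ → ℂ, DifferentiableOn ℂ f Ω ∧ ∃ n : ℕ,
                (∀ z ∈ K, ‖f (φ n z) - g z‖ ≤ ε) ∧ ∀ z ∈ L, ‖f z - h z‖ ≤ ε) :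
    ∃ f : ℂ → ℂ, DifferentiableOn ℂ f Ω ∧ UniversalFor G φ f := by
  haveI : LocallyCompactSpace G := hG.locallyCompactSpace
  haveI : LocallyCompactSpace Ω := hΩ.locallyCompactSpace
  haveI : CompleteSpace (HolSet Ω) := (isClosed_holSet hΩ).completeSpace_coe
  haveI : BaireSpace (HolSet Ω) := by
    letI := UniformSpace.pseudoMetricSpace (HolSet Ω)
    infer_instance
  haveI : Nonempty (HolSet Ω) := ⟨mkHol 0 (differentiableOn_const 0)⟩
  let c : ∀ n, C(G, Ω) := fun n =>
    ⟨(hφm n).restrict (φ n) G Ω, (hφd n).continuousOn.mapsToRestrict (hφm n)⟩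
  let T : ℕ → HolSet Ω → HolSet G := fun n f => ⟨f.1.comp (c n), by
    refine DifferentiableOn.congr (f.2.comp (hφd n) (hφm n)) fun z hz => ?_
    rw [extz_apply _ hz, Function.comp_apply, extz_apply _ (hφm n hz)]
    rfl⟩
  have hT : ∀ n, Continuous (T n) := fun n =>
    ((ContinuousMap.continuous_precomp (c n)).comp continuous_subtype_val).subtype_mk _
  obtain ⟨f, hf⟩ := exists_dense_orbit_aux T hT (by
    rintro U hU ⟨h, hh⟩ V hV ⟨g, hg⟩
    obtain ⟨L, hL, ε, hε, hLU⟩ := (mem_nhds_hol h U).1 (hU.mem_nhds hh)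
    obtain ⟨K, hK, δ, hδ, hKV⟩ := (mem_nhds_hol g V).1 (hV.mem_nhds hg)
    obtain ⟨f, hf, n, h1, h2⟩ := H (min ε δ / 2) (by positivity) (Subtype.val '' K)
      (by rintro _ ⟨x, -, rfl⟩; exact x.2) (hK.image continuous_subtype_val)
      (Subtype.val '' L) (by rintro _ ⟨x, -, rfl⟩; exact x.2) (hL.image continuous_subtype_val)
      _ g.2 _ h.2
    have hm : 0 < min ε δ := by positivity
    have hm1 := min_le_left ε δ
    have hm2 := min_le_right ε δ
    refine ⟨mkHol f hf, hLU _ fun x hx => ?_, n, hKV _ fun x hx => ?_⟩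
    · have := h2 x.1 ⟨x, hx, rfl⟩
      rw [extz_apply _ x.2] at this
      rw [dist_eq_norm]
      exact lt_of_le_of_lt this (by linarith)
    · have := h1 x.1 ⟨x, hx, rfl⟩
      rw [extz_apply _ x.2] at this
      rw [dist_eq_norm]
      exact lt_of_le_of_lt this (by linarith))
  refine ⟨_, f.2, fun g hg K hKG hK ε hε => ?_⟩
  have hK' : IsCompact (Subtype.val ⁻¹' K : Set G) :=
    Topology.IsInducing.subtypeVal.isCompact_preimage' hK (by simpa using hKG)
  have hV : {k : HolSet G | ∀ x ∈ (Subtype.val ⁻¹' K : Set G),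
      dist (k.1 x) ((mkHol g hg).1 x) < ε} ∈ nhds (mkHol g hg) :=
    (mem_nhds_hol _ _).2 ⟨_, hK', ε, hε, fun k hk => hk⟩
  obtain ⟨V, hVs, hVo, hVm⟩ := mem_nhds_iff.1 hV
  obtain ⟨n, hn⟩ := hf V hVo ⟨_, hVm⟩
  refine ⟨n, fun z hz => ?_⟩
  have := hVs hn ⟨z, hKG hz⟩ hz
  rw [dist_eq_norm] at this
  rw [extz_apply _ (hφm n (hKG hz))]
  exact this

/-- The smoothstep polynomial, with superattracting fixed points `0` and `1`. -/
noncomputable def sstep (x : ℂ) : ℂ := 3 * x ^ 2 - 2 * x ^ 3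

theorem sstep_diff (k : ℕ) : Differentiable ℂ (sstep^[k]) := by
  have : Differentiable ℂ sstep := by unfold sstep; fun_prop
  exact this.iterate k

theorem sstep_small {x : ℂ} (hx : ‖x‖ ≤ 1 / 8) : ‖sstep x‖ ≤ ‖x‖ / 2 := by
  have h0 := norm_nonneg x
  have : sstep x = x * (x * (3 - 2 * x)) := by unfold sstep; ring
  rw [this, norm_mul, norm_mul]
  have h1 : ‖3 - 2 * x‖ ≤ 4 := by
    refine (norm_sub_le _ _).trans ?_
    simp only [norm_mul, Complex.norm_ofNat]
    linarith
  have h2 : ‖x‖ * ‖3 - 2 * x‖ ≤ 1 / 8 * 4 := by gcongr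
  nlinarith

theorem sstep_iter (k : ℕ) : ∀ {x : ℂ}, ‖x‖ ≤ 1 / 8 → ‖sstep^[k] x‖ ≤ (1 / 2) ^ k := by
  have key : ∀ {x : ℂ}, ‖x‖ ≤ 1 / 8 → ‖sstep^[k] x‖ ≤ (1 / 2) ^ k * ‖x‖ := by
    induction k with
    | zero => intro x hx; simp
    | succ k ih =>
      intro x hx
      have h := sstep_small hx
      have h0 := norm_nonneg x
      rw [Function.iterate_succ_apply]
      refine (ih (by linarith)).trans ?_
      rw [pow_succ, mul_assoc]
      gcongr
      linarith
  intro x hx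
  refine (key hx).trans (mul_le_of_le_one_right (by positivity) (by linarith))

theorem sstep_iter_one (k : ℕ) {x : ℂ} (hx : ‖1 - x‖ ≤ 1 / 8) :
    ‖1 - sstep^[k] x‖ ≤ (1 / 2) ^ k := by
  have : Function.Semiconj (fun x : ℂ => 1 - x) sstep sstep := by
    intro x; simp only [sstep]; ring
  rw [show 1 - sstep^[k] x = sstep^[k] (1 - x) from this.iterate_right k x]
  exact sstep_iter k hx

theorem exists_bd {K : Set ℂ} (hK : IsCompact K) {f : ℂ → ℂ} (hf : ContinuousOn f K) :
    ∃ C : ℝ, 0 < C ∧ ∀ x ∈ K, ‖f x‖ ≤ C := by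
  obtain ⟨C, hC⟩ := hK.exists_bound_of_continuousOn hf
  exact ⟨max C 1, by positivity, fun x hx => (hC x hx).trans (le_max_left _ _)⟩

theorem birk_forward {G Ω : Set ℂ}
    (φ : ℕ → ℂ → ℂ) (hφd : ∀ n, DifferentiableOn ℂ (φ n) G)
    (hφm : ∀ n, Set.MapsTo (φ n) G Ω) (f : ℂ → ℂ) (hf : DifferentiableOn ℂ f Ω)
    (hU : UniversalFor G φ f) (ε : ℝ) (hε : 0 < ε) (K : Set ℂ) (hKG : K ⊆ G) (hK : IsCompact K)
    (L : Set ℂ) (hLΩ : L ⊆ Ω) (hL : IsCompact L) (g : ℂ → ℂ) (hg : DifferentiableOn ℂ g G)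
    (h : ℂ → ℂ) (hh : DifferentiableOn ℂ h Ω) :
    ∃ f : ℂ → ℂ, DifferentiableOn ℂ f Ω ∧ ∃ n : ℕ,
      (∀ z ∈ K, ‖f (φ n z) - g z‖ ≤ ε) ∧ ∀ z ∈ L, ‖f z - h z‖ ≤ ε := by
  obtain ⟨R, hR, hRL⟩ := exists_bd hL (hf.continuousOn.mono hLΩ)
  obtain ⟨S, hS, hSK⟩ := exists_bd hK (hg.continuousOn.mono hKG)
  set M : ℝ := 8 * (R + S + ε) with hM
  have hMpos : 0 < M := by positivity
  have hMc : (M : ℂ) ≠ 0 := by exact_mod_cast hMpos.ne'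
  have hMn : ‖(M : ℂ)‖ = M := by simp [abs_of_pos hMpos]
  obtain ⟨n, hn⟩ := hU (fun z => g z + M) (hg.add (differentiableOn_const _)) K hKG hK (ε / 2)
    (by positivity)
  have hd : DifferentiableOn ℂ (fun z => f z - M - h z) Ω :=
    (hf.sub (differentiableOn_const _)).sub hh
  obtain ⟨A, hA, hAL⟩ := exists_bd hL (hd.continuousOn.mono hLΩ)
  have hsub : φ n '' K ⊆ Ω := by
    rintro _ ⟨z, hz, rfl⟩; exact hφm n (hKG hz)
  obtain ⟨B, hB, hBK⟩ := exists_bd (hK.image_of_continuousOn ((hφd n).continuousOn.mono hKG))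
    (hd.continuousOn.mono hsub)
  obtain ⟨k, hk⟩ := exists_pow_lt_of_lt_one (show 0 < ε / (2 * (A + B)) by positivity)
    (show (1 / 2 : ℝ) < 1 by norm_num)
  have hk' : (A + B) * (1 / 2 : ℝ) ^ k ≤ ε / 2 := by
    rw [lt_div_iff₀ (by positivity)] at hk
    linarith
  have hkp : 0 < (1 / 2 : ℝ) ^ k := by positivity
  refine ⟨fun z => h z + (f z - M - h z) * sstep^[k] (f z / M), ?_, n, ?_, ?_⟩
  · exact hh.add (hd.mul ((sstep_diff k).comp_differentiableOn (hf.div_const _)))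
  · intro z hz
    have h1 := (hn z hz).le
    have h2 : ‖1 - f (φ n z) / M‖ ≤ 1 / 8 := by
      have : 1 - f (φ n z) / M = -((f (φ n z) - (g z + M)) + g z) / M := by
        field_simp; ring
      rw [this, norm_div, norm_neg, hMn, div_le_iff₀ hMpos]
      have := norm_add_le (f (φ n z) - (g z + M)) (g z)
      have := hSK z hz
      linarith
    have h3 := sstep_iter_one k h2
    have h4 := hBK (φ n z) ⟨z, hz, rfl⟩
    have e : h (φ n z) + (f (φ n z) - M - h (φ n z)) * sstep^[k] (f (φ n z) / M) - g z
        = (f (φ n z) - (g z + M)) -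
          (f (φ n z) - M - h (φ n z)) * (1 - sstep^[k] (f (φ n z) / M)) := by ring
    show ‖h (φ n z) + (f (φ n z) - M - h (φ n z)) * sstep^[k] (f (φ n z) / M) - g z‖ ≤ ε
    rw [e]
    refine (norm_sub_le _ _).trans ?_
    rw [norm_mul]
    have := mul_le_mul h4 h3 (norm_nonneg _) hB.le
    nlinarith
  · intro z hz
    have h2 : ‖f z / M‖ ≤ 1 / 8 := by
      rw [norm_div, hMn, div_le_iff₀ hMpos]
      have := hRL z hz
      linarith
    have h3 := sstep_iter k h2
    have h4 := hAL z hz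
    show ‖h z + (f z - M - h z) * sstep^[k] (f z / M) - h z‖ ≤ ε
    rw [add_sub_cancel_left, norm_mul]
    have := mul_le_mul h4 h3 (norm_nonneg _) hA.le
    nlinarith

/-- Proposition `Birk`, Birkhoff-type criterion. -/
theorem universal_iff_birkhoff_criterion
    (G Ω : Set ℂ) (hG : IsOpen G) (hGconn : IsConnected G)
    (hΩ : IsOpen Ω) (hΩconn : IsConnected Ω)
    (φ : ℕ → ℂ → ℂ) (hφd : ∀ n, DifferentiableOn ℂ (φ n) G)
    (hφm : ∀ n, Set.MapsTo (φ n) G Ω) :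
    (∃ f : ℂ → ℂ, DifferentiableOn ℂ f Ω ∧ UniversalFor G φ f) ↔
      ∀ ε : ℝ, 0 < ε → ∀ K : Set ℂ, K ⊆ G → IsCompact K →
        ∀ L : Set ℂ, L ⊆ Ω → IsCompact L →
          ∀ g : ℂ → ℂ, DifferentiableOn ℂ g G →
            ∀ h : ℂ → ℂ, DifferentiableOn ℂ h Ω →
              ∃ f : ℂ → ℂ, DifferentiableOn ℂ f Ω ∧ ∃ n : ℕ,
                (∀ z ∈ K, ‖f (φ n z) - g z‖ ≤ ε) ∧ ∀ z ∈ L, ‖f z - h z‖ ≤ ε := by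
  constructor
  · rintro ⟨f, hf, hU⟩ ε hε K hKG hK L hL hLc g hg h hh
    exact birk_forward φ hφd hφm f hf hU ε hε K hKG hK L hL hLc g hg h hh
  · exact birk_exists hG hΩ φ hφd hφm
end

section
/- Every domain Ω ⊆ ℂ admits an exhaustion (Lₙ) by compact sets belonging to M(Ω); that is, a sequence (Lₙ) of nonempty compact subsets of Ω with Lₙ contained in the interior of Lₙ₊₁ for all n, such that every compact subset of Ω is contained in some Lₙ, and such that each Lₙ is regular, connected, Ω-connected and Ω-convex. -/
open Set Metric Bornology Filter

namespace Ex

/-! ### The grid graph -/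

def dir : Fin 4 → ℤ × ℤ := ![(1, 0), (0, 1), (-1, 0), (0, -1)]

noncomputable def chi (A : Set (ℤ × ℤ)) (q : ℤ × ℤ) : ZMod 2 := by
  classical exact if q ∈ A then 1 else 0

noncomputable def bc (A : Set (ℤ × ℤ)) (v : ℤ × ℤ) : Fin 4 → ZMod 2 :=
  ![chi A (v.1, v.2) + chi A (v.1, v.2 - 1),
    chi A (v.1, v.2) + chi A (v.1 - 1, v.2),
    chi A (v.1 - 1, v.2) + chi A (v.1 - 1, v.2 - 1),
    chi A (v.1, v.2 - 1) + chi A (v.1 - 1, v.2 - 1)]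

lemma dir_inj : Function.Injective dir := by
  intro i j h; fin_cases i <;> fin_cases j <;> simp_all [dir]

lemma dir_opp (i : Fin 4) : dir (i + 2) = - dir i := by
  fin_cases i <;> simp [dir]

lemma bc_opp (A : Set (ℤ × ℤ)) (v : ℤ × ℤ) (i : Fin 4) : bc A (v + dir i) (i + 2) = bc A v i := by
  fin_cases i <;> simp [dir, bc, ← sub_eq_add_neg]

lemma zmod2_add_self (x : ZMod 2) : x + x = 0 := CharTwo.add_self_eq_zero x

lemma bc_sum (A : Set (ℤ × ℤ)) (v : ℤ × ℤ) : ∑ i, bc A v i = 0 := by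
  rw [Fin.sum_univ_four]
  simp only [bc, Matrix.cons_val]
  generalize chi A (v.1, v.2) = a
  generalize chi A (v.1, v.2 - 1) = b
  generalize chi A (v.1 - 1, v.2) = c
  generalize chi A (v.1 - 1, v.2 - 1) = d
  revert a b c d
  decide

lemma zmod2_cases (x : ZMod 2) : x = 0 ∨ x = 1 := by revert x; decide

lemma chi_add_eq_one (A : Set (ℤ × ℤ)) (p q : ℤ × ℤ) :
    chi A p + chi A q = 1 ↔ (p ∈ A ∧ q ∉ A) ∨ (p ∉ A ∧ q ∈ A) := by
  unfold chi
  by_cases h : p ∈ A <;> by_cases h' : q ∈ A <;> simp [h, h']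

lemma add_dir_opp (v : ℤ × ℤ) (i : Fin 4) : v + dir i + dir (i + 2) = v := by
  rw [dir_opp]; simp

lemma dir_ne (i : Fin 4) : dir i ≠ 0 := by
  fin_cases i <;> simp [dir]

def bG (A : Set (ℤ × ℤ)) : SimpleGraph (ℤ × ℤ) where
  Adj v w := ∃ i, w = v + dir i ∧ bc A v i = 1
  symm := ⟨by
    rintro v w ⟨i, rfl, h⟩
    exact ⟨i + 2, (add_dir_opp v i).symm, by rw [bc_opp, h]⟩⟩
  loopless := ⟨by
    rintro v ⟨i, h, -⟩
    exact dir_ne i (by simpa using h.symm)⟩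

lemma bc_finite (A : Set (ℤ × ℤ)) (hA : A.Finite) : {v | ∃ i, bc A v i = 1}.Finite := by
  have h1 := hA.image (fun q => (q.1 + 1, q.2))
  have h2 := hA.image (fun q => (q.1, q.2 + 1))
  have h3 := hA.image (fun q => (q.1 + 1, q.2 + 1))
  refine ((hA.union h1).union (h2.union h3)).subset ?_
  rintro ⟨m, n⟩ ⟨i, hi⟩
  have key : (m, n) ∈ A ∨ (m, n - 1) ∈ A ∨ (m - 1, n) ∈ A ∨ (m - 1, n - 1) ∈ A := by
    fin_cases i <;> simp only [bc] at hi <;> have := (chi_add_eq_one A _ _).1 hi <;> tauto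
  rcases key with h | h | h | h
  · exact Or.inl (Or.inl h)
  · exact Or.inr (Or.inl ⟨_, h, by simp⟩)
  · exact Or.inl (Or.inr ⟨_, h, by simp⟩)
  · exact Or.inr (Or.inr ⟨_, h, by simp⟩)

lemma not_bridge (A : Set (ℤ × ℤ)) (hA : A.Finite) (a : ℤ × ℤ) (i₀ : Fin 4)
    (h : bc A a i₀ = 1) :
    ((bG A).deleteEdges {s(a, a + dir i₀)}).Reachable a (a + dir i₀) := by
  classical
  by_contra hb
  set b := a + dir i₀ with hbdef
  set G' := (bG A).deleteEdges {s(a, b)} with hG'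
  have hfin : {v | G'.Reachable a v}.Finite := by
    refine ((bc_finite A hA).union (Set.finite_singleton a)).subset ?_
    intro v hv
    by_cases hva : v = a
    · exact Or.inr hva
    · left
      obtain ⟨p⟩ := (SimpleGraph.Reachable.symm hv)
      cases p with
      | nil => exact absurd rfl hva
      | cons hadj _ =>
        rw [hG', SimpleGraph.deleteEdges_adj] at hadj
        obtain ⟨⟨i, _, hi⟩, _⟩ := hadj
        exact ⟨i, hi⟩
  set T := hfin.toFinset with hT
  have memT : ∀ v, v ∈ T ↔ G'.Reachable a v := by intro v; simp [hT]
  have haT : a ∈ T := (memT a).2 (SimpleGraph.Reachable.refl _)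
  have hbT : b ∉ T := fun h' => hb ((memT b).1 h')
  have hsum : ∑ x ∈ T ×ˢ (Finset.univ : Finset (Fin 4)), bc A x.1 x.2 = 0 := by
    rw [Finset.sum_product]
    exact Finset.sum_eq_zero fun v _ => bc_sum A v
  rw [← Finset.sum_filter_add_sum_filter_not _ (fun x => x.1 + dir x.2 ∈ T)] at hsum
  have h1 : ∑ x ∈ (T ×ˢ (Finset.univ : Finset (Fin 4))).filter (fun x => x.1 + dir x.2 ∈ T),
      bc A x.1 x.2 = 0 := by
    refine Finset.sum_involution (fun x _ => (x.1 + dir x.2, x.2 + 2)) ?_ ?_ ?_ ?_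
    · rintro ⟨v, i⟩ _
      simp only [bc_opp]
      exact zmod2_add_self _
    · rintro ⟨v, i⟩ _ _ heq
      have := congrArg Prod.fst heq
      exact dir_ne i (by simpa using this)
    · rintro ⟨v, i⟩ hx
      simp only [Finset.mem_filter, Finset.mem_product, Finset.mem_univ, and_true] at hx ⊢
      rw [add_dir_opp]
      exact ⟨hx.2, hx.1⟩
    · rintro ⟨v, i⟩ _
      simp only [add_dir_opp, Prod.mk.injEq, true_and]
      fin_cases i <;> rfl
  have h2 : ∑ x ∈ (T ×ˢ (Finset.univ : Finset (Fin 4))).filter (fun x => ¬ x.1 + dir x.2 ∈ T),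
      bc A x.1 x.2 = 1 := by
    rw [Finset.sum_eq_single (a, i₀)]
    · exact h
    · rintro ⟨v, i⟩ hx hne
      simp only [Finset.mem_filter, Finset.mem_product, Finset.mem_univ, and_true] at hx
      rcases zmod2_cases (bc A v i) with h0 | h1'
      · exact h0
      · exfalso
        apply hx.2
        rw [memT]
        refine ((memT v).1 hx.1).trans (SimpleGraph.Adj.reachable ?_)
        rw [hG', SimpleGraph.deleteEdges_adj]
        refine ⟨⟨i, rfl, h1'⟩, ?_⟩
        intro hs
        rw [Set.mem_singleton_iff, Sym2.eq_iff] at hs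
        rcases hs with ⟨e1, e2⟩ | ⟨e1, e2⟩
        · apply hne
          subst e1
          rw [hbdef] at e2
          rw [dir_inj (add_left_cancel e2)]
        · exact hbT (e1 ▸ hx.1)
    · intro hx
      exfalso; apply hx
      simp only [Finset.mem_filter, Finset.mem_product, Finset.mem_univ, and_true]
      exact ⟨haT, hbT⟩
  rw [h1, h2] at hsum
  exact absurd hsum (by decide)

/-! ### Geometry of edges -/

def pt (v : ℤ × ℤ) : ℂ := ⟨v.1, v.2⟩

/-- closed grid edge -/
def Ed (v w : ℤ × ℤ) : Set ℂ :=
  {z | (min v.1 w.1 : ℤ) ≤ z.re ∧ z.re ≤ (max v.1 w.1 : ℤ) ∧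
       (min v.2 w.2 : ℤ) ≤ z.im ∧ z.im ≤ (max v.2 w.2 : ℤ)}

lemma Ed_comm (v w : ℤ × ℤ) : Ed v w = Ed w v := by
  unfold Ed; simp only [min_comm, max_comm]

lemma pt_inj : Function.Injective pt := by
  rintro ⟨a, b⟩ ⟨c, d⟩ h
  have h1 := congrArg Complex.re h
  have h2 := congrArg Complex.im h
  simp [pt] at h1 h2
  simp [h1, h2]

/-- normal form of edge -/
lemma Ed_cases (v : ℤ × ℤ) (i : Fin 4) :
    ∃ m n : ℤ, (s(v, v + dir i) = s((m, n), (m + 1, n)) ∧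
        Ed v (v + dir i) = {z : ℂ | (m : ℝ) ≤ z.re ∧ z.re ≤ m + 1 ∧ z.im = n}) ∨
      (s(v, v + dir i) = s((m, n), (m, n + 1)) ∧
        Ed v (v + dir i) = {z : ℂ | (n : ℝ) ≤ z.im ∧ z.im ≤ n + 1 ∧ z.re = m}) := by
  obtain ⟨x, y⟩ := v
  fin_cases i
  · refine ⟨x, y, Or.inl ⟨by simp [dir], ?_⟩⟩
    ext z; simp [dir, Ed]; intro _ _; constructor
    · rintro ⟨h, h'⟩; linarith
    · intro h; simp [h]
  · refine ⟨x, y, Or.inr ⟨by simp [dir], ?_⟩⟩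
    ext z; simp [dir, Ed]; constructor
    · rintro ⟨h, h', h'', h'''⟩; refine ⟨h'', h''', by linarith⟩
    · rintro ⟨h, h', h''⟩; simp [*]
  · refine ⟨x - 1, y, Or.inl ⟨by simp [dir, ← sub_eq_add_neg, Sym2.eq_swap], ?_⟩⟩
    ext z; simp [dir, Ed, ← sub_eq_add_neg]; intro _ _; constructor
    · rintro ⟨h, h'⟩; linarith
    · intro h; simp [h]
  · refine ⟨x, y - 1, Or.inr ⟨by simp [dir, ← sub_eq_add_neg, Sym2.eq_swap], ?_⟩⟩
    ext z; simp [dir, Ed, ← sub_eq_add_neg]; constructor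
    · rintro ⟨h, h', h'', h'''⟩; refine ⟨h'', h''', by linarith⟩
    · rintro ⟨h, h', h''⟩; simp [*]

lemma pt_mem_Ed {p v : ℤ × ℤ} {i : Fin 4} (h : pt p ∈ Ed v (v + dir i)) :
    p = v ∨ p = v + dir i := by
  rw [← Sym2.mem_iff]
  obtain ⟨a, b⟩ := p
  obtain ⟨m, n, ⟨hs, he⟩ | ⟨hs, he⟩⟩ := Ed_cases v i
  all_goals
    rw [he] at h
    rw [hs, Sym2.mem_iff]
    simp only [pt, Set.mem_ofPred_eq] at h
    obtain ⟨h1, h2, h3⟩ := h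
    norm_cast at h1 h2 h3
    simp only [Prod.mk.injEq]
    omega

lemma Ed_inter {v w : ℤ × ℤ} {i j : Fin 4} {z : ℂ} (hz : z ∈ Ed v (v + dir i))
    (hz' : z ∈ Ed w (w + dir j)) (hne : s(v, v + dir i) ≠ s(w, w + dir j)) :
    ∃ p, z = pt p := by
  obtain ⟨m, n, ⟨hs, he⟩ | ⟨hs, he⟩⟩ := Ed_cases v i <;>
  obtain ⟨m', n', ⟨hs', he'⟩ | ⟨hs', he'⟩⟩ := Ed_cases w j <;>
  rw [he] at hz <;> rw [he'] at hz' <;> rw [hs, hs'] at hne <;>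
  obtain ⟨h1, h2, h3⟩ := hz <;> obtain ⟨h1', h2', h3'⟩ := hz'
  · have hn : n = n' := by exact_mod_cast h3.symm.trans h3'
    have hm : m ≠ m' := by rintro rfl; subst hn; exact hne rfl
    rcases lt_or_gt_of_ne hm with hlt | hlt
    · have : (m : ℝ) + 1 ≤ m' := by exact_mod_cast hlt
      exact ⟨(m', n), Complex.ext (by simp [pt]; linarith) (by simp [pt, h3])⟩
    · have : (m' : ℝ) + 1 ≤ m := by exact_mod_cast hlt
      exact ⟨(m, n), Complex.ext (by simp [pt]; linarith) (by simp [pt, h3])⟩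
  · exact ⟨(m', n), Complex.ext (by simp [pt, h3']) (by simp [pt, h3])⟩
  · exact ⟨(m, n'), Complex.ext (by simp [pt, h3]) (by simp [pt, h3'])⟩
  · have hn : m = m' := by exact_mod_cast h3.symm.trans h3'
    have hm : n ≠ n' := by rintro rfl; subst hn; exact hne rfl
    rcases lt_or_gt_of_ne hm with hlt | hlt
    · have : (n : ℝ) + 1 ≤ n' := by exact_mod_cast hlt
      exact ⟨(m, n'), Complex.ext (by simp [pt, h3]) (by simp [pt]; linarith)⟩
    · have : (n' : ℝ) + 1 ≤ n := by exact_mod_cast hlt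
      exact ⟨(m, n), Complex.ext (by simp [pt, h3]) (by simp [pt]; linarith)⟩

/-- straight path along an edge -/
lemma exists_edge_path (v : ℤ × ℤ) (i : Fin 4) :
    ∃ p : Path (pt v) (pt (v + dir i)), Function.Injective p ∧
      Set.range p = Ed v (v + dir i) := by
  refine ⟨⟨⟨fun t => pt v + ((t : ℝ) : ℂ) * pt (dir i), by fun_prop⟩, by simp, ?_⟩, ?_, ?_⟩
  · apply Complex.ext <;> simp [pt]
  · have hd : pt (dir i) ≠ 0 := by
      intro h; exact dir_ne i (pt_inj (h.trans (by apply Complex.ext <;> simp [pt])))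
    intro s t h
    have h' : pt v + ((s : ℝ) : ℂ) * pt (dir i) = pt v + ((t : ℝ) : ℂ) * pt (dir i) := h
    have := mul_right_cancel₀ hd (add_left_cancel h')
    exact Subtype.ext (by exact_mod_cast this)
  · obtain ⟨x, y⟩ := v
    ext z
    constructor
    · rintro ⟨t, rfl⟩
      change pt (x, y) + ((t : ℝ) : ℂ) * pt (dir i) ∈ _
      have h0 := t.2.1
      have h1 := t.2.2
      fin_cases i <;> simp [Ed, dir, pt] <;> grind
    · intro hz
      suffices H : ∃ t : unitInterval, pt (x, y) + ((t : ℝ) : ℂ) * pt (dir i) = z from H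
      fin_cases i <;> simp [Ed, dir] at hz <;> obtain ⟨h1, h2, h3, h4⟩ := hz
      · refine ⟨⟨z.re - x, ⟨by linarith, by linarith⟩⟩, Complex.ext ?_ ?_⟩ <;>
          simp [dir, pt] <;> try linarith
      · refine ⟨⟨z.im - y, ⟨by linarith, by linarith⟩⟩, Complex.ext ?_ ?_⟩ <;>
          simp [dir, pt] <;> try linarith
      · refine ⟨⟨x - z.re, ⟨by linarith, by linarith⟩⟩, Complex.ext ?_ ?_⟩ <;>
          simp [dir, pt] <;> try linarith
      · refine ⟨⟨y - z.im, ⟨by linarith, by linarith⟩⟩, Complex.ext ?_ ?_⟩ <;>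
          simp [dir, pt] <;> try linarith

lemma trans_injective {a b c : ℂ} (p : Path a b) (q : Path b c) (hp : Function.Injective p)
    (hq : Function.Injective q) (h : ∀ z, z ∈ Set.range p → z ∈ Set.range q → z = b) :
    Function.Injective (p.trans q) := by
  intro s t hst
  have key : ∀ s t : unitInterval, (s : ℝ) ≤ 1/2 → ¬ (t : ℝ) ≤ 1/2 →
      (p.trans q) s = (p.trans q) t → False := by
    intro s t hs ht hst
    rw [Path.trans_apply, Path.trans_apply, dif_pos hs, dif_neg ht] at hst
    have e := h _ ⟨_, rfl⟩ ⟨_, hst.symm⟩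
    rw [hst] at e
    have := hq (e.trans q.source.symm)
    have := congrArg Subtype.val this
    simp at this
    apply ht; linarith
  by_cases hs : (s : ℝ) ≤ 1/2 <;> by_cases ht : (t : ℝ) ≤ 1/2
  · rw [Path.trans_apply, Path.trans_apply, dif_pos hs, dif_pos ht] at hst
    have := congrArg Subtype.val (hp hst)
    simp at this
    exact Subtype.ext this
  · exact (key s t hs ht hst).elim
  · exact (key t s ht hs hst.symm).elim
  · rw [Path.trans_apply, Path.trans_apply, dif_neg hs, dif_neg ht] at hst
    have := congrArg Subtype.val (hq hst)
    simp at this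
    exact Subtype.ext this

lemma walk_path (A : Set (ℤ × ℤ)) {G : SimpleGraph (ℤ × ℤ)} (hG : G ≤ bG A) {u v : ℤ × ℤ}
    (w : G.Walk u v) (hw : w.IsPath) (huv : u ≠ v) :
    ∃ p : Path (pt u) (pt v), Function.Injective p ∧
      ∀ z ∈ Set.range p, ∃ x i, bc A x i = 1 ∧ s(x, x + dir i) ∈ w.edges ∧ z ∈ Ed x (x + dir i) := by
  induction w with
  | nil => exact absurd rfl huv
  | @cons u x v hadj w ih =>
    obtain ⟨i, rfl, hi⟩ := hG hadj
    obtain ⟨e, he, her⟩ := exists_edge_path u i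
    rw [SimpleGraph.Walk.cons_isPath_iff] at hw
    by_cases hx : u + dir i = v
    · subst hx
      refine ⟨e, he, fun z hz => ⟨u, i, hi, by simp, her ▸ hz⟩⟩
    · obtain ⟨p, hp, hpr⟩ := ih hw.1 hx
      refine ⟨e.trans p, trans_injective e p he hp ?_, ?_⟩
      · intro z hz hz'
        rw [her] at hz
        obtain ⟨y, j, hj, hjw, hzj⟩ := hpr z hz'
        have hne : s(u, u + dir i) ≠ s(y, y + dir j) := by
          intro h
          rw [← h] at hjw
          exact hw.2 (w.fst_mem_support_of_mem_edges hjw)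
        obtain ⟨q, rfl⟩ := Ed_inter hz hzj hne
        have hq : q ∈ w.support := by
          rcases pt_mem_Ed hzj with rfl | rfl
          · exact w.fst_mem_support_of_mem_edges hjw
          · exact w.snd_mem_support_of_mem_edges hjw
        rcases pt_mem_Ed hz with rfl | rfl
        · exact absurd hq hw.2
        · rfl
      · intro z hz
        rw [Path.trans_range] at hz
        rcases hz with hz | hz
        · exact ⟨u, i, hi, by simp, her ▸ hz⟩
        · obtain ⟨y, j, hj, hjw, hzj⟩ := hpr z hz
          exact ⟨y, j, hj, by simp [hjw], hzj⟩

lemma jordan_of_paths {a b : ℂ} (p q : Path a b) (hp : Function.Injective p)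
    (hq : Function.Injective q)
    (h : ∀ z, z ∈ Set.range p → z ∈ Set.range q → z = a ∨ z = b) :
    IsJordanCurve (Set.range p ∪ Set.range q) := by
  have hcp : Continuous fun z : ℂ => p.extend ((1 - z.re) / 2) := by fun_prop
  have hcq : Continuous fun z : ℂ => q.extend ((1 - z.re) / 2) := by fun_prop
  have hre : ∀ z ∈ sphere (0 : ℂ) 1, z.re ^ 2 + z.im ^ 2 = 1 := by
    intro z hz
    have : ‖z‖ = 1 := by simpa using hz
    have h2 := Complex.sq_norm z
    rw [this, Complex.normSq_apply] at h2
    nlinarith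
  have hI : ∀ z ∈ sphere (0 : ℂ) 1, (1 - z.re) / 2 ∈ Set.Icc (0 : ℝ) 1 := by
    intro z hz
    have := hre z hz
    constructor <;> nlinarith [sq_nonneg z.im]
  have hag : ∀ z ∈ sphere (0 : ℂ) 1, z.im = 0 →
      p.extend ((1 - z.re) / 2) = q.extend ((1 - z.re) / 2) := by
    intro z hz h0
    have := hre z hz
    rw [h0] at this
    have h3 : (z.re - 1) * (z.re + 1) = 0 := by linarith
    rcases mul_eq_zero.1 h3 with h4 | h4
    · have : (1 - z.re) / 2 = 0 := by linarith
      rw [this]; simp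
    · have : (1 - z.re) / 2 = 1 := by linarith
      rw [this]; simp
  have hmixed : ∀ z ∈ sphere (0 : ℂ) 1, ∀ w ∈ sphere (0 : ℂ) 1, 0 ≤ z.im → ¬ 0 ≤ w.im →
      p.extend ((1 - z.re) / 2) = q.extend ((1 - w.re) / 2) → False := by
    intro z hz w hw hzi hwi hpq
    rw [p.extend_apply (hI z hz), q.extend_apply (hI w hw)] at hpq
    have hwre := hre w hw
    rcases h _ ⟨_, rfl⟩ ⟨_, hpq.symm⟩ with e | e
    · rw [hpq] at e
      have := congrArg Subtype.val (hq (e.trans q.source.symm))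
      simp at this
      have : w.re = 1 := by linarith
      rw [this] at hwre
      apply hwi; nlinarith
    · rw [hpq] at e
      have := congrArg Subtype.val (hq (e.trans q.target.symm))
      simp at this
      have : w.re = -1 := by linarith
      rw [this] at hwre
      apply hwi; nlinarith
  have hsame : ∀ z ∈ sphere (0 : ℂ) 1, ∀ w ∈ sphere (0 : ℂ) 1, z.re = w.re →
      0 ≤ z.im * w.im → z = w := by
    intro z hz w hw hr hi
    have h1 := hre z hz
    have h2 := hre w hw
    rw [hr] at h1
    have h3 : (z.im - w.im) * (z.im + w.im) = 0 := by linarith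
    apply Complex.ext hr
    rcases mul_eq_zero.1 h3 with h4 | h4
    · linarith
    · have : z.im = - w.im := by linarith
      rw [this] at hi ⊢
      have : w.im = 0 := by nlinarith
      simp [this]
  classical
  refine ⟨fun z => if 0 ≤ z.im then p.extend ((1 - z.re) / 2) else q.extend ((1 - z.re) / 2),
    ?_, ?_, ?_⟩
  · rw [continuousOn_iff_continuous_domRestrict]
    refine Continuous.if_le (f := fun z : sphere (0 : ℂ) 1 => (0 : ℝ))
      (g := fun z : sphere (0 : ℂ) 1 => (z : ℂ).im)
      (f' := fun z : sphere (0 : ℂ) 1 => p.extend ((1 - (z : ℂ).re) / 2))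
      (g' := fun z : sphere (0 : ℂ) 1 => q.extend ((1 - (z : ℂ).re) / 2))
      (hcp.comp continuous_subtype_val) (hcq.comp continuous_subtype_val)
      continuous_const (Complex.continuous_im.comp continuous_subtype_val) ?_
    intro z hz
    exact hag z z.2 hz.symm
  · intro z hz w hw hzw
    simp only at hzw
    split_ifs at hzw with h1 h2 h2
    · rw [p.extend_apply (hI z hz), p.extend_apply (hI w hw)] at hzw
      have := congrArg Subtype.val (hp hzw)
      simp at this
      exact hsame z hz w hw this (mul_nonneg h1 h2)
    · exact (hmixed z hz w hw h1 h2 hzw).elim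
    · exact (hmixed w hw z hz h2 h1 hzw.symm).elim
    · rw [q.extend_apply (hI z hz), q.extend_apply (hI w hw)] at hzw
      have := congrArg Subtype.val (hq hzw)
      simp at this
      exact hsame z hz w hw this (by nlinarith)
  · have hpts : ∀ t : unitInterval, ∃ y : ℝ, 0 ≤ y ∧ (1 - 2 * (t : ℝ)) ^ 2 + y ^ 2 = 1 := by
      intro t
      refine ⟨Real.sqrt (1 - (1 - 2 * (t : ℝ)) ^ 2), Real.sqrt_nonneg _, ?_⟩
      rw [Real.sq_sqrt]
      · ring
      · nlinarith [t.2.1, t.2.2]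
    have hsph : ∀ x y : ℝ, x ^ 2 + y ^ 2 = 1 → (⟨x, y⟩ : ℂ) ∈ sphere (0 : ℂ) 1 := by
      intro x y hxy
      have h2 := Complex.sq_norm ⟨x, y⟩
      rw [Complex.normSq_mk] at h2
      have h3 : ‖(⟨x, y⟩ : ℂ)‖ ^ 2 = 1 := by rw [h2]; linarith
      have : ‖(⟨x, y⟩ : ℂ)‖ = 1 := by
        have h4 := norm_nonneg (⟨x, y⟩ : ℂ)
        nlinarith
      simpa using this
    ext z
    constructor
    · rintro (⟨t, rfl⟩ | ⟨t, rfl⟩)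
      · obtain ⟨y, hy, hxy⟩ := hpts t
        refine ⟨⟨1 - 2 * t, y⟩, hsph _ _ hxy, ?_⟩
        have : (1 - (1 - 2 * (t : ℝ))) / 2 = t := by ring
        simp only [hy, if_true, this]
        rw [p.extend_apply t.2]
      · obtain ⟨y, hy, hxy⟩ := hpts t
        have e : (1 - (1 - 2 * (t : ℝ))) / 2 = t := by ring
        refine ⟨⟨1 - 2 * t, -y⟩, hsph _ _ (by simpa using hxy), ?_⟩
        by_cases h0 : y = 0
        · have := hag ⟨1 - 2 * t, y⟩ (hsph _ _ hxy) h0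
          simp only [e] at this
          simp only [h0, neg_zero, le_refl, if_true, e]
          rw [this, q.extend_apply t.2]
        · have : ¬ (0 ≤ -y) := by
            intro h'; apply h0; linarith
          simp only [this, if_false, e]
          rw [q.extend_apply t.2]
    · rintro ⟨w, hw, rfl⟩
      simp only
      split_ifs with h1
      · left; rw [p.extend_apply (hI w hw)]; exact ⟨_, rfl⟩
      · right; rw [q.extend_apply (hI w hw)]; exact ⟨_, rfl⟩

/-- every boundary edge lies on a Jordan curve made of boundary edges -/
lemma edge_jordan (A : Set (ℤ × ℤ)) (hA : A.Finite) (a : ℤ × ℤ) (i : Fin 4) (h : bc A a i = 1) :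
    ∃ C, IsJordanCurve C ∧ Ed a (a + dir i) ⊆ C ∧
      ∀ z ∈ C, ∃ x j, bc A x j = 1 ∧ z ∈ Ed x (x + dir j) := by
  classical
  obtain ⟨w, hw⟩ := (not_bridge A hA a i h).exists_isPath
  have hne : a ≠ a + dir i := fun e => dir_ne i (by simpa using e.symm)
  obtain ⟨p, hp, hpr⟩ := walk_path A (SimpleGraph.deleteEdges_le _) w hw hne
  obtain ⟨e, he, her⟩ := exists_edge_path a i
  refine ⟨_, jordan_of_paths e p he hp ?_, her ▸ Set.subset_union_left, ?_⟩
  · intro z hz hz'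
    rw [her] at hz
    obtain ⟨y, j, hj, hjw, hzj⟩ := hpr z hz'
    have hne : s(a, a + dir i) ≠ s(y, y + dir j) := by
      intro h'
      rw [← h'] at hjw
      have := w.edges_subset_edgeSet hjw
      rw [SimpleGraph.edgeSet_deleteEdges] at this
      exact this.2 rfl
    obtain ⟨q, rfl⟩ := Ed_inter hz hzj hne
    rcases pt_mem_Ed hz with rfl | rfl
    · exact Or.inl rfl
    · exact Or.inr rfl
  · rintro z (hz | hz)
    · exact ⟨a, i, h, her ▸ hz⟩
    · obtain ⟨y, j, hj, _, hzj⟩ := hpr z hz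
      exact ⟨y, j, hj, hzj⟩

/-! ### Grid cells -/

def Cell (q : ℤ × ℤ) : Set ℂ := Set.Icc (q.1 : ℝ) (q.1 + 1) ×ℂ Set.Icc (q.2 : ℝ) (q.2 + 1)
def OCell (q : ℤ × ℤ) : Set ℂ := Set.Ioo (q.1 : ℝ) (q.1 + 1) ×ℂ Set.Ioo (q.2 : ℝ) (q.2 + 1)

lemma mem_Cell {q : ℤ × ℤ} {z : ℂ} : z ∈ Cell q ↔
    ((q.1 : ℝ) ≤ z.re ∧ z.re ≤ q.1 + 1) ∧ ((q.2 : ℝ) ≤ z.im ∧ z.im ≤ q.2 + 1) := Iff.rfl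

lemma mem_OCell {q : ℤ × ℤ} {z : ℂ} : z ∈ OCell q ↔
    ((q.1 : ℝ) < z.re ∧ z.re < q.1 + 1) ∧ ((q.2 : ℝ) < z.im ∧ z.im < q.2 + 1) := Iff.rfl

lemma closure_OCell (q : ℤ × ℤ) : closure (OCell q) = Cell q := by
  unfold OCell Cell
  rw [Complex.closure_reProdIm, closure_Ioo (by simp), closure_Ioo (by simp)]

lemma isClosed_Cell (q : ℤ × ℤ) : IsClosed (Cell q) := closure_OCell q ▸ isClosed_closure

lemma isOpen_OCell (q : ℤ × ℤ) : IsOpen (OCell q) := isOpen_Ioo.reProdIm isOpen_Ioo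

lemma OCell_preconn (q : ℤ × ℤ) : IsPreconnected (OCell q) :=
  (((convex_Ioo (𝕜 := ℝ) (q.1 : ℝ) (q.1 + 1)).linear_preimage Complex.reLm).inter
    ((convex_Ioo (𝕜 := ℝ) (q.2 : ℝ) (q.2 + 1)).linear_preimage Complex.imLm)).isPreconnected

lemma Cell_preconn (q : ℤ × ℤ) : IsPreconnected (Cell q) :=
  closure_OCell q ▸ (OCell_preconn q).closure

lemma exists_mem_Cell (z : ℂ) : ∃ q, z ∈ Cell q :=
  ⟨(⌊z.re⌋, ⌊z.im⌋), ⟨⟨Int.floor_le _, (Int.lt_floor_add_one _).le⟩,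
    ⟨Int.floor_le _, (Int.lt_floor_add_one _).le⟩⟩⟩

lemma OCell_Cell {p q : ℤ × ℤ} {z : ℂ} (h : z ∈ OCell p) (h' : z ∈ Cell q) : p = q := by
  obtain ⟨⟨a, b⟩, ⟨c, d⟩⟩ := mem_OCell.1 h
  obtain ⟨⟨a', b'⟩, ⟨c', d'⟩⟩ := mem_Cell.1 h'
  have h1 : (p.1 : ℝ) < q.1 + 1 := by linarith
  have h2 : (q.1 : ℝ) < p.1 + 1 := by linarith
  have h3 : (p.2 : ℝ) < q.2 + 1 := by linarith
  have h4 : (q.2 : ℝ) < p.2 + 1 := by linarith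
  norm_cast at h1 h2 h3 h4
  apply Prod.ext <;> omega

lemma finite_cells {K : Set ℂ} (hK : Bornology.IsBounded K) :
    {q | (Cell q ∩ K).Nonempty}.Finite := by
  obtain ⟨R, hR⟩ := hK.exists_norm_le
  obtain ⟨N, hN⟩ := exists_nat_gt R
  refine (Set.finite_Icc ((-N - 1, -N - 1) : ℤ × ℤ) (N, N)).subset ?_
  rintro ⟨m, n⟩ ⟨z, hz, hzK⟩
  obtain ⟨⟨a, b⟩, ⟨c, d⟩⟩ := mem_Cell.1 hz
  have h := hR z hzK
  have h1 := abs_le.1 (Complex.abs_re_le_norm z)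
  have h2 := abs_le.1 (Complex.abs_im_le_norm z)
  have e1 : (m : ℝ) ≤ N := by simp at a; linarith
  have e2 : (n : ℝ) ≤ N := by simp at c; linarith
  have e3 : (-N - 1 : ℝ) ≤ m := by simp at b; linarith [h1.1]
  have e4 : (-N - 1 : ℝ) ≤ n := by simp at d; linarith [h2.1]
  simp only [Set.mem_Icc, Prod.le_def]
  exact ⟨⟨by exact_mod_cast e3, by exact_mod_cast e4⟩, by exact_mod_cast e1, by exact_mod_cast e2⟩

lemma locallyFinite_Cell : LocallyFinite Cell := fun z =>
  ⟨Metric.ball z 1, Metric.ball_mem_nhds z one_pos, finite_cells Metric.isBounded_ball⟩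

def GU (A : Set (ℤ × ℤ)) : Set ℂ := ⋃ q : A, Cell q

lemma mem_GU {A : Set (ℤ × ℤ)} {z : ℂ} : z ∈ GU A ↔ ∃ q ∈ A, z ∈ Cell q := by
  simp [GU]

lemma isClosed_GU (A : Set (ℤ × ℤ)) : IsClosed (GU A) :=
  (locallyFinite_Cell.comp_injective Subtype.val_injective).isClosed_iUnion
    fun q => isClosed_Cell q

lemma compl_GU_subset (A : Set (ℤ × ℤ)) : (GU A)ᶜ ⊆ GU Aᶜ := by
  intro z hz
  obtain ⟨q, hq⟩ := exists_mem_Cell z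
  exact mem_GU.2 ⟨q, fun hA => hz (mem_GU.2 ⟨q, hA, hq⟩), hq⟩

lemma OCell_disj {A : Set (ℤ × ℤ)} {q : ℤ × ℤ} (hq : q ∉ A) : OCell q ⊆ (GU A)ᶜ := by
  intro z hz hz'
  obtain ⟨p, hp, hzp⟩ := mem_GU.1 hz'
  exact hq (OCell_Cell hz hzp ▸ hp)

lemma frontier_GU (A : Set (ℤ × ℤ)) : frontier (GU A) = GU A ∩ GU Aᶜ := by
  rw [frontier_eq_closure_inter_closure, (isClosed_GU A).closure_eq]
  congr 1
  apply Set.Subset.antisymm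
  · exact closure_minimal (compl_GU_subset A) (isClosed_GU _)
  · intro z hz
    obtain ⟨q, hq, hzq⟩ := mem_GU.1 hz
    rw [← closure_OCell] at hzq
    exact closure_mono (OCell_disj hq) hzq

lemma Ed_cells (x : ℤ × ℤ) (i : Fin 4) : ∃ p q : ℤ × ℤ,
    (∀ A, bc A x i = chi A p + chi A q) ∧ Ed x (x + dir i) ⊆ Cell p ∩ Cell q := by
  obtain ⟨x, y⟩ := x
  fin_cases i
  · refine ⟨(x, y), (x, y - 1), fun A => rfl, fun z hz => ?_⟩
    simp [Ed, dir, mem_Cell] at hz ⊢; grind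
  · refine ⟨(x, y), (x - 1, y), fun A => rfl, fun z hz => ?_⟩
    simp [Ed, dir, mem_Cell] at hz ⊢; grind
  · refine ⟨(x - 1, y), (x - 1, y - 1), fun A => rfl, fun z hz => ?_⟩
    simp [Ed, dir, mem_Cell] at hz ⊢; grind
  · refine ⟨(x, y - 1), (x - 1, y - 1), fun A => rfl, fun z hz => ?_⟩
    simp [Ed, dir, mem_Cell] at hz ⊢; grind

lemma Ed_subset_frontier (A : Set (ℤ × ℤ)) (x : ℤ × ℤ) (i : Fin 4) (h : bc A x i = 1) :
    Ed x (x + dir i) ⊆ frontier (GU A) := by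
  obtain ⟨p, q, hb, hs⟩ := Ed_cells x i
  rw [hb, chi_add_eq_one] at h
  rw [frontier_GU]
  intro z hz
  have hz' := hs hz
  rcases h with ⟨h1, h2⟩ | ⟨h1, h2⟩
  · exact ⟨mem_GU.2 ⟨p, h1, hz'.1⟩, mem_GU.2 ⟨q, h2, hz'.2⟩⟩
  · exact ⟨mem_GU.2 ⟨q, h2, hz'.2⟩, mem_GU.2 ⟨p, h1, hz'.1⟩⟩

lemma near_of_mem {m n : ℤ} {t : ℝ} (h : (m : ℝ) ≤ t ∧ t ≤ m + 1) (h' : (n : ℝ) ≤ t ∧ t ≤ n + 1) :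
    m = n ∨ (m = n + 1 ∧ t = m) ∨ (n = m + 1 ∧ t = n) := by
  have h1 : (m : ℝ) ≤ n + 1 := by linarith
  have h2 : (n : ℝ) ≤ m + 1 := by linarith
  have h1' : m ≤ n + 1 := by exact_mod_cast h1
  have h2' : n ≤ m + 1 := by exact_mod_cast h2
  have : m = n ∨ m = n + 1 ∨ n = m + 1 := by omega
  rcases this with e | e | e
  · exact Or.inl e
  · refine Or.inr (Or.inl ⟨e, ?_⟩)
    subst e; push_cast at *; linarith
  · refine Or.inr (Or.inr ⟨e, ?_⟩)
    subst e; push_cast at *; linarith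

lemma edge_of_col (A : Set (ℤ × ℤ)) {m n n' : ℤ} {z : ℂ} (hz : z ∈ Cell (m, n))
    (hz' : z ∈ Cell (m, n')) (hx : chi A (m, n) + chi A (m, n') = 1) :
    ∃ x i, bc A x i = 1 ∧ z ∈ Ed x (x + dir i) := by
  rcases near_of_mem hz.2 hz'.2 with e | ⟨e, ht⟩ | ⟨e, ht⟩
  · simp only at e
    subst e
    rw [zmod2_add_self] at hx
    exact absurd hx (by decide)
  · simp only at e ht
    refine ⟨(m, n), 0, ?_, ?_⟩
    · have : n' = n - 1 := by omega
      subst this; exact hx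
    · have := (mem_Cell.1 hz).1
      simp at this
      simp [Ed, dir, ht, this]
  · simp only at e ht
    refine ⟨(m, n'), 0, ?_, ?_⟩
    · have : n = n' - 1 := by omega
      subst this; rw [add_comm] at hx; exact hx
    · have := (mem_Cell.1 hz).1
      simp at this
      simp [Ed, dir, ht, this]

lemma edge_of_row (A : Set (ℤ × ℤ)) {m m' n : ℤ} {z : ℂ} (hz : z ∈ Cell (m, n))
    (hz' : z ∈ Cell (m', n)) (hx : chi A (m, n) + chi A (m', n) = 1) :
    ∃ x i, bc A x i = 1 ∧ z ∈ Ed x (x + dir i) := by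
  rcases near_of_mem hz.1 hz'.1 with e | ⟨e, ht⟩ | ⟨e, ht⟩
  · simp only at e
    subst e
    rw [zmod2_add_self] at hx
    exact absurd hx (by decide)
  · simp only at e ht
    refine ⟨(m, n), 1, ?_, ?_⟩
    · have : m' = m - 1 := by omega
      subst this; exact hx
    · have := (mem_Cell.1 hz).2
      simp at this
      simp [Ed, dir, ht, this]
  · simp only at e ht
    refine ⟨(m', n), 1, ?_, ?_⟩
    · have : m = m' - 1 := by omega
      subst this; rw [add_comm] at hx; exact hx
    · have := (mem_Cell.1 hz).2
      simp at this
      simp [Ed, dir, ht, this]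

lemma exists_edge_of_frontier (A : Set (ℤ × ℤ)) {z : ℂ} (hz : z ∈ frontier (GU A)) :
    ∃ x i, bc A x i = 1 ∧ z ∈ Ed x (x + dir i) := by
  rw [frontier_GU] at hz
  obtain ⟨⟨m, n⟩, hq, hzq⟩ := mem_GU.1 hz.1
  obtain ⟨⟨m', n'⟩, hq', hzq'⟩ := mem_GU.1 hz.2
  have hmid : z ∈ Cell (m', n) := ⟨hzq'.1, hzq.2⟩
  by_cases h : (m', n) ∈ A
  · exact edge_of_col A hmid hzq' ((chi_add_eq_one A _ _).2 (Or.inl ⟨h, hq'⟩))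
  · exact edge_of_row A hzq hmid ((chi_add_eq_one A _ _).2 (Or.inl ⟨hq, h⟩))

lemma regular_GU (A : Set (ℤ × ℤ)) (hA : A.Finite) : RegularCompact (GU A) := by
  refine ⟨{C | IsJordanCurve C ∧ C ⊆ frontier (GU A)}, fun C hC => hC.1, ?_⟩
  apply Set.Subset.antisymm
  · intro z hz
    obtain ⟨x, i, hb, hzE⟩ := exists_edge_of_frontier A hz
    obtain ⟨C, hC, hEC, hCs⟩ := edge_jordan A hA x i hb
    refine ⟨C, ⟨hC, fun w hw => ?_⟩, hEC hzE⟩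
    obtain ⟨y, j, hbj, hwj⟩ := hCs w hw
    exact Ed_subset_frontier A y j hbj hwj
  · exact Set.sUnion_subset fun C hC => hC.2

/-! ### Filling holes -/

def fill (Ω P : Set ℂ) : Set ℂ :=
  P ∪ {z | z ∈ Pᶜ ∧ Bornology.IsBounded (connectedComponentIn Pᶜ z) ∧
    connectedComponentIn Pᶜ z ⊆ Ω}

lemma fill_subset {Ω P : Set ℂ} (h : P ⊆ Ω) : fill Ω P ⊆ Ω := by
  rintro z (hz | ⟨hz, _, hs⟩)
  · exact h hz
  · exact hs (mem_connectedComponentIn hz)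

lemma comp_subset_fill {Ω P : Set ℂ} {z : ℂ} (hz : z ∈ fill Ω P) :
    connectedComponentIn Pᶜ z ⊆ fill Ω P := by
  rcases hz with hz | ⟨hz, hb, hs⟩
  · rw [connectedComponentIn_eq_empty (by simpa using hz)]; exact Set.empty_subset _
  · intro w hw
    refine Or.inr ⟨connectedComponentIn_subset _ _ hw, ?_, ?_⟩ <;>
    rwa [← connectedComponentIn_eq hw]

lemma comp_subset_fill_compl {Ω P : Set ℂ} {z : ℂ} (hz : z ∉ fill Ω P) :
    connectedComponentIn Pᶜ z ⊆ (fill Ω P)ᶜ := by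
  intro w hw hwf
  have hzP : z ∈ Pᶜ := fun h => hz (Or.inl h)
  apply hz
  apply comp_subset_fill hwf
  rw [← connectedComponentIn_eq hw]
  exact mem_connectedComponentIn hzP

lemma isClosed_fill {Ω P : Set ℂ} (hP : IsClosed P) : IsClosed (fill Ω P) := by
  rw [← isOpen_compl_iff, isOpen_iff_mem_nhds]
  intro z hz
  have hzP : z ∈ Pᶜ := fun h => hz (Or.inl h)
  exact Filter.mem_of_superset
    (hP.isOpen_compl.connectedComponentIn.mem_nhds (mem_connectedComponentIn hzP))
    (comp_subset_fill_compl hz)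

lemma isBounded_fill {Ω P : Set ℂ} (hP : Bornology.IsBounded P) :
    Bornology.IsBounded (fill Ω P) := by
  obtain ⟨R, hR0, hR⟩ := hP.exists_pos_norm_le
  refine (Metric.isBounded_closedBall (x := (0 : ℂ)) (r := R)).subset ?_
  rintro z (hz | ⟨hz, hb, -⟩)
  · simpa using hR z hz
  · by_contra hzR
    have hzR' : R < ‖z‖ := by simpa using hzR
    have hpos : 0 < ‖z‖ := hR0.trans hzR'
    have hray : (fun t : ℝ => (t : ℂ) * z) '' Set.Ici 1 ⊆ connectedComponentIn Pᶜ z := by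
      apply IsPreconnected.subset_connectedComponentIn
      · exact isPreconnected_Ici.image _ (by fun_prop)
      · exact ⟨1, by simp, by simp⟩
      · rintro _ ⟨t, ht, rfl⟩ hmem
        have := hR _ hmem
        have ht1 : (1 : ℝ) ≤ t := ht
        simp only [norm_mul, Complex.norm_real, Real.norm_eq_abs] at this
        rw [abs_of_nonneg (by linarith)] at this
        nlinarith
    obtain ⟨S, hS0, hS⟩ := (hb.subset hray).exists_pos_norm_le
    have h1 : (1 : ℝ) ≤ S / ‖z‖ + 1 := by have := div_pos hS0 hpos; linarith
    have := hS _ ⟨S / ‖z‖ + 1, h1, rfl⟩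
    simp only [norm_mul, Complex.norm_real, Real.norm_eq_abs] at this
    rw [abs_of_nonneg (by linarith), add_mul, div_mul_cancel₀ _ hpos.ne'] at this
    linarith

lemma omegaConvex_fill {Ω P : Set ℂ} : OmegaConvex Ω (fill Ω P) := by
  rintro C ⟨⟨z, hz, rfl⟩, hb⟩
  have hzP : z ∈ Pᶜ := fun h => hz (Or.inl h)
  have hsub : connectedComponentIn Pᶜ z ⊆ connectedComponentIn (fill Ω P)ᶜ z :=
    isPreconnected_connectedComponentIn.subset_connectedComponentIn
      (mem_connectedComponentIn hzP) (comp_subset_fill_compl hz)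
  have hns : ¬ connectedComponentIn Pᶜ z ⊆ Ω := fun h => hz (Or.inr ⟨hzP, hb.subset hsub, h⟩)
  obtain ⟨w, hw, hwΩ⟩ := Set.not_subset.1 hns
  exact ⟨w, hsub hw, hwΩ⟩

lemma isConnected_fill {Ω P : Set ℂ} (hP : IsClosed P) (hc : IsConnected P) :
    IsConnected (fill Ω P) := by
  obtain ⟨x₀, hx₀⟩ := hc.nonempty
  refine ⟨⟨x₀, Or.inl hx₀⟩, isPreconnected_of_forall x₀ ?_⟩
  intro z hz
  by_cases hzP : z ∈ P
  · exact ⟨P, Set.subset_union_left, hx₀, hzP, hc.isPreconnected⟩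
  set D := connectedComponentIn Pᶜ z with hD
  have hDsub : D ⊆ fill Ω P := comp_subset_fill hz
  have hzD : z ∈ D := mem_connectedComponentIn hzP
  have hDo : IsOpen D := hP.isOpen_compl.connectedComponentIn
  have hfr : (frontier D).Nonempty := by
    rw [Set.nonempty_iff_ne_empty]
    intro h
    rcases isClopen_iff.1 (isClopen_iff_frontier_eq_empty.2 h) with h' | h'
    · rw [h'] at hzD; exact hzD
    · exact (connectedComponentIn_subset Pᶜ z (show x₀ ∈ D by rw [h']; trivial)) hx₀
  obtain ⟨w, hw⟩ := hfr
  have hwc : w ∈ closure D := frontier_subset_closure hw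
  have hwP : w ∈ P := by
    by_contra hwP
    obtain ⟨y, hy1, hy2⟩ := mem_closure_iff.1 hwc _ hP.isOpen_compl.connectedComponentIn
      (mem_connectedComponentIn (show w ∈ Pᶜ from hwP))
    have : w ∈ D := by
      rw [hD, connectedComponentIn_eq hy2, ← connectedComponentIn_eq hy1]
      exact mem_connectedComponentIn hwP
    rw [hDo.frontier_eq] at hw
    exact hw.2 this
  refine ⟨P ∪ closure D, Set.union_subset Set.subset_union_left
    (closure_minimal hDsub (isClosed_fill hP)), Or.inl hx₀, Or.inr (subset_closure hzD), ?_⟩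
  exact IsPreconnected.union w hwP hwc hc.isPreconnected
    isPreconnected_connectedComponentIn.closure

lemma fill_GU (Ω : Set ℂ) (A : Set (ℤ × ℤ)) :
    fill Ω (GU A) = GU {q | OCell q ⊆ fill Ω (GU A)} := by
  have hcl : IsClosed (fill Ω (GU A)) := isClosed_fill (isClosed_GU A)
  have hne : ∀ q, (OCell q).Nonempty := by
    intro q
    rw [← closure_nonempty_iff, closure_OCell]
    exact ⟨⟨q.1, q.2⟩, by simp [mem_Cell]⟩
  apply Set.Subset.antisymm
  · intro z hz
    by_cases hzP : z ∈ GU A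
    · obtain ⟨q, hq, hzq⟩ := mem_GU.1 hzP
      refine mem_GU.2 ⟨q, ?_, hzq⟩
      intro w hw
      exact Or.inl (mem_GU.2 ⟨q, hq, closure_OCell q ▸ subset_closure hw⟩)
    · obtain ⟨q, hzq⟩ := exists_mem_Cell z
      refine mem_GU.2 ⟨q, ?_, hzq⟩
      have hqA : q ∉ A := fun h => hzP (mem_GU.2 ⟨q, h, hzq⟩)
      rw [← closure_OCell] at hzq
      obtain ⟨y, hy1, hy2⟩ := mem_closure_iff.1 hzq _
        (isClosed_GU A).isOpen_compl.connectedComponentIn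
        (mem_connectedComponentIn (show z ∈ (GU A)ᶜ from hzP))
      have := (OCell_preconn q).subset_connectedComponentIn hy2 (OCell_disj hqA)
      rw [← connectedComponentIn_eq hy1] at this
      exact this.trans (comp_subset_fill hz)
  · intro z hz
    obtain ⟨q, hq, hzq⟩ := mem_GU.1 hz
    rw [← closure_OCell] at hzq
    exact closure_minimal hq hcl hzq

lemma regular_fill_GU (Ω : Set ℂ) (A : Set (ℤ × ℤ)) (hA : Bornology.IsBounded (GU A)) :
    RegularCompact (fill Ω (GU A)) := by
  rw [fill_GU]
  apply regular_GU
  refine (finite_cells (isBounded_fill (Ω := Ω) hA)).subset ?_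
  intro q hq
  have : (OCell q).Nonempty := by
    rw [← closure_nonempty_iff, closure_OCell]
    exact ⟨⟨q.1, q.2⟩, by simp [mem_Cell]⟩
  obtain ⟨z, hz⟩ := this
  exact ⟨z, closure_OCell q ▸ subset_closure hz, hq hz⟩

lemma Cell_dist {q : ℤ × ℤ} {z w : ℂ} (hz : z ∈ Cell q) (hw : w ∈ Cell q) : dist z w ≤ 2 := by
  obtain ⟨⟨a, b⟩, ⟨c, d⟩⟩ := mem_Cell.1 hz
  obtain ⟨⟨a', b'⟩, ⟨c', d'⟩⟩ := mem_Cell.1 hw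
  rw [dist_eq_norm]
  refine (Complex.norm_le_abs_re_add_abs_im _).trans ?_
  have h1 : |(z - w).re| ≤ 1 := by rw [abs_le]; simp; constructor <;> linarith
  have h2 : |(z - w).im| ≤ 1 := by rw [abs_le]; simp; constructor <;> linarith
  linarith

structure Good (Ω L : Set ℂ) : Prop where
  cpt : IsCompact L
  sub : L ⊆ Ω
  reg : RegularCompact L
  conn : IsConnected L
  conv : OmegaConvex Ω L

lemma unit_good (Ω K : Set ℂ) (hK : IsCompact K) (hc : IsConnected K)
    (h : ∀ z ∈ K, ∀ w, dist z w ≤ 2 → w ∈ Ω) : ∃ L, Good Ω L ∧ K ⊆ L := by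
  set A := {q | (Cell q ∩ K).Nonempty} with hA
  have hKP : K ⊆ GU A := by
    intro z hz
    obtain ⟨q, hq⟩ := exists_mem_Cell z
    exact mem_GU.2 ⟨q, ⟨z, hq, hz⟩, hq⟩
  have hPΩ : GU A ⊆ Ω := by
    intro z hz
    obtain ⟨q, ⟨w, hw, hwK⟩, hzq⟩ := mem_GU.1 hz
    exact h w hwK z (Cell_dist hw hzq)
  have hPb : Bornology.IsBounded (GU A) := by
    refine (hK.isBounded.cthickening (δ := 2)).subset ?_
    intro z hz
    obtain ⟨q, ⟨w, hw, hwK⟩, hzq⟩ := mem_GU.1 hz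
    exact Metric.mem_cthickening_of_dist_le z w 2 K hwK (Cell_dist hzq hw)
  have hPc : IsConnected (GU A) := by
    obtain ⟨x₀, hx₀⟩ := hc.nonempty
    refine ⟨⟨x₀, hKP hx₀⟩, isPreconnected_of_forall x₀ ?_⟩
    intro z hz
    obtain ⟨q, ⟨w, hw, hwK⟩, hzq⟩ := mem_GU.1 hz
    refine ⟨K ∪ Cell q, Set.union_subset hKP fun y hy => mem_GU.2 ⟨q, ⟨w, hw, hwK⟩, hy⟩,
      Or.inl hx₀, Or.inr hzq, IsPreconnected.union w hwK hw hc.isPreconnected (Cell_preconn q)⟩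
  exact ⟨fill Ω (GU A), ⟨Metric.isCompact_of_isClosed_isBounded (isClosed_fill (isClosed_GU A))
    (isBounded_fill hPb), fill_subset hPΩ, regular_fill_GU Ω A hPb,
    isConnected_fill (isClosed_GU A) hPc, omegaConvex_fill⟩, hKP.trans Set.subset_union_left⟩

/-! ### Scaling -/

lemma regular_image (h : ℂ ≃ₜ ℂ) {L : Set ℂ} (hL : RegularCompact L) : RegularCompact (h '' L) := by
  obtain ⟨𝒞, h1, h2⟩ := hL
  refine ⟨(fun C => h '' C) '' 𝒞, ?_, ?_⟩
  · rintro _ ⟨C, hC, rfl⟩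
    obtain ⟨γ, a, b, rfl⟩ := h1 C hC
    exact ⟨h ∘ γ, h.continuous.comp_continuousOn a, h.injective.comp_injOn b,
      by simp only [Set.image_comp]⟩
  · rw [← h.image_frontier, h2, Set.sUnion_eq_biUnion, Set.image_iUnion₂, Set.sUnion_image]

lemma convex_image (h : ℂ ≃ₜ ℂ) (hb : ∀ S : Set ℂ, Bornology.IsBounded S →
    Bornology.IsBounded (h.symm '' S)) {Ω L : Set ℂ} (hL : OmegaConvex (h ⁻¹' Ω) L) :
    OmegaConvex Ω (h '' L) := by
  rintro C ⟨⟨z, hz, rfl⟩, hC⟩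
  have e : h.symm '' (connectedComponentIn (h '' L)ᶜ z) = connectedComponentIn Lᶜ (h.symm z) := by
    rw [h.symm.image_connectedComponentIn hz, Set.image_compl_eq h.symm.bijective]
    congr 2
    ext; simp
  obtain ⟨w, hw, hwΩ⟩ := hL (connectedComponentIn Lᶜ (h.symm z)) ⟨⟨h.symm z, by
    intro h'; exact hz ⟨_, h', by simp⟩, rfl⟩, e ▸ hb _ hC⟩
  rw [← e] at hw
  obtain ⟨y, hy, rfl⟩ := hw
  exact ⟨y, hy, by simpa using hwΩ⟩

lemma exists_good_conn (Ω K : Set ℂ) (hΩ : IsOpen Ω) (hK : IsCompact K) (hc : IsConnected K)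
    (hs : K ⊆ Ω) : ∃ L, Good Ω L ∧ K ⊆ L := by
  obtain ⟨δ, hδ, hth⟩ := hK.exists_cthickening_subset_open hΩ hs
  have hd : ((δ / 2 : ℝ) : ℂ) ≠ 0 := by exact_mod_cast (half_pos hδ).ne'
  set h : ℂ ≃ₜ ℂ := Homeomorph.mulLeft₀ ((δ / 2 : ℝ) : ℂ) hd with hh
  have happ : ∀ z, h z = ((δ / 2 : ℝ) : ℂ) * z := fun z => rfl
  obtain ⟨L, hL, hKL⟩ := unit_good (h ⁻¹' Ω) (h.symm '' K) (hK.image h.symm.continuous)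
    (hc.image _ h.symm.continuous.continuousOn) (by
      rintro _ ⟨z, hz, rfl⟩ w hw
      apply hth
      refine Metric.mem_cthickening_of_dist_le _ z δ K hz ?_
      have : dist (h w) (h (h.symm z)) ≤ δ := by
        rw [happ, happ, dist_eq_norm, ← mul_sub, norm_mul, Complex.norm_real, Real.norm_eq_abs,
          abs_of_pos (half_pos hδ), ← dist_eq_norm, dist_comm]
        nlinarith
      simpa using this)
  refine ⟨h '' L, ⟨hL.cpt.image h.continuous, ?_, regular_image h hL.reg,
    hL.conn.image _ h.continuous.continuousOn, convex_image h ?_ hL.conv⟩, ?_⟩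
  · exact Set.image_subset_iff.2 hL.sub
  · intro S hS
    obtain ⟨R, hR⟩ := hS.exists_norm_le
    refine (Metric.isBounded_closedBall (x := (0 : ℂ)) (r := (δ / 2)⁻¹ * R)).subset ?_
    rintro _ ⟨z, hz, rfl⟩
    have : h.symm z = (((δ / 2 : ℝ) : ℂ))⁻¹ * z := rfl
    rw [mem_closedBall_zero_iff, this, norm_mul, norm_inv, Complex.norm_real, Real.norm_eq_abs,
      abs_of_pos (half_pos hδ)]
    exact mul_le_mul_of_nonneg_left (hR z hz) (inv_nonneg.2 (half_pos hδ).le)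
  · intro z hz
    exact ⟨h.symm z, hKL ⟨z, hz, rfl⟩, by simp⟩

lemma exists_conn (Ω K : Set ℂ) (hΩ : IsOpen Ω) (hc : IsConnected Ω) (hK : IsCompact K)
    (hs : K ⊆ Ω) : ∃ L, IsCompact L ∧ IsConnected L ∧ L ⊆ Ω ∧ K ⊆ L := by
  obtain ⟨x₀, hx₀⟩ := hc.nonempty
  have hpc := (hΩ.isConnected_iff_isPathConnected).1 hc
  suffices H : ∃ L, IsCompact L ∧ IsPreconnected L ∧ L ⊆ Ω ∧ x₀ ∈ L ∧ K ⊆ L by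
    obtain ⟨L, h1, h2, h3, h4, h5⟩ := H
    exact ⟨L, h1, ⟨⟨x₀, h4⟩, h2⟩, h3, h5⟩
  refine hK.induction_on (p := fun K => ∃ L, IsCompact L ∧ IsPreconnected L ∧ L ⊆ Ω ∧ x₀ ∈ L ∧ K ⊆ L)
    ?_ ?_ ?_ ?_
  · exact ⟨{x₀}, isCompact_singleton, isPreconnected_singleton, by simpa using hx₀, rfl, by simp⟩
  · rintro s t hst ⟨L, h1, h2, h3, h4, h5⟩
    exact ⟨L, h1, h2, h3, h4, hst.trans h5⟩
  · rintro s t ⟨L, h1, h2, h3, h4, h5⟩ ⟨L', h1', h2', h3', h4', h5'⟩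
    exact ⟨L ∪ L', h1.union h1', h2.union x₀ h4 h4' h2', Set.union_subset h3 h3', Or.inl h4,
      Set.union_subset_union h5 h5'⟩
  · intro x hx
    obtain ⟨r, hr, hb⟩ := Metric.nhds_basis_closedBall.mem_iff.1 (hΩ.mem_nhds (hs hx))
    obtain ⟨γ, hγ⟩ := hpc.joinedIn x₀ hx₀ x (hs hx)
    refine ⟨closedBall x r, mem_nhdsWithin_of_mem_nhds (closedBall_mem_nhds x hr),
      Set.range γ ∪ closedBall x r, (isCompact_range γ.continuous).union
        (isCompact_closedBall x r), ?_, ?_, Or.inl ⟨0, γ.source⟩, Set.subset_union_right⟩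
    · exact IsPreconnected.union x ⟨1, γ.target⟩ (mem_closedBall_self hr.le)
        (isPreconnected_range γ.continuous) (convex_closedBall x r).isPreconnected
    · refine Set.union_subset ?_ hb
      rintro _ ⟨t, rfl⟩; exact hγ t

lemma exists_good (Ω K : Set ℂ) (hΩ : IsOpen Ω) (hc : IsConnected Ω) (hK : IsCompact K)
    (hs : K ⊆ Ω) : ∃ L, Good Ω L ∧ K ⊆ interior L := by
  obtain ⟨K₁, h1, h2, h3⟩ := exists_compact_between hK hΩ hs
  obtain ⟨K₂, a1, a2, a3, a4⟩ := exists_conn Ω K₁ hΩ hc h1 h3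
  obtain ⟨L, hL, hL'⟩ := exists_good_conn Ω K₂ hΩ a1 a2 a3
  exact ⟨L, hL, h2.trans (interior_mono (a4.trans hL'))⟩

/-! ### Holes -/

lemma noHole_of_convex {Ω L : Set ℂ} (hs : L ⊆ Ω) (hL : OmegaConvex Ω L) (h : HasNoHole Ω) :
    HasNoHole L := by
  rintro ⟨C, hC⟩
  obtain ⟨w, hw, hwΩ⟩ := hL C hC
  obtain ⟨⟨z, hz, rfl⟩, hb⟩ := hC
  apply h
  refine ⟨connectedComponentIn Ωᶜ w, ⟨w, hwΩ, rfl⟩, hb.subset ?_⟩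
  rw [connectedComponentIn_eq hw]
  exact connectedComponentIn_mono _ (Set.compl_subset_compl.2 hs)

lemma exists_witness {Ω : Set ℂ} (hΩ : IsOpen Ω) (h : ¬ HasNoHole Ω) :
    ∃ K, IsCompact K ∧ K ⊆ Ω ∧ ∀ L, K ⊆ L → L ⊆ Ω → ∃ C, IsHole L C := by
  obtain ⟨D, ⟨x, hx, rfl⟩, hb⟩ := not_not.1 h
  obtain ⟨R, hR⟩ := hb.exists_norm_le
  set X : Set ℂ := Ωᶜ ∩ closedBall 0 (R + 1) with hX
  have hXc : IsCompact X := (isCompact_closedBall 0 (R + 1)).inter_left hΩ.isClosed_compl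
  haveI : CompactSpace X := isCompact_iff_compactSpace.1 hXc
  have hxD : x ∈ connectedComponentIn Ωᶜ x := mem_connectedComponentIn hx
  have hxX : x ∈ X := ⟨hx, by have := hR x hxD; simp; linarith⟩
  -- the sphere
  set S : Set X := {y | ‖(y : ℂ)‖ = R + 1} with hS
  have hSc : IsCompact S := (isClosed_eq (by fun_prop) continuous_const).isCompact
  have hdis : ∀ y ∈ S, y ∉ connectedComponent (⟨x, hxX⟩ : X) := by
    intro y hy hyc
    have h1 : (Subtype.val '' connectedComponent (⟨x, hxX⟩ : X)) ⊆ connectedComponentIn Ωᶜ x := by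
      apply IsPreconnected.subset_connectedComponentIn
      · exact isPreconnected_connectedComponent.image _ continuous_subtype_val.continuousOn
      · exact ⟨_, mem_connectedComponent, rfl⟩
      · rintro _ ⟨w, _, rfl⟩; exact w.2.1
    have := hR _ (h1 ⟨y, hyc, rfl⟩)
    have h2 : ‖(y : ℂ)‖ = R + 1 := hy
    linarith
  obtain ⟨Z, hZ, hxZ, hZS⟩ : ∃ Z : Set X, IsClopen Z ∧ (⟨x, hxX⟩ : X) ∈ Z ∧ Disjoint Z S := by
    have hI := connectedComponent_eq_iInter_isClopen (⟨x, hxX⟩ : X)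
    refine hSc.induction_on (p := fun S => ∃ Z : Set X, IsClopen Z ∧ (⟨x, hxX⟩ : X) ∈ Z ∧ Disjoint Z S)
      ?_ ?_ ?_ ?_
    · exact ⟨Set.univ, isClopen_univ, trivial, by simp⟩
    · rintro s t hst ⟨Z, h1, h2, h3⟩
      exact ⟨Z, h1, h2, h3.mono_right hst⟩
    · rintro s t ⟨Z, h1, h2, h3⟩ ⟨Z', h1', h2', h3'⟩
      exact ⟨Z ∩ Z', h1.inter h1', ⟨h2, h2'⟩, Set.disjoint_union_right.2
        ⟨h3.mono_left Set.inter_subset_left, h3'.mono_left Set.inter_subset_right⟩⟩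
    · intro y hy
      have := hdis y hy
      rw [hI, Set.mem_iInter] at this
      push Not at this
      obtain ⟨⟨Z, hZ, hxZ⟩, hyZ⟩ := this
      exact ⟨Zᶜ, mem_nhdsWithin_of_mem_nhds (hZ.compl.isOpen.mem_nhds hyZ), Z, hZ, hxZ,
        disjoint_compl_right⟩
  -- E compact, F closed
  set E : Set ℂ := Subtype.val '' Z with hE
  have hEc : IsCompact E := hZ.isClosed.isCompact.image continuous_subtype_val
  set F : Set ℂ := Subtype.val '' Zᶜ ∪ (Ωᶜ ∩ {z | R + 1 ≤ ‖z‖}) with hF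
  have hFc : IsClosed F :=
    (hZ.compl.isClosed.isCompact.image continuous_subtype_val).isClosed.union
      (hΩ.isClosed_compl.inter (isClosed_le continuous_const continuous_norm))
  have hEF : E ⊆ Fᶜ := by
    rintro _ ⟨y, hy, rfl⟩ (⟨w, hw, hwy⟩ | ⟨_, hn⟩)
    · exact hw (Subtype.ext hwy ▸ hy)
    · have h1 : ‖(y : ℂ)‖ ≤ R + 1 := by simpa using y.2.2
      exact Set.disjoint_left.1 hZS hy (le_antisymm h1 hn)
  have hcov : Ωᶜ ⊆ E ∪ F := by
    intro z hz
    by_cases hn : R + 1 ≤ ‖z‖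
    · exact Or.inr (Or.inr ⟨hz, hn⟩)
    · have hzX : z ∈ X := ⟨hz, by simp; linarith⟩
      by_cases hzZ : (⟨z, hzX⟩ : X) ∈ Z
      · exact Or.inl ⟨_, hzZ, rfl⟩
      · exact Or.inr (Or.inl ⟨_, hzZ, rfl⟩)
  obtain ⟨B, hB, hEB, hBF⟩ := exists_compact_between hEc hFc.isOpen_compl hEF
  have hxB : x ∈ interior B := hEB ⟨_, hxZ, rfl⟩
  refine ⟨frontier B, hB.of_isClosed_subset isClosed_frontier hB.isClosed.frontier_subset, ?_, ?_⟩
  · intro z hz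
    by_contra hzΩ
    rcases hcov hzΩ with hzE | hzF
    · exact hz.2 (hEB hzE)
    · exact hBF (hB.isClosed.frontier_subset hz) hzF
  · intro L hKL hLΩ
    have hxL : x ∈ Lᶜ := fun h' => hx (hLΩ h')
    refine ⟨connectedComponentIn Lᶜ x, ⟨x, hxL, rfl⟩, hB.isBounded.subset ?_⟩
    have hsub : connectedComponentIn Lᶜ x ⊆ interior B := by
      apply isPreconnected_connectedComponentIn.subset_left_of_subset_union isOpen_interior
        hB.isClosed.isOpen_compl
      · exact Set.disjoint_left.2 fun z h1 h2 => h2 (interior_subset h1)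
      · intro z hz
        have hzL : z ∉ frontier B := fun h' => connectedComponentIn_subset _ _ hz (hKL h')
        by_cases hzB : z ∈ B
        · left
          by_contra hni
          exact hzL ⟨subset_closure hzB, hni⟩
        · exact Or.inr hzB
      · exact ⟨x, mem_connectedComponentIn hxL, hxB⟩
    exact hsub.trans interior_subset

lemma exists_W {Ω : Set ℂ} (hΩ : IsOpen Ω) :
    ∃ K, IsCompact K ∧ K ⊆ Ω ∧ ∀ L, K ⊆ L → L ⊆ Ω → ¬ HasNoHole Ω → ∃ C, IsHole L C := by
  by_cases h : HasNoHole Ω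
  · exact ⟨∅, isCompact_empty, Set.empty_subset _, fun _ _ _ h' => absurd h h'⟩
  · obtain ⟨K, h1, h2, h3⟩ := exists_witness hΩ h
    exact ⟨K, h1, h2, fun L a b _ => h3 L a b⟩

lemma exists_seq {Ω : Set ℂ} (hΩ : IsOpen Ω) : ∃ K : ℕ → Set ℂ, (∀ n, IsCompact (K n)) ∧
    (∀ n, K n ⊆ Ω) ∧ ∀ S, S ⊆ Ω → IsCompact S → ∃ n, S ⊆ K n := by
  haveI : LocallyCompactSpace Ω := hΩ.locallyCompactSpace
  let E : CompactExhaustion Ω := default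
  refine ⟨fun n => Subtype.val '' E n, fun n => (E.isCompact n).image continuous_subtype_val,
    fun n => by simp, ?_⟩
  intro S hS hSc
  have hc : IsCompact (Subtype.val ⁻¹' S : Set Ω) := by
    rw [Subtype.isCompact_iff]
    rwa [Subtype.image_preimage_coe, Set.inter_eq_right.2 hS]
  obtain ⟨n, hn⟩ := E.exists_superset_of_isCompact hc
  exact ⟨n, fun z hz => ⟨⟨z, hS hz⟩, hn hz, rfl⟩⟩

end Ex

/-- Lemma `exhaustion-convenient`: every domain admits an exhaustion by
compact sets in `M(Ω)`. -/
theorem exists_exhaustion_memM (Ω : Set ℂ) (hΩ : IsOpen Ω) (hΩconn : IsConnected Ω) :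
    ∃ L : ℕ → Set ℂ,
      (∀ n, MemM Ω (L n)) ∧
      (∀ n, L n ⊆ interior (L (n + 1))) ∧
      ∀ K : Set ℂ, K ⊆ Ω → IsCompact K → ∃ n, K ⊆ L n := by
  obtain ⟨W, hW, hWΩ, hWL⟩ := Ex.exists_W hΩ
  obtain ⟨K, hK, hKΩ, hKS⟩ := Ex.exists_seq hΩ
  have step : ∀ S : {S : Set ℂ // IsCompact S ∧ S ⊆ Ω}, ∃ L : {S : Set ℂ // IsCompact S ∧ S ⊆ Ω},
      Ex.Good Ω L ∧ (S : Set ℂ) ⊆ interior L := by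
    rintro ⟨S, h1, h2⟩
    obtain ⟨L, hL, hSL⟩ := Ex.exists_good Ω S hΩ hΩconn h1 h2
    exact ⟨⟨L, hL.cpt, hL.sub⟩, hL, hSL⟩
  choose f hf hfS using step
  let L : ℕ → {S : Set ℂ // IsCompact S ∧ S ⊆ Ω} := fun n =>
    Nat.rec (f ⟨W ∪ K 0, hW.union (hK 0), Set.union_subset hWΩ (hKΩ 0)⟩)
      (fun n S => f ⟨S.1 ∪ K (n + 1), S.2.1.union (hK _), Set.union_subset S.2.2 (hKΩ _)⟩) n
  have hL0 : L 0 = f ⟨W ∪ K 0, hW.union (hK 0), Set.union_subset hWΩ (hKΩ 0)⟩ := rfl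
  have hLs : ∀ n, L (n + 1) = f ⟨(L n).1 ∪ K (n + 1), (L n).2.1.union (hK _),
    Set.union_subset (L n).2.2 (hKΩ _)⟩ := fun n => rfl
  have hgood : ∀ n, Ex.Good Ω (L n).1 := by
    intro n
    cases n with
    | zero => rw [hL0]; exact hf _
    | succ n => rw [hLs]; exact hf _
  have hint : ∀ n, (L n).1 ⊆ interior (L (n + 1)).1 := by
    intro n
    rw [hLs]
    exact Set.subset_union_left.trans (hfS ⟨(L n).1 ∪ K (n + 1), _⟩)
  have hKL : ∀ n, K n ⊆ (L n).1 := by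
    intro n
    cases n with
    | zero => rw [hL0]; exact Set.subset_union_right.trans ((hfS ⟨W ∪ K 0, _⟩).trans interior_subset)
    | succ n =>
      rw [hLs]
      exact Set.subset_union_right.trans ((hfS ⟨(L n).1 ∪ K (n + 1), _⟩).trans interior_subset)
  have hWn : ∀ n, W ⊆ (L n).1 := by
    intro n
    induction n with
    | zero => rw [hL0]; exact Set.subset_union_left.trans ((hfS ⟨W ∪ K 0, _⟩).trans interior_subset)
    | succ n ih => exact ih.trans ((hint n).trans interior_subset)
  refine ⟨fun n => (L n).1, fun n => ?_, hint, fun S hS hSc => ?_⟩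
  · have g := hgood n
    exact ⟨g.conn.nonempty, g.cpt, g.sub, g.reg, g.conn,
      ⟨Ex.noHole_of_convex g.sub g.conv, hWL _ (hWn n) g.sub⟩, g.conv⟩
  · obtain ⟨n, hn⟩ := hKS S hS hSc
    exact ⟨n, hn.trans (hKL n)⟩
end

section
/- Let Ω ⊆ ℂ be a domain and let L and L' be two disjoint connected Ω-convex compact subsets of Ω. Then L ∪ L' is Ω-convex if and only if one of the following holds: (1) L ⊆ ℂ ∖ L̂' and L' ⊆ ℂ ∖ L̂; (2) there exists a hole O of L such that L' ⊆ O and O ∖ L̂' contains a hole of Ω; (3) there exists a hole O' of L' such that L ⊆ O' and O' ∖ L̂ contains a hole of Ω. -/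
open Set Metric Bornology Filter

lemma aux_unicoherent {A B L L' : Set ℂ} (hA : IsClosed A) (hB : IsClosed B)
    (hAc : IsPreconnected A) (hBc : IsPreconnected B) (hAB : A ∪ B = univ)
    (hL : IsClosed L) (hL' : IsClosed L') (hd : Disjoint L L') (hi : A ∩ B = L ∪ L')
    (h1 : L.Nonempty) (h2 : L'.Nonempty) : False := by
  obtain ⟨u, hu0, hu1, -⟩ := exists_continuous_zero_one_of_isClosed hL hL' hd
  obtain ⟨a, ha⟩ := h1
  obtain ⟨b, hb⟩ := h2
  have haA : a ∈ A ∩ B := hi ▸ Or.inl ha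
  have hbA : b ∈ A ∩ B := hi ▸ Or.inr hb
  classical
  let f : ℂ → Circle := fun z => if z ∈ A then Circle.exp (Real.pi * u z)
    else Circle.exp (-(Real.pi * u z))
  have hfA : ∀ z ∈ A, f z = Circle.exp (Real.pi * u z) := fun z hz => if_pos hz
  have hfB : ∀ z ∈ B, f z = Circle.exp (-(Real.pi * u z)) := by
    intro z hz
    by_cases hzA : z ∈ A
    · rw [hfA z hzA]
      have : z ∈ L ∪ L' := hi ▸ ⟨hzA, hz⟩
      rcases this with h | h
      · have : u z = 0 := hu0 h
        simp [this]
      · have : u z = 1 := hu1 h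
        rw [this, Circle.exp_eq_exp]
        exact ⟨1, by push_cast; ring⟩
    · exact if_neg hzA
  have hc : Continuous f := by
    rw [← continuousOn_univ, ← hAB]
    apply ContinuousOn.union_of_isClosed _ _ hA hB
    · exact (Continuous.continuousOn (by fun_prop)).congr hfA
    · exact (Continuous.continuousOn (by fun_prop)).congr hfB
  have hua : u a = 0 := hu0 ha
  have hub : u b = 1 := hu1 hb
  obtain ⟨F, ⟨hF0, hF⟩, -⟩ := Circle.isCoveringMap_exp.existsUnique_continuousMap_lifts
    (⟨f, hc⟩ : C(ℂ, Circle)) a 0 (by simp [hfA a haA.1, hua])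
  have hF' : ∀ z, Circle.exp (F z) = f z := fun z => congrFun hF z
  have e1 : EqOn F (fun z => Real.pi * u z) A :=
    Circle.isCoveringMap_exp.eqOn_of_comp_eqOn hAc (by fun_prop) (by fun_prop)
      (fun z hz => by simp [hF', hfA z hz]) haA.1 (by simp [hF0, hua])
  have e2 : EqOn F (fun z => -(Real.pi * u z)) B :=
    Circle.isCoveringMap_exp.eqOn_of_comp_eqOn hBc (by fun_prop) (by fun_prop)
      (fun z hz => by simp only [Function.comp]; rw [hF', hfB z hz]) haA.2 (by simp [hF0, hua])
  have := (e1 hbA.1).symm.trans (e2 hbA.2)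
  simp only [hub] at this
  linarith [Real.pi_pos]

lemma aux_closure {K : Set ℂ} (hK : IsClosed K) (z : ℂ) :
    closure (connectedComponentIn Kᶜ z) ⊆ connectedComponentIn Kᶜ z ∪ K := by
  intro x hx
  by_cases hxK : x ∈ K
  · exact Or.inr hxK
  left
  have ho : IsOpen (connectedComponentIn Kᶜ x) := hK.isOpen_compl.connectedComponentIn
  obtain ⟨y, hy1, hy2⟩ := mem_closure_iff.1 hx _ ho (mem_connectedComponentIn hxK)
  rw [connectedComponentIn_eq hy2, ← connectedComponentIn_eq hy1]
  exact mem_connectedComponentIn hxK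

lemma aux_comp_eq {L L' : Set ℂ} (hL : IsClosed L) (hL' : IsClosed L') {z : ℂ}
    (hz : z ∈ (L ∪ L')ᶜ) (h : closure (connectedComponentIn (L ∪ L')ᶜ z) ∩ L' = ∅) :
    connectedComponentIn (L ∪ L')ᶜ z = connectedComponentIn Lᶜ z := by
  have hz' : z ∈ Lᶜ := fun hh => hz (Or.inl hh)
  apply Subset.antisymm
  · exact connectedComponentIn_mono _ (compl_subset_compl.2 subset_union_left)
  · apply isPreconnected_connectedComponentIn.subset_of_closure_inter_subset
      (hL.union hL').isOpen_compl.connectedComponentIn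
    · exact ⟨z, mem_connectedComponentIn hz', mem_connectedComponentIn hz⟩
    · rintro x ⟨hx1, hx2⟩
      rcases aux_closure (hL.union hL') z hx1 with hh | hh | hh
      · exact hh
      · exact absurd hh (connectedComponentIn_subset _ _ hx2)
      · exact absurd (h ▸ ⟨hx1, hh⟩ : x ∈ (∅ : Set ℂ)) (notMem_empty x)

lemma aux_touch {K : Set ℂ} (hK : IsClosed K) (hne : K.Nonempty) {z : ℂ} (hz : z ∈ Kᶜ) :
    (closure (connectedComponentIn Kᶜ z) ∩ K).Nonempty := by
  by_contra h
  rw [not_nonempty_iff_eq_empty] at h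
  have h1 : connectedComponentIn (∅ ∪ K)ᶜ z = connectedComponentIn ∅ᶜ z :=
    aux_comp_eq isClosed_empty hK (by simpa using hz) (by simpa using h)
  simp only [empty_union, compl_empty, connectedComponentIn_univ,
    PreconnectedSpace.connectedComponent_eq_univ] at h1
  obtain ⟨x, hx⟩ := hne
  exact connectedComponentIn_subset Kᶜ z (h1 ▸ mem_univ x) hx

lemma aux_compl_conn {K M : Set ℂ} (hK : IsClosed K) (hne : K.Nonempty) (hKM : K ⊆ M)
    (hM : IsPreconnected M) {z : ℂ} (hMW : M ⊆ (connectedComponentIn Kᶜ z)ᶜ) :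
    IsPreconnected (connectedComponentIn Kᶜ z)ᶜ := by
  obtain ⟨a, ha⟩ := hne
  apply isPreconnected_of_forall a
  intro y hy
  by_cases hyK : y ∈ K
  · exact ⟨M, hMW, hKM ha, hKM hyK, hM⟩
  obtain ⟨x, hx1, hx2⟩ := aux_touch hK ⟨a, ha⟩ hyK
  refine ⟨M ∪ closure (connectedComponentIn Kᶜ y), union_subset hMW ?_, Or.inl (hKM ha),
    Or.inr (subset_closure (mem_connectedComponentIn hyK)),
    hM.union x (hKM hx2) hx1 isPreconnected_connectedComponentIn.closure⟩
  intro t ht htz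
  rcases aux_closure hK y ht with h | h
  · apply hy
    rw [connectedComponentIn_eq htz, ← connectedComponentIn_eq h]
    exact mem_connectedComponentIn hyK
  · exact connectedComponentIn_subset _ _ htz h

lemma aux_unique {L L' : Set ℂ} (hL : IsClosed L) (hL' : IsClosed L')
    (hLc : IsConnected L) (hLc' : IsConnected L') (hd : Disjoint L L') {z w : ℂ}
    (hw : w ∈ (L ∪ L')ᶜ)
    (hz1 : (closure (connectedComponentIn (L ∪ L')ᶜ z) ∩ L).Nonempty)
    (hz2 : (closure (connectedComponentIn (L ∪ L')ᶜ z) ∩ L').Nonempty)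
    (hw1 : (closure (connectedComponentIn (L ∪ L')ᶜ w) ∩ L).Nonempty)
    (hw2 : (closure (connectedComponentIn (L ∪ L')ᶜ w) ∩ L').Nonempty) :
    w ∈ connectedComponentIn (L ∪ L')ᶜ z := by
  by_contra hwz
  have hK : IsClosed (L ∪ L') := hL.union hL'
  have key : ∀ v, (closure (connectedComponentIn (L ∪ L')ᶜ v) ∩ L).Nonempty →
      (closure (connectedComponentIn (L ∪ L')ᶜ v) ∩ L').Nonempty →
      IsPreconnected (L ∪ closure (connectedComponentIn (L ∪ L')ᶜ v) ∪ L') := by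
    rintro v ⟨x, hx1, hx2⟩ ⟨y, hy1, hy2⟩
    exact (hLc.isPreconnected.union x hx2 hx1 isPreconnected_connectedComponentIn.closure).union
      y (Or.inr hy1) hy2 hLc'.isPreconnected
  have hB : IsPreconnected (connectedComponentIn (L ∪ L')ᶜ z)ᶜ := by
    apply aux_compl_conn hK (hLc.nonempty.inl) _ (key w hw1 hw2)
    · rintro t ((ht | ht) | ht) htz
      · exact connectedComponentIn_subset _ _ htz (Or.inl ht)
      · rcases aux_closure hK w ht with h | h
        · apply hwz
          rw [connectedComponentIn_eq htz, ← connectedComponentIn_eq h]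
          exact mem_connectedComponentIn hw
        · exact connectedComponentIn_subset _ _ htz h
      · exact connectedComponentIn_subset _ _ htz (Or.inr ht)
    · rintro t (ht | ht)
      · exact Or.inl (Or.inl ht)
      · exact Or.inr ht
  refine aux_unicoherent ((hL.union isClosed_closure).union hL')
    hK.isOpen_compl.connectedComponentIn.isClosed_compl (key z hz1 hz2) hB ?_ hL hL' hd ?_
    hLc.nonempty hLc'.nonempty
  · rw [eq_univ_iff_forall]
    intro x
    by_cases hx : x ∈ connectedComponentIn (L ∪ L')ᶜ z
    · exact Or.inl (Or.inl (Or.inr (subset_closure hx)))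
    · exact Or.inr hx
  · ext x
    constructor
    · rintro ⟨(h | h) | h, h'⟩
      · exact Or.inl h
      · exact (aux_closure hK z h).resolve_left h'
      · exact Or.inr h
    · intro h
      refine ⟨?_, fun hx => connectedComponentIn_subset _ _ hx h⟩
      rcases h with h | h
      · exact Or.inl (Or.inl h)
      · exact Or.inr h

lemma aux_ext_conn {r : ℝ} (hr : 0 < r) : IsPreconnected {z : ℂ | r < ‖z‖} := by
  have : {z : ℂ | r < ‖z‖} = Complex.exp '' {z : ℂ | Real.log r < z.re} := by
    ext z
    constructor
    · intro hz
      have hz0 : 0 < ‖z‖ := hr.trans hz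
      refine ⟨Complex.log z, ?_, Complex.exp_log (norm_pos_iff.1 hz0)⟩
      simp only [mem_setOf_eq, Complex.log_re]
      exact Real.log_lt_log hr hz
    · rintro ⟨w, hw, rfl⟩
      simp only [mem_setOf_eq, Complex.norm_exp] at *
      exact (Real.log_lt_iff_lt_exp hr).1 hw
  rw [this]
  exact (convex_halfSpace_re_gt _).isPreconnected.image _ Complex.continuous_exp.continuousOn

lemma aux_unbdd {K : Set ℂ} {r : ℝ} (hr : 0 < r) (hK : ∀ x ∈ K, ‖x‖ ≤ r) {z : ℂ}
    (hz : ¬ Bornology.IsBounded (connectedComponentIn Kᶜ z)) :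
    {x : ℂ | r < ‖x‖} ⊆ connectedComponentIn Kᶜ z := by
  have : ∃ y ∈ connectedComponentIn Kᶜ z, r < ‖y‖ := by
    by_contra! h
    exact hz (isBounded_iff_forall_norm_le.2 ⟨r, h⟩)
  obtain ⟨y, hy, hyr⟩ := this
  rw [connectedComponentIn_eq hy]
  exact (aux_ext_conn hr).subset_connectedComponentIn hyr
    (fun x hx hxK => absurd (hK x hxK) (not_le.2 hx))

lemma aux_ext_unbdd (r : ℝ) : ¬ Bornology.IsBounded {z : ℂ | r < ‖z‖} := by
  intro h
  obtain ⟨R, hR⟩ := isBounded_iff_forall_norm_le.1 h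
  have h1 : ‖((|r| + |R| + 1 : ℝ) : ℂ)‖ = |r| + |R| + 1 := by
    rw [Complex.norm_real, Real.norm_of_nonneg (by positivity)]
  have := hR ((|r| + |R| + 1 : ℝ) : ℂ) (by
    rw [mem_setOf_eq, h1]; linarith [le_abs_self r, abs_nonneg R])
  rw [h1] at this
  linarith [le_abs_self R, abs_nonneg r]

lemma aux_forward {Ω L L' : Set ℂ} (hL : IsCompact L) (hL' : IsCompact L')
    (hLΩ : L ⊆ Ω) (hL'Ω : L' ⊆ Ω)
    (hLconn : IsConnected L) (hL'conn : IsConnected L') (hd : Disjoint L L')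
    (h : OmegaConvex Ω (L ∪ L')) (hn : ¬ L' ⊆ (polyHull L)ᶜ) :
    ∃ O : Set ℂ, IsHole L O ∧ L' ⊆ O ∧ ∃ C : Set ℂ, IsHole Ω C ∧ C ⊆ O \ polyHull L' := by
  obtain ⟨q, hq, hqL⟩ := not_subset.1 hn
  rw [notMem_compl_iff] at hqL
  have hLL : L' ⊆ Lᶜ := fun x hx hx' => hd.le_bot ⟨hx', hx⟩
  have hLL' : L ⊆ L'ᶜ := fun x hx hx' => hd.le_bot ⟨hx, hx'⟩
  rcases hqL with hqL | ⟨-, hb⟩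
  · exact absurd hqL (hLL hq)
  have hL'O : L' ⊆ connectedComponentIn Lᶜ q :=
    hL'conn.isPreconnected.subset_connectedComponentIn hq hLL
  refine ⟨_, ⟨⟨q, hLL hq, rfl⟩, hb⟩, hL'O, ?_⟩
  obtain ⟨a, ha⟩ := hLconn.nonempty
  have hOc : (connectedComponentIn Lᶜ q)ᶜ ⊆ connectedComponentIn L'ᶜ a := by
    apply IsPreconnected.subset_connectedComponentIn
    · exact aux_compl_conn hL.isClosed ⟨a, ha⟩ Subset.rfl hLconn.isPreconnected
        (fun x hx hx' => connectedComponentIn_subset _ _ hx' hx)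
    · exact fun hx' => connectedComponentIn_subset _ _ hx' ha
    · exact compl_subset_compl.2 hL'O
  have hub : ¬ Bornology.IsBounded (connectedComponentIn L'ᶜ a) := by
    intro hb'
    have h2 : Bornology.IsBounded (univ : Set ℂ) := by
      rw [← union_compl_self (connectedComponentIn Lᶜ q)]
      exact hb.union (hb'.subset hOc)
    exact aux_ext_unbdd 0 (h2.subset (subset_univ _))
  obtain ⟨x, hx1, hx2⟩ := aux_touch hL.isClosed ⟨a, ha⟩ (hLL hq)
  have hxU : x ∈ connectedComponentIn L'ᶜ a :=
    hOc (fun hx' => connectedComponentIn_subset _ _ hx' hx2)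
  obtain ⟨w, hwU, hwO⟩ := mem_closure_iff.1 hx1 _
    hL'.isClosed.isOpen_compl.connectedComponentIn hxU
  have hw : w ∈ (L ∪ L')ᶜ := by
    rintro (hh | hh)
    · exact connectedComponentIn_subset _ _ hwO hh
    · exact connectedComponentIn_subset _ _ hwU hh
  have hWO : connectedComponentIn (L ∪ L')ᶜ w ⊆ connectedComponentIn Lᶜ q := by
    rw [connectedComponentIn_eq hwO]
    exact connectedComponentIn_mono _ (compl_subset_compl.2 subset_union_left)
  have hWU : connectedComponentIn (L ∪ L')ᶜ w ⊆ connectedComponentIn L'ᶜ a := by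
    rw [connectedComponentIn_eq hwU]
    exact connectedComponentIn_mono _ (compl_subset_compl.2 subset_union_right)
  obtain ⟨p, hpW, hpΩ⟩ := h _ ⟨⟨w, hw, rfl⟩, hb.subset hWO⟩
  have hCW : connectedComponentIn Ωᶜ p ⊆ connectedComponentIn (L ∪ L')ᶜ w := by
    rw [connectedComponentIn_eq hpW]
    exact connectedComponentIn_mono _ (compl_subset_compl.2 (union_subset hLΩ hL'Ω))
  refine ⟨_, ⟨⟨p, hpΩ, rfl⟩, hb.subset (hCW.trans hWO)⟩, fun t ht => ⟨hWO (hCW ht), ?_⟩⟩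
  have htU := hWU (hCW ht)
  rintro (hh | ⟨-, hh⟩)
  · exact connectedComponentIn_subset _ _ htU hh
  · rw [← connectedComponentIn_eq htU] at hh
    exact hub hh

lemma aux_back {Ω L L' : Set ℂ} (hL : IsClosed L) (hL' : IsClosed L')
    (hLconn : IsConnected L) (hL'conn : IsConnected L') (hd : Disjoint L L')
    (hLconv : OmegaConvex Ω L) (hL'conv : OmegaConvex Ω L') {p : ℂ} (hp : p ∈ (L ∪ L')ᶜ)
    (h1 : connectedComponentIn (L ∪ L')ᶜ p ≠ connectedComponentIn Lᶜ p)
    (h2 : connectedComponentIn (L ∪ L')ᶜ p ≠ connectedComponentIn L'ᶜ p)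
    (h3 : Bornology.IsBounded (connectedComponentIn (L ∪ L')ᶜ p) → p ∈ Ωᶜ) :
    OmegaConvex Ω (L ∪ L') := by
  have key1 : ∀ z ∈ (L ∪ L')ᶜ, connectedComponentIn (L ∪ L')ᶜ z ≠ connectedComponentIn Lᶜ z →
      (closure (connectedComponentIn (L ∪ L')ᶜ z) ∩ L').Nonempty := by
    intro z hz hne
    by_contra hh
    exact hne (aux_comp_eq hL hL' hz (not_nonempty_iff_eq_empty.1 hh))
  have key2 : ∀ z ∈ (L ∪ L')ᶜ, connectedComponentIn (L ∪ L')ᶜ z ≠ connectedComponentIn L'ᶜ z →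
      (closure (connectedComponentIn (L ∪ L')ᶜ z) ∩ L).Nonempty := by
    intro z hz hne
    by_contra hh
    rw [union_comm] at hz hne hh
    exact hne (aux_comp_eq hL' hL hz (not_nonempty_iff_eq_empty.1 hh))
  rintro C ⟨⟨z, hz, rfl⟩, hb⟩
  by_cases e1 : connectedComponentIn (L ∪ L')ᶜ z = connectedComponentIn Lᶜ z
  · exact hLconv _ ⟨⟨z, fun hh => hz (Or.inl hh), e1⟩, hb⟩
  by_cases e2 : connectedComponentIn (L ∪ L')ᶜ z = connectedComponentIn L'ᶜ z
  · exact hL'conv _ ⟨⟨z, fun hh => hz (Or.inr hh), e2⟩, hb⟩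
  have hpz := aux_unique hL hL' hLconn hL'conn hd hp (key2 z hz e2) (key1 z hz e1)
    (key2 p hp h2) (key1 p hp h1)
  exact ⟨p, hpz, h3 (by rwa [← connectedComponentIn_eq hpz])⟩

lemma aux_back2 {Ω L L' : Set ℂ} (hL : IsClosed L) (hL' : IsClosed L')
    (hLΩ : L ⊆ Ω) (hL'Ω : L' ⊆ Ω)
    (hLconn : IsConnected L) (hL'conn : IsConnected L') (hd : Disjoint L L')
    (hLconv : OmegaConvex Ω L) (hL'conv : OmegaConvex Ω L')
    (h : ∃ O : Set ℂ, IsHole L O ∧ L' ⊆ O ∧ ∃ C : Set ℂ, IsHole Ω C ∧ C ⊆ O \ polyHull L') :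
    OmegaConvex Ω (L ∪ L') := by
  obtain ⟨_, ⟨⟨q, hq, rfl⟩, hb⟩, hL'O, _, ⟨⟨p, hp, rfl⟩, -⟩, hC⟩ := h
  obtain ⟨hpO, hpL'⟩ := hC (mem_connectedComponentIn hp)
  have hpK : p ∈ (L ∪ L')ᶜ := by
    rintro (hh | hh)
    · exact hp (hLΩ hh)
    · exact hp (hL'Ω hh)
  rw [connectedComponentIn_eq hpO] at hL'O hb
  refine aux_back hL hL' hLconn hL'conn hd hLconv hL'conv hpK ?_ ?_ (fun _ => hp)
  · intro e
    obtain ⟨b, hb'⟩ := hL'conn.nonempty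
    have := hL'O hb'
    rw [← e] at this
    exact connectedComponentIn_subset _ _ this (Or.inr hb')
  · intro e
    apply hpL'
    refine Or.inr ⟨fun hh => hp (hL'Ω hh), ?_⟩
    rw [← e]
    exact hb.subset (connectedComponentIn_mono _ (compl_subset_compl.2 subset_union_left))

lemma aux_case1 {L L' : Set ℂ} (hd : Disjoint L L') {r : ℝ} (hr : 0 < r)
    (hrL : ∀ x ∈ L, ‖x‖ ≤ r) (hL'conn : IsConnected L') (h : L' ⊆ (polyHull L)ᶜ)
    {p : ℂ} (hp : r < ‖p‖) :
    connectedComponentIn (L ∪ L')ᶜ p ≠ connectedComponentIn Lᶜ p := by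
  intro e
  obtain ⟨b, hb⟩ := hL'conn.nonempty
  have hbL : b ∈ Lᶜ := fun hh => hd.le_bot ⟨hh, hb⟩
  have hub : ¬ Bornology.IsBounded (connectedComponentIn Lᶜ b) :=
    fun hh => h hb (Or.inr ⟨hbL, hh⟩)
  have hpb := aux_unbdd hr hrL hub hp
  have : b ∈ connectedComponentIn (L ∪ L')ᶜ p := by
    rw [e, ← connectedComponentIn_eq hpb]
    exact mem_connectedComponentIn hbL
  exact connectedComponentIn_subset _ _ this (Or.inr hb)

/-- Lemma `lemme-one-infinity-holes`. -/
theorem omegaConvex_union_iff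
    (Ω : Set ℂ) (hΩ : IsOpen Ω) (hΩconn : IsConnected Ω)
    (L L' : Set ℂ) (hL : IsCompact L) (hL' : IsCompact L')
    (hLΩ : L ⊆ Ω) (hL'Ω : L' ⊆ Ω)
    (hLconn : IsConnected L) (hL'conn : IsConnected L')
    (hdisj : L ∩ L' = ∅)
    (hLconv : OmegaConvex Ω L) (hL'conv : OmegaConvex Ω L') :
    OmegaConvex Ω (L ∪ L') ↔
      ((L ⊆ (polyHull L')ᶜ ∧ L' ⊆ (polyHull L)ᶜ) ∨
        (∃ O : Set ℂ, IsHole L O ∧ L' ⊆ O ∧ ∃ C : Set ℂ, IsHole Ω C ∧ C ⊆ O \ polyHull L') ∨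
        (∃ O' : Set ℂ, IsHole L' O' ∧ L ⊆ O' ∧ ∃ C : Set ℂ, IsHole Ω C ∧ C ⊆ O' \ polyHull L)) := by
  have hd : Disjoint L L' := disjoint_iff_inter_eq_empty.2 hdisj
  constructor
  · intro h
    by_cases h1 : L' ⊆ (polyHull L)ᶜ
    · by_cases h2 : L ⊆ (polyHull L')ᶜ
      · exact Or.inl ⟨h2, h1⟩
      · right; right
        exact aux_forward hL' hL hL'Ω hLΩ hL'conn hLconn hd.symm (union_comm L L' ▸ h) h2
    · right; left
      exact aux_forward hL hL' hLΩ hL'Ω hLconn hL'conn hd h h1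
  · rintro (⟨h1, h2⟩ | h | h)
    · obtain ⟨R, hR⟩ := isBounded_iff_forall_norm_le.1 (hL.union hL').isBounded
      have hr : 0 < |R| + 1 := by positivity
      have hR' : ∀ x ∈ L ∪ L', ‖x‖ ≤ |R| + 1 :=
        fun x hx => (hR x hx).trans (by linarith [le_abs_self R])
      obtain ⟨p, hp⟩ : {z : ℂ | |R| + 1 < ‖z‖}.Nonempty := by
        rw [nonempty_iff_ne_empty]
        intro e
        exact aux_ext_unbdd (|R| + 1) (e ▸ Bornology.isBounded_empty)
      have hsub : {z : ℂ | |R| + 1 < ‖z‖} ⊆ (L ∪ L')ᶜ :=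
        fun x hx hxK => absurd (hR' x hxK) (not_le.2 hx)
      refine aux_back hL.isClosed hL'.isClosed hLconn hL'conn hd hLconv hL'conv (hsub hp)
        (aux_case1 hd hr (fun x hx => hR' x (Or.inl hx)) hL'conn h2 hp) ?_ ?_
      · rw [union_comm]
        exact aux_case1 hd.symm hr (fun x hx => hR' x (Or.inr hx)) hLconn h1 hp
      · intro hb
        exact absurd (hb.subset ((aux_ext_conn hr).subset_connectedComponentIn hp hsub))
          (aux_ext_unbdd _)
    · exact aux_back2 hL.isClosed hL'.isClosed hLΩ hL'Ω hLconn hL'conn hd hLconv hL'conv h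
    · rw [union_comm]
      exact aux_back2 hL'.isClosed hL.isClosed hL'Ω hLΩ hL'conn hLconn hd.symm hL'conv hLconv h
end

section
/- Let G and Ω be domains in ℂ, let K ⊆ K' be compact subsets of G, and let φ be a holomorphic map from G to Ω that is injective on a neighbourhood of K'. If K is G-convex and φ(K') is Ω-convex, then φ(K) is Ω-convex. -/
open Set Metric Bornology Filter

/-- Lemma `Lemma3.11`. -/
theorem omegaConvex_image_of_subset
    (G Ω : Set ℂ) (hG : IsOpen G) (hGconn : IsConnected G)
    (hΩ : IsOpen Ω) (hΩconn : IsConnected Ω)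
    (K K' : Set ℂ) (hKK' : K ⊆ K') (hK : IsCompact K) (hK' : IsCompact K') (hK'G : K' ⊆ G)
    (φ : ℂ → ℂ) (hφd : DifferentiableOn ℂ φ G) (hφm : Set.MapsTo φ G Ω)
    (hinj : ∃ U : Set ℂ, IsOpen U ∧ K' ⊆ U ∧ U ⊆ G ∧ Set.InjOn φ U)
    (hKconv : OmegaConvex G K) (hK'conv : OmegaConvex Ω (φ '' K')) :
    OmegaConvex Ω (φ '' K) := by
  rintro C ⟨⟨z, hz, rfl⟩, hb⟩
  obtain ⟨U, hUo, hK'U, hUG, hinj⟩ := hinj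
  have hzC := mem_connectedComponentIn hz
  have hCsub := connectedComponentIn_subset (φ '' K)ᶜ z
  have hcl : ∀ y ∈ closure (connectedComponentIn (φ '' K)ᶜ z), y ∉ φ '' K →
      y ∈ connectedComponentIn (φ '' K)ᶜ z := by
    intro y hy hyK
    have h1 : IsPreconnected (insert y (connectedComponentIn (φ '' K)ᶜ z)) :=
      isPreconnected_connectedComponentIn.subset_closure (subset_insert _ _)
        (insert_subset hy subset_closure)
    exact h1.subset_connectedComponentIn (mem_insert_of_mem _ hzC)
      (insert_subset hyK hCsub) (mem_insert _ _)
  have hφU : ContinuousOn φ U := hφd.continuousOn.mono hUG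
  have hKim : IsCompact (φ '' K) := hK.image_of_continuousOn (hφU.mono (hKK'.trans hK'U))
  have hCo : IsOpen (connectedComponentIn (φ '' K)ᶜ z) :=
    hKim.isClosed.isOpen_compl.connectedComponentIn
  by_cases hsub : connectedComponentIn (φ '' K)ᶜ z ⊆ φ '' K'
  · exfalso
    generalize connectedComponentIn (φ '' K)ᶜ z = C at *
    have hVo : IsOpen (U ∩ φ ⁻¹' C) := hφU.isOpen_inter_preimage hUo hCo
    have hVK' : U ∩ φ ⁻¹' C ⊆ K' := by
      rintro x ⟨hxU, hxC⟩
      obtain ⟨k, hk, hkx⟩ := hsub hxC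
      rwa [← hinj (hK'U hk) hxU hkx]
    obtain ⟨x, hx, hxz⟩ := hsub hzC
    have hxV : x ∈ U ∩ φ ⁻¹' C := ⟨hK'U hx, by simpa [hxz] using hzC⟩
    have hxK : x ∈ Kᶜ := fun h => hCsub hxV.2 (mem_image_of_mem φ h)
    have hD : connectedComponentIn Kᶜ x ⊆ U ∩ φ ⁻¹' C := by
      refine isPreconnected_connectedComponentIn.subset_of_closure_inter_subset hVo
        ⟨x, mem_connectedComponentIn hxK, hxV⟩ ?_
      rintro y ⟨hy, hyD⟩
      have hyK : y ∉ K := connectedComponentIn_subset _ _ hyD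
      have hyK' : y ∈ K' := closure_minimal hVK' hK'.isClosed hy
      have hyU := hK'U hyK'
      refine ⟨hyU, hcl _ ?_ ?_⟩
      · have h2 : ContinuousWithinAt φ (U ∩ φ ⁻¹' C) y :=
          (hφU y hyU).mono inter_subset_left
        exact closure_mono (by rintro _ ⟨a, ha, rfl⟩; exact ha.2) (h2.mem_closure_image hy)
      · rintro ⟨k, hk, hky⟩
        exact hyK (hinj (hK'U (hKK' hk)) hyU hky ▸ hk)
    obtain ⟨w, hw, hwG⟩ := hKconv _ ⟨⟨x, hxK, rfl⟩, hK'.isBounded.subset (hD.trans hVK')⟩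
    exact hwG (hK'G (hVK' (hD hw)))
  · obtain ⟨w, hwC, hw⟩ := not_subset.1 hsub
    have hD : connectedComponentIn (φ '' K')ᶜ w ⊆ connectedComponentIn (φ '' K)ᶜ z := by
      rw [connectedComponentIn_eq hwC]
      exact connectedComponentIn_mono _ (compl_subset_compl.2 (image_mono hKK'))
    obtain ⟨v, hv, hvΩ⟩ := hK'conv _ ⟨⟨w, hw, rfl⟩, hb.subset hD⟩
    exact ⟨v, hD hv, hvΩ⟩
end

section
/- Let G and Ω be domains in ℂ with Ω not simply connected (Ω has at least one hole). Let K ⊆ G be a G-convex compact set, L ⊆ Ω an Ω-convex compact set, and φ a holomorphic map from G to Ω. Suppose there exist compact sets K' ∈ M(G) with K ⊆ K' and L' ∈ M(Ω) with L ⊆ L' such that φ is injective on a neighbourhood of K', φ(K') ∩ L' = ∅, and φ(K') ∪ L' is Ω-convex. Then φ is injective on a neighbourhood of K, φ(K) ∩ L = ∅, and φ(K) ∪ L is Ω-convex. -/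
open Set Metric Bornology Filter

theorem aux_eq_comp {K D : Set ℂ} {z : ℂ} (hz : z ∈ D) (hD : IsPreconnected D) (hDo : IsOpen D)
    (hDK : D ⊆ Kᶜ) (hcl : closure D ⊆ D ∪ K) : D = connectedComponentIn Kᶜ z := by
  apply subset_antisymm
  · exact hD.subset_connectedComponentIn hz hDK
  · refine isPreconnected_connectedComponentIn.subset_of_closure_inter_subset hDo
      ⟨z, mem_connectedComponentIn (hDK hz), hz⟩ ?_
    rintro w ⟨hw, hw'⟩
    rcases hcl hw with h | h
    · exact h
    · exact absurd h (connectedComponentIn_subset _ _ hw')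

theorem aux_closure_comp {K : Set ℂ} {z : ℂ} (hz : z ∈ Kᶜ) :
    closure (connectedComponentIn Kᶜ z) ⊆ connectedComponentIn Kᶜ z ∪ K := by
  intro w hw
  by_cases hwK : w ∈ K
  · exact Or.inr hwK
  · left
    have h1 : IsPreconnected (insert w (connectedComponentIn Kᶜ z)) :=
      isPreconnected_connectedComponentIn.subset_closure (subset_insert _ _)
        (insert_subset hw subset_closure)
    exact h1.subset_connectedComponentIn (Or.inr (mem_connectedComponentIn hz))
      (insert_subset hwK (connectedComponentIn_subset _ _)) (mem_insert _ _)

/-- No component of the complement of `φ '' K` lies inside `φ '' K'`. -/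
theorem aux_image {G K K' U E : Set ℂ} {φ : ℂ → ℂ} {z : ℂ} (hKconv : OmegaConvex G K)
    (hK' : IsCompact K') (hKK' : K ⊆ K') (hUo : IsOpen U) (hK'U : K' ⊆ U) (hUG : U ⊆ G)
    (hinj : InjOn φ U) (hc : ContinuousOn φ U) (hz : z ∈ E) (hE : IsPreconnected E)
    (hEo : IsOpen E) (hEK : E ⊆ (φ '' K)ᶜ) (hcl : closure E ⊆ E ∪ φ '' K)
    (hEK' : E ⊆ φ '' K') : False := by
  have hDK' : U ∩ φ ⁻¹' E ⊆ K' := by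
    rintro w ⟨hw, hw'⟩
    obtain ⟨v, hv, hvw⟩ := hEK' hw'
    rwa [← hinj (hK'U hv) hw hvw]
  obtain ⟨x, hx, rfl⟩ := hEK' hz
  have hDo : IsOpen (U ∩ φ ⁻¹' E) := hc.isOpen_inter_preimage hUo hEo
  have hDc : IsPreconnected (U ∩ φ ⁻¹' E) := by
    have hcs : CompactSpace K' := isCompact_iff_compactSpace.mp hK'
    have hemb : Topology.IsClosedEmbedding (K'.domRestrict φ) :=
      (hc.mono hK'U).domRestrict.isClosedEmbedding (injOn_iff_injective.mp (hinj.mono hK'U))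
    have h1 : IsPreconnected ((K'.domRestrict φ) ⁻¹' E) := by
      rw [← hemb.toIsEmbedding.toIsInducing.isPreconnected_image,
        image_preimage_eq_of_subset (by rwa [range_domRestrict])]
      exact hE
    have h2 := h1.image _ continuous_subtype_val.continuousOn
    convert h2 using 1
    ext w
    constructor
    · intro hw
      exact ⟨⟨w, hDK' hw⟩, hw.2, rfl⟩
    · rintro ⟨v, hv, rfl⟩
      exact ⟨hK'U v.2, hv⟩
  have hDK : U ∩ φ ⁻¹' E ⊆ Kᶜ := fun w hw hwK => hEK hw.2 (mem_image_of_mem _ hwK)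
  have hDcl : closure (U ∩ φ ⁻¹' E) ⊆ (U ∩ φ ⁻¹' E) ∪ K := by
    intro w hw
    have hwK' : w ∈ K' := closure_minimal hDK' hK'.isClosed hw
    have hwU := hK'U hwK'
    have h3 : φ w ∈ closure E := by
      have := (hc.continuousAt (hUo.mem_nhds hwU)).continuousWithinAt.mem_closure_image hw
      exact closure_mono (by rintro _ ⟨v, hv, rfl⟩; exact hv.2) this
    rcases hcl h3 with h | ⟨v, hv, hvw⟩
    · exact Or.inl ⟨hwU, h⟩
    · right
      rwa [← hinj (hK'U (hKK' hv)) hwU hvw]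
  have hxD : x ∈ U ∩ φ ⁻¹' E := ⟨hK'U hx, hz⟩
  obtain ⟨p, hp, hpG⟩ := hKconv (U ∩ φ ⁻¹' E)
    ⟨⟨x, hDK hxD, aux_eq_comp hxD hDc hDo hDK hDcl⟩, hK'.isBounded.subset hDK'⟩
  exact hpG (hUG hp.1)

/-- Lemma `lemme-tout-compact`. -/
theorem omegaConvex_union_of_memM_witnesses
    (G Ω : Set ℂ) (hG : IsOpen G) (hGconn : IsConnected G)
    (hΩ : IsOpen Ω) (hΩconn : IsConnected Ω) (hΩnsc : ¬ HasNoHole Ω)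
    (K L : Set ℂ) (hK : IsCompact K) (hKG : K ⊆ G) (hKconv : OmegaConvex G K)
    (hL : IsCompact L) (hLΩ : L ⊆ Ω) (hLconv : OmegaConvex Ω L)
    (φ : ℂ → ℂ) (hφd : DifferentiableOn ℂ φ G) (hφm : Set.MapsTo φ G Ω)
    (K' L' : Set ℂ) (hK' : MemM G K') (hKK' : K ⊆ K') (hL' : MemM Ω L') (hLL' : L ⊆ L')
    (hinj : ∃ U : Set ℂ, IsOpen U ∧ K' ⊆ U ∧ U ⊆ G ∧ Set.InjOn φ U)
    (hdisj : (φ '' K') ∩ L' = ∅) (hconv : OmegaConvex Ω ((φ '' K') ∪ L')) :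
    (∃ U : Set ℂ, IsOpen U ∧ K ⊆ U ∧ U ⊆ G ∧ Set.InjOn φ U) ∧
      (φ '' K) ∩ L = ∅ ∧ OmegaConvex Ω ((φ '' K) ∪ L) := by
  obtain ⟨U, hUo, hK'U, hUG, hUinj⟩ := hinj
  have hc : ContinuousOn φ U := hφd.continuousOn.mono hUG
  have hK'c := hK'.2.1
  have hL'c := hL'.2.1
  have hAc : IsCompact (φ '' K) := hK.image_of_continuousOn (hc.mono (hKK'.trans hK'U))
  have hA'c : IsCompact (φ '' K') := hK'c.image_of_continuousOn (hc.mono hK'U)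
  have hAA' : φ '' K ⊆ φ '' K' := image_mono hKK'
  have hd : Disjoint (φ '' K') L' := disjoint_iff_inter_eq_empty.mpr hdisj
  refine ⟨⟨U, hUo, hKK'.trans hK'U, hUG, hUinj⟩, ?_, ?_⟩
  · exact disjoint_iff_inter_eq_empty.mp (hd.mono hAA' hLL')
  rintro C ⟨⟨z, hz, hC⟩, hCb⟩
  have hzC : z ∈ C := hC ▸ mem_connectedComponentIn hz
  have hCc : IsPreconnected C := hC ▸ isPreconnected_connectedComponentIn
  have hCo : IsOpen C := hC ▸ (hAc.union hL).isClosed.isOpen_compl.connectedComponentIn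
  have hCs : C ⊆ (φ '' K ∪ L)ᶜ := hC ▸ connectedComponentIn_subset _ _
  have hCcl : closure C ⊆ C ∪ (φ '' K ∪ L) := by
    rw [hC]; exact aux_closure_comp hz
  by_cases hsub : C ⊆ φ '' K' ∪ L'
  · exfalso
    have hcase : C ⊆ φ '' K' ∨ C ⊆ L' := by
      apply isPreconnected_iff_subset_of_disjoint_closed.mp hCc _ _ hA'c.isClosed hL'c.isClosed hsub
      rw [hdisj, inter_empty]
    rcases hcase with h | h
    · refine aux_image hKconv hK'c hKK' hUo hK'U hUG hUinj hc hzC hCc hCo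
        (fun w hw hw' => hCs hw (Or.inl hw')) ?_ h
      intro w hw
      rcases hCcl hw with h1 | h1 | h1
      · exact Or.inl h1
      · exact Or.inr h1
      · exact absurd (hLL' h1) (disjoint_left.mp hd (closure_minimal h hA'c.isClosed hw))
    · have hCL : C ⊆ Lᶜ := fun w hw hw' => hCs hw (Or.inr hw')
      have hcl' : closure C ⊆ C ∪ L := by
        intro w hw
        rcases hCcl hw with h1 | h1 | h1
        · exact Or.inl h1
        · exact absurd (closure_minimal h hL'c.isClosed hw) (disjoint_left.mp hd (hAA' h1))
        · exact Or.inr h1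
      obtain ⟨p, hp, hpΩ⟩ := hLconv C
        ⟨⟨z, hCL hzC, aux_eq_comp hzC hCc hCo hCL hcl'⟩, hCb⟩
      exact hpΩ (hL'.2.2.1 (h hp))
  · obtain ⟨w, hwC, hw⟩ := not_subset.mp hsub
    have hsubC : connectedComponentIn (φ '' K' ∪ L')ᶜ w ⊆ C := by
      rw [hC] at hwC ⊢
      rw [connectedComponentIn_eq hwC]
      exact connectedComponentIn_mono _ (compl_subset_compl.mpr (union_subset_union hAA' hLL'))
    obtain ⟨p, hp, hpΩ⟩ := hconv _ ⟨⟨w, hw, rfl⟩, hCb.subset hsubC⟩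
    exact ⟨p, hsubC hp, hpΩ⟩
end
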